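/- arXiv:2104.07027 — 3 statements merged into one kernel-verified Lean document; each statement's English description precedes it below -/
import Mathlib

section
/- Let n ≥ 1, p ∈ (0,∞), and let ψ : 𝒰(Mₙ(ℂ)) → 𝒰(Mₙ(ℂ)) be a surjective L^p-isometry. Then there exist unitary matrices W, V ∈ Mₙ(ℂ) such that one of the following four forms holds for every U ∈ 𝒰(Mₙ(ℂ)): ψ(U) = W·(V U Vᴴ), ψ(U) = W·(V Uᵀ Vᴴ), ψ(U) = W·(V Uᴴ Vᴴ), or ψ(U) = W·(V conj(U) Vᴴ), where conj(U) denotes entrywise complex conjugation. (These four forms encode ψ(U) = Wφ(U) or ψ(U) = Wφ(U*) with φ a *-automorphism or *-anti-automorphism of Mₙ(ℂ), since every *-automorphism of Mₙ(ℂ) is U ↦ VUVᴴ and every *-anti-automorphism is U ↦ VUᵀVᴴ for a unitary V.) -/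
open Matrix
open scoped ComplexOrder

/-- The normalized trace `L^p`-(quasi-)norm `(τ(|A|^p))^{1/p}` of a complex matrix,
computed via the eigenvalues of `Aᴴ * A`: the eigenvalues of `|A|^p` are the
`(p/2)`-th powers of those of `Aᴴ * A`, and the trace of a Hermitian matrix is the
sum of its eigenvalues. -/
noncomputable def lpnorm {m : Type*} [Fintype m] [DecidableEq m] (p : ℝ)
    (A : Matrix m m ℂ) : ℝ :=
  ((∑ i, ((Matrix.posSemidef_conjTranspose_mul_self A).isHermitian.eigenvalues i) ^ (p / 2)) /
      (Fintype.card m : ℝ)) ^ (1 / p)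

/-- The `ℓ² → ℓ²` operator norm of a complex matrix. -/
noncomputable def l2opNorm {m : Type*} [Fintype m] [DecidableEq m]
    (A : Matrix m m ℂ) : ℝ :=
  ‖Matrix.toEuclideanCLM (𝕜 := ℂ) A‖

section Abstract

/-- A reflection that expands distances to its fixed point `b` by a factor `K > 1` forces every
bijective isometry fixing the two swapped points `a` and `c` to fix `b` as well. -/
theorem gauge_map_fixed_eq_zero {X : Type*} {d : X → X → ℝ} {C K : ℝ} (hK : 1 < K)
    (hC : ∀ x y, d x y ≤ C) (hnn : ∀ x y, 0 ≤ d x y) {φ : Equiv.Perm X}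
    (hφ : ∀ x y, d (φ x) (φ y) = d x y) {a b c : X} (hac : φ a = c) (hca : φ c = a) (hb : φ b = b)
    (hexp : ∀ x, d x a = d b a → K * d x b ≤ d (φ x) x) {f : Equiv.Perm X}
    (hf : ∀ x y, d (f x) (f y) = d x y) (hfa : f a = a) (hfc : f c = c) : d (f b) b = 0 := by
  have key : ∀ k : ℕ, ∀ f : Equiv.Perm X, (∀ x y, d (f x) (f y) = d x y) → f a = a → f c = c →
      K ^ k * d (f b) b ≤ C := by
    intro k
    induction k with
    | zero => intro f _ _ _; simpa using hC _ _
    | succ k ih =>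
      intro f hf hfa hfc
      have hfi : ∀ x y, d (f⁻¹ x) (f⁻¹ y) = d x y := fun x y => by
        rw [← hf]; simp
      have hfia : f⁻¹ a = a := by rw [Equiv.Perm.inv_eq_iff_eq, hfa]
      have hfic : f⁻¹ c = c := by rw [Equiv.Perm.inv_eq_iff_eq, hfc]
      have h1 := ih (φ * f⁻¹ * φ * f) (fun x y => by simp only [Equiv.Perm.mul_apply, hφ, hfi, hf])
        (by simp only [Equiv.Perm.mul_apply, hfa, hac, hfic, hca])
        (by simp only [Equiv.Perm.mul_apply, hfc, hac, hfia, hca])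
      have h2 : d ((φ * f⁻¹ * φ * f) b) b = d (φ (f b)) (f b) := by
        calc d ((φ * f⁻¹ * φ * f) b) b = d (φ (f⁻¹ (φ (f b)))) (φ b) := by rw [hb]; rfl
          _ = d (f⁻¹ (φ (f b))) b := hφ _ _
          _ = d (φ (f b)) (f b) := by rw [← hf]; simp
      have h3 : K * d (f b) b ≤ d (φ (f b)) (f b) :=
        hexp _ (by conv_lhs => rw [← hfa, hf])
      calc K ^ (k + 1) * d (f b) b = K ^ k * (K * d (f b) b) := by ring
        _ ≤ K ^ k * d (φ (f b)) (f b) := by gcongr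
        _ ≤ C := h2 ▸ h1
  by_contra hne
  have hpos : 0 < d (f b) b := lt_of_le_of_ne (hnn _ _) (Ne.symm hne)
  obtain ⟨k, hk⟩ := pow_unbounded_of_one_lt (C / d (f b) b) hK
  rw [div_lt_iff₀ hpos] at hk
  exact absurd (key k f hf hfa hfc) (not_le.mpr hk)

end Abstract

section Gauge

open Filter Topology selfAdjoint Unitary

variable {A : Type*} [CStarAlgebra A]

/-- A bi-invariant distance-like function on the unitary group of a C⋆-algebra, uniformly
equivalent to the norm distance, for which the reflections `u ↦ v u⁻¹ v` are uniformly expanding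
near `v`. -/
structure UnitaryGauge (d : unitary A → unitary A → ℝ) (K : ℝ) : Prop where
  nonneg : ∀ u v, 0 ≤ d u v
  bounded : ∃ C, ∀ u v, d u v ≤ C
  mul_left : ∀ w u v, d (w * u) (w * v) = d u v
  mul_right : ∀ w u v, d (u * w) (v * w) = d u v
  inv : ∀ u v, d u⁻¹ v⁻¹ = d u v
  small_of_dist : ∀ ε > 0, ∃ δ > 0, ∀ u v, dist u v < δ → d u v < ε
  dist_of_small : ∀ ε > 0, ∃ δ > 0, ∀ u v, d u v < δ → dist u v < ε
  one_lt : 1 < K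
  expanding : ∀ u v, dist u v ≤ 1 → K * d u v ≤ d (v * u⁻¹ * v) u

namespace UnitaryGauge

variable {d : unitary A → unitary A → ℝ} {K : ℝ}

theorem self (h : UnitaryGauge d K) (u : unitary A) : d u u = 0 := by
  refine le_antisymm (le_of_forall_pos_lt_add fun ε hε => ?_) (h.nonneg u u)
  obtain ⟨δ, hδ, H⟩ := h.small_of_dist ε hε
  simpa using H u u (by simpa using hδ)

theorem eq_of_eq_zero (h : UnitaryGauge d K) {u v : unitary A} (huv : d u v = 0) : u = v := by
  refine eq_of_forall_dist_le fun ε hε => ?_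
  obtain ⟨δ, hδ, H⟩ := h.dist_of_small ε hε
  exact (H u v (huv ▸ hδ)).le

/-- The reflection `u ↦ v u⁻¹ v` of the unitary group about `v`. -/
def reflection (v : unitary A) : Equiv.Perm (unitary A) where
  toFun u := v * u⁻¹ * v
  invFun u := v * u⁻¹ * v
  left_inv u := by group
  right_inv u := by group

theorem reflection_apply (v u : unitary A) : reflection v u = v * u⁻¹ * v := rfl

theorem gauge_reflection (h : UnitaryGauge d K) (w u v : unitary A) :
    d (reflection w u) (reflection w v) = d u v := by
  simp only [reflection_apply, h.mul_right, h.mul_left, h.inv]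

theorem dist_mul_left_unitary (w u v : unitary A) : dist (w * u) (w * v) = dist u v := by
  simp [Subtype.dist_eq, dist_eq_norm, ← mul_sub]

theorem exists_sqrt {w : unitary A} (hw : dist w 1 < 2) :
    ∃ r : unitary A, r * r = w ∧ dist r 1 ≤ dist w 1 := by
  have hwlt : ‖(w - 1 : A)‖ < 2 := by simpa [Subtype.dist_eq, dist_eq_norm] using hw
  refine ⟨expUnitary ((1 / 2 : ℝ) • argSelfAdjoint w), ?_, ?_⟩
  · rw [← Commute.expUnitary_add (Commute.refl _), ← add_smul]
    norm_num [expUnitary_argSelfAdjoint hwlt]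
  · simpa [Subtype.dist_eq, dist_eq_norm] using
      norm_expUnitary_smul_argSelfAdjoint_sub_one_le w (t := 1 / 2) (by norm_num) hwlt

/-- Isometries for the gauge are uniformly continuous. -/
theorem exists_dist_map_lt (h : UnitaryGauge d K) {ε : ℝ} (hε : 0 < ε) :
    ∃ δ > 0, ∀ ψ : unitary A → unitary A, (∀ u v, d (ψ u) (ψ v) = d u v) →
      ∀ u v, dist u v < δ → dist (ψ u) (ψ v) < ε := by
  obtain ⟨η, hη, H⟩ := h.dist_of_small ε hε
  obtain ⟨δ, hδ, H'⟩ := h.small_of_dist η hη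
  exact ⟨δ, hδ, fun ψ hψ u v huv => H _ _ (hψ u v ▸ H' u v huv)⟩

/-- Bijective gauge isometries locally preserve the inverted triple product. -/
theorem exists_map_reflection (h : UnitaryGauge d K) {ψ : Equiv.Perm (unitary A)}
    (hψ : ∀ u v, d (ψ u) (ψ v) = d u v) :
    ∃ δ > 0, ∀ a b, dist a b < δ → ψ (b * a⁻¹ * b) = ψ b * (ψ a)⁻¹ * ψ b := by
  obtain ⟨η, hη, H⟩ := h.dist_of_small (1 / 4) (by norm_num)
  obtain ⟨δ, hδ, H'⟩ := h.small_of_dist η hη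
  refine ⟨min (δ / 2) (1 / 4), by positivity, fun a b hab => ?_⟩
  have hab1 : dist a b < δ / 2 := hab.trans_le (min_le_left _ _)
  have hab2 : dist a b < 1 / 4 := hab.trans_le (min_le_right _ _)
  have hdab : d b a < η := H' b a (by rw [dist_comm]; linarith)
  set c := b * a⁻¹ * b with hc
  have hac : dist a c < δ := by
    have h1 : dist b c = dist a b := by
      have : dist (b * a⁻¹ * a) (b * a⁻¹ * b) = dist a b := dist_mul_left_unitary _ _ _
      simpa using this
    linarith [dist_triangle a b c]
  have hψac : dist (ψ a) (ψ c) < 1 / 4 := H _ _ (hψ a c ▸ H' a c hac)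
  have hψab : dist (ψ a) (ψ b) < 1 / 4 := H _ _ (hψ a b ▸ H' a b (by linarith))
  have hw : dist ((ψ a)⁻¹ * ψ c) 1 = dist (ψ a) (ψ c) := by
    rw [← dist_mul_left_unitary (ψ a), dist_comm]; simp
  obtain ⟨r, hr, hr1⟩ := exists_sqrt (w := (ψ a)⁻¹ * ψ c) (by rw [hw]; linarith)
  set b' := ψ a * r with hb'
  have hb'c : b' * (ψ a)⁻¹ * b' = ψ c := by
    calc b' * (ψ a)⁻¹ * b' = ψ a * (r * r) := by rw [hb']; group
      _ = ψ c := by rw [hr]; group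
  have hb'a : b' * (ψ c)⁻¹ * b' = ψ a := by rw [← hb'c]; group
  have hb'dist : dist (ψ a) b' < 1 / 4 := by
    have h1 : dist (ψ a * 1) (ψ a * r) = dist 1 r := dist_mul_left_unitary _ _ _
    rw [mul_one, dist_comm 1 r] at h1
    rw [hb', h1]; linarith
  have hψi : ∀ x y, d (ψ⁻¹ x) (ψ⁻¹ y) = d x y := fun x y => by
    rw [← hψ]; simp
  have hψia : ∀ x, ψ⁻¹ (ψ x) = x := fun x => by simp
  have hra : reflection b a = c := rfl
  have hrc : reflection b c = a := by rw [reflection_apply, hc]; group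
  have hrb : reflection b b = b := by rw [reflection_apply]; group
  obtain ⟨C, hC⟩ := h.bounded
  have h0 := gauge_map_fixed_eq_zero h.one_lt hC h.nonneg (φ := reflection b)
    (h.gauge_reflection b) (a := a) (b := b) (c := c) hra hrc hrb
    (fun x hx => h.expanding x b (by
      have := H x a (hx ▸ hdab)
      linarith [dist_triangle x a b]))
    (f := reflection b * ψ⁻¹ * reflection b' * ψ)
    (fun x y => by simp only [Equiv.Perm.mul_apply, h.gauge_reflection, hψi, hψ])
    (by simp only [Equiv.Perm.mul_apply, reflection_apply b', hb'c, hψia, hrc])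
    (by simp only [Equiv.Perm.mul_apply, reflection_apply b', hb'a, hψia, hra])
  have h1 := h.eq_of_eq_zero h0
  simp only [Equiv.Perm.mul_apply] at h1
  have h2 : ψ⁻¹ (reflection b' (ψ b)) = b := (reflection b).injective (h1.trans hrb.symm)
  rw [Equiv.Perm.inv_eq_iff_eq, reflection_apply] at h2
  have h3 := h.expanding (ψ b) b' (by
    rw [dist_comm] at hψab
    linarith [dist_triangle (ψ b) (ψ a) b'])
  rw [h2, h.self] at h3
  have h4 : d (ψ b) b' = 0 :=
    le_antisymm (by nlinarith [h.one_lt, h.nonneg (ψ b) b']) (h.nonneg _ _)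
  rw [h.eq_of_eq_zero h4, hb'c]

end UnitaryGauge

theorem expUnitary_nsmul (k : ℕ) (H : selfAdjoint A) :
    expUnitary (k • H) = expUnitary H ^ k := by
  induction k with
  | zero => simp
  | succ k ih =>
    rw [succ_nsmul, Commute.expUnitary_add, ih, pow_succ]
    simp

theorem expUnitary_eq_of_norm_lt_pi {H G : selfAdjoint A} (hH : ‖H‖ < Real.pi)
    (hG : ‖G‖ < Real.pi) (h : expUnitary H = expUnitary G) : H = G := by
  rw [← argSelfAdjoint_expUnitary hH, h, argSelfAdjoint_expUnitary hG]

/-- A self-adjoint element is determined by the unitaries `exp (i H / m)`, `m ≥ 1`. -/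
theorem eq_of_forall_expUnitary_inv_smul_eq {H G : selfAdjoint A}
    (h : ∀ m : ℕ, 0 < m → expUnitary ((m : ℝ)⁻¹ • H) = expUnitary ((m : ℝ)⁻¹ • G)) : H = G := by
  have hlim : ∀ F : selfAdjoint A, ∀ᶠ m : ℕ in atTop, ‖(m : ℝ)⁻¹ • F‖ < Real.pi := fun F => by
    have h1 : Tendsto (fun m : ℕ => ‖(m : ℝ)⁻¹ • F‖) atTop (𝓝 ‖(0 : ℝ) • F‖) :=
      ((tendsto_inv_atTop_nhds_zero_nat (𝕜 := ℝ)).smul_const F).norm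
    exact h1.eventually_lt_const (by simpa using Real.pi_pos)
  obtain ⟨m, ⟨hmH, hmG⟩, hm⟩ := (((hlim H).and (hlim G)).and (eventually_gt_atTop 0)).exists
  have h2 := expUnitary_eq_of_norm_lt_pi hmH hmG (h m hm)
  exact smul_right_injective _ (inv_ne_zero (Nat.cast_ne_zero.mpr hm.ne')) h2

theorem norm_pow_sub_pow_le {x y : A} (hx : ‖x‖ ≤ 1) (hy : ‖y‖ ≤ 1) (k : ℕ) :
    ‖x ^ k - y ^ k‖ ≤ k * ‖x - y‖ := by
  have hpow : ∀ k : ℕ, ‖x ^ (k + 1)‖ ≤ 1 := fun k =>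
    (norm_pow_le' x k.succ_pos).trans (pow_le_one₀ (norm_nonneg _) hx)
  induction k with
  | zero => simp
  | succ k ih =>
    rcases Nat.eq_zero_or_pos k with rfl | hk
    · simp
    have h1 : x ^ (k + 1) - y ^ (k + 1) = x ^ k * (x - y) + (x ^ k - y ^ k) * y := by
      rw [pow_succ, pow_succ]; noncomm_ring
    have h2 : ‖x ^ k‖ ≤ 1 := by obtain ⟨j, rfl⟩ := Nat.exists_eq_add_of_le' hk; exact hpow j
    calc ‖x ^ (k + 1) - y ^ (k + 1)‖ ≤ ‖x ^ k * (x - y)‖ + ‖(x ^ k - y ^ k) * y‖ := by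
          rw [h1]; exact norm_add_le _ _
      _ ≤ ‖x ^ k‖ * ‖x - y‖ + ‖x ^ k - y ^ k‖ * ‖y‖ :=
          add_le_add (norm_mul_le _ _) (norm_mul_le _ _)
      _ ≤ 1 * ‖x - y‖ + (k * ‖x - y‖) * 1 := by gcongr
      _ = ((k + 1 : ℕ) : ℝ) * ‖x - y‖ := by push_cast; ring

theorem norm_unitary_le_one (u : unitary A) : ‖(u : A)‖ ≤ 1 := by
  rcases subsingleton_or_nontrivial A with _ | _
  · simp [Subsingleton.elim (u : A) 0]
  · simp

/-- The symmetrized Lie product formula for unitaries. -/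
theorem tendsto_expUnitary_symmetrized_pow (H K : selfAdjoint A) :
    Tendsto (fun m : ℕ => (expUnitary ((m : ℝ)⁻¹ • ((1 / 2 : ℝ) • H)) *
      expUnitary ((m : ℝ)⁻¹ • K) * expUnitary ((m : ℝ)⁻¹ • ((1 / 2 : ℝ) • H))) ^ m)
      atTop (𝓝 (expUnitary (H + K))) := by
  have hexp : ∀ F : selfAdjoint A,
      HasDerivAt (fun t : ℝ => (expUnitary (t • F) : A)) (Complex.I • (F : A)) 0 := fun F => by
    have := hasDerivAt_exp_smul_const (𝕂 := ℝ) (Complex.I • (F : A)) 0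
    simp only [zero_smul, NormedSpace.exp_zero, one_mul] at this
    refine this.congr_of_eventuallyEq (Eventually.of_forall fun t => ?_)
    simp [expUnitary_coe, smul_comm t Complex.I]
  have hder : HasDerivAt (fun t : ℝ => (expUnitary (t • ((1 / 2 : ℝ) • H)) : A) *
      expUnitary (t • K) * expUnitary (t • ((1 / 2 : ℝ) • H)) - expUnitary (t • (H + K))) 0 0 := by
    have h1 := (((hexp ((1 / 2 : ℝ) • H)).mul (hexp K)).mul (hexp ((1 / 2 : ℝ) • H))).sub
      (hexp (H + K))
    refine (h1.congr_deriv ?_)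
    simp only [Pi.mul_apply, zero_smul, expUnitary_zero, OneMemClass.coe_one, mul_one, one_mul,
      AddSubgroup.coe_add, smul_add, selfAdjoint.val_smul]
    rw [smul_comm Complex.I (1 / 2 : ℝ) (H : A)]
    module
  have hlim : Tendsto (fun m : ℕ => (m : ℝ) * ‖(expUnitary ((m : ℝ)⁻¹ • ((1 / 2 : ℝ) • H)) : A) *
      expUnitary ((m : ℝ)⁻¹ • K) * expUnitary ((m : ℝ)⁻¹ • ((1 / 2 : ℝ) • H)) -
      expUnitary ((m : ℝ)⁻¹ • (H + K))‖) atTop (𝓝 0) := by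
    have h2 := (hasDerivAt_iff_tendsto_slope_zero.mp hder)
    have h3 : Tendsto (fun m : ℕ => (m : ℝ)⁻¹) atTop (𝓝[≠] (0 : ℝ)) := by
      refine tendsto_nhdsWithin_iff.mpr ⟨tendsto_inv_atTop_nhds_zero_nat, ?_⟩
      filter_upwards [eventually_gt_atTop 0] with m hm
      simpa using hm.ne'
    have h4 := (h2.comp h3).norm
    simp only [norm_zero] at h4
    refine h4.congr fun m => ?_
    simp [norm_smul]
  rw [tendsto_iff_dist_tendsto_zero]
  refine squeeze_zero' (Eventually.of_forall fun _ => dist_nonneg) ?_ hlim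
  filter_upwards [eventually_gt_atTop 0] with m hm
  have h5 : expUnitary (H + K) = expUnitary ((m : ℝ)⁻¹ • (H + K)) ^ m := by
    rw [← expUnitary_nsmul, ← Nat.cast_smul_eq_nsmul ℝ, smul_smul,
      mul_inv_cancel₀ (Nat.cast_ne_zero.mpr hm.ne'), one_smul]
  rw [h5, Subtype.dist_eq, dist_eq_norm]
  exact norm_pow_sub_pow_le (norm_unitary_le_one
    (expUnitary ((m : ℝ)⁻¹ • ((1 / 2 : ℝ) • H)) *
      expUnitary ((m : ℝ)⁻¹ • K) * expUnitary ((m : ℝ)⁻¹ • ((1 / 2 : ℝ) • H))))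
    (norm_unitary_le_one _) m

namespace UnitaryGauge

variable {d : unitary A → unitary A → ℝ} {K : ℝ}

theorem map_pow_of_map_reflection {ψ : unitary A → unitary A} {δ : ℝ}
    (hδ : ∀ a b, dist a b < δ → ψ (b * a⁻¹ * b) = ψ b * (ψ a)⁻¹ * ψ b) (h1 : ψ 1 = 1)
    {u : unitary A} (hu : dist u 1 < δ) (k : ℕ) : ψ (u ^ k) = ψ u ^ k := by
  suffices h : ψ (u ^ k) = ψ u ^ k ∧ ψ (u ^ (k + 1)) = ψ u ^ (k + 1) from h.1
  induction k with
  | zero => simp [h1]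
  | succ k ih =>
    refine ⟨ih.2, ?_⟩
    have h2 : u ^ (k + 1 + 1) = u ^ (k + 1) * (u ^ k)⁻¹ * u ^ (k + 1) := by
      rw [pow_succ' u k]; group
    have h3 : dist (u ^ k) (u ^ (k + 1)) < δ := by
      have := dist_mul_left_unitary (u ^ k) 1 u
      rw [mul_one, ← pow_succ, dist_comm 1 u] at this
      rwa [this]
    rw [h2, hδ _ _ h3, ih.1, ih.2, pow_succ' (ψ u) k]
    group

theorem continuous_of_isometry (h : UnitaryGauge d K) {ψ : unitary A → unitary A}
    (hψ : ∀ u v, d (ψ u) (ψ v) = d u v) : Continuous ψ := by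
  refine Metric.continuous_iff.mpr fun v ε hε => ?_
  obtain ⟨δ, hδ, H⟩ := h.exists_dist_map_lt hε
  exact ⟨δ, hδ, fun u => H ψ hψ u v⟩

/-- A bijective gauge isometry fixing `1` maps one-parameter unitary groups to one-parameter
unitary groups, with linear dependence on the generator. -/
theorem exists_generator (h : UnitaryGauge d K) {ψ : Equiv.Perm (unitary A)}
    (hψ : ∀ u v, d (ψ u) (ψ v) = d u v) (h1 : ψ 1 = 1) :
    ∃ f : selfAdjoint A →L[ℝ] selfAdjoint A, ∀ H, ψ (expUnitary H) = expUnitary (f H) := by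
  have hcont : Continuous ψ := h.continuous_of_isometry hψ
  obtain ⟨δ, hδ, htriple⟩ := h.exists_map_reflection hψ
  have hpow : ∀ u, dist u 1 < δ → ∀ k : ℕ, ψ (u ^ k) = ψ u ^ k := fun u hu k =>
    map_pow_of_map_reflection htriple h1 hu k
  set f₀ : selfAdjoint A → selfAdjoint A := fun H => argSelfAdjoint (ψ (expUnitary H)) with hf₀
  have hE0 : Tendsto (fun H : selfAdjoint A => expUnitary H) (𝓝 0) (𝓝 1) := by
    simpa using (continuous_expUnitary (A := A)).tendsto 0
  have hψE : Tendsto (fun H : selfAdjoint A => ψ (expUnitary H)) (𝓝 0) (𝓝 1) := by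
    have := (hcont.tendsto 1).comp hE0
    rwa [h1] at this
  have hf₀0 : Tendsto f₀ (𝓝 0) (𝓝 0) := by
    have harg : ContinuousAt (argSelfAdjoint : unitary A → selfAdjoint A) 1 :=
      continuousOn_argSelfAdjoint.continuousAt (Metric.ball_mem_nhds 1 two_pos)
    have harg1 : argSelfAdjoint (1 : unitary A) = 0 := by
      have := argSelfAdjoint_expUnitary (x := (0 : selfAdjoint A)) (by simpa using Real.pi_pos)
      rwa [expUnitary_zero] at this
    have := harg.tendsto.comp hψE
    rwa [harg1] at this
  obtain ⟨r, hr, hball⟩ : ∃ r > 0, ∀ H : selfAdjoint A, ‖H‖ < r →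
      ‖f₀ H‖ < 1 ∧ expUnitary (f₀ H) = ψ (expUnitary H) ∧ dist (expUnitary H) 1 < δ := by
    have e1 : ∀ᶠ H in 𝓝 (0 : selfAdjoint A), ‖f₀ H‖ < 1 :=
      (hf₀0.norm).eventually_lt_const (by simp)
    have e2 : ∀ᶠ H in 𝓝 (0 : selfAdjoint A), dist (ψ (expUnitary H)) 1 < 2 :=
      hψE.eventually (Metric.ball_mem_nhds 1 two_pos)
    have e3 : ∀ᶠ H in 𝓝 (0 : selfAdjoint A), dist (expUnitary H) 1 < δ :=
      hE0.eventually (Metric.ball_mem_nhds 1 hδ)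
    obtain ⟨r, hr, H⟩ := Metric.eventually_nhds_iff.mp ((e1.and e2).and e3)
    refine ⟨r, hr, fun G hG => ?_⟩
    obtain ⟨⟨g1, g2⟩, g3⟩ := H (y := G) (by simpa using hG)
    refine ⟨g1, expUnitary_argSelfAdjoint ?_, g3⟩
    simpa [Subtype.dist_eq, dist_eq_norm] using g2
  have hnsmul : ∀ H : selfAdjoint A, ‖H‖ < r → ∀ k : ℕ,
      ψ (expUnitary (k • H)) = expUnitary (k • f₀ H) := fun H hH k => by
    rw [expUnitary_nsmul, expUnitary_nsmul, hpow _ (hball H hH).2.2, (hball H hH).2.1]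
  have hhom : ∀ H : selfAdjoint A, ‖H‖ < r → ∀ m : ℕ, 0 < m →
      ψ (expUnitary ((m : ℝ)⁻¹ • H)) = expUnitary ((m : ℝ)⁻¹ • f₀ H) := by
    intro H hH m hm
    have hm0 : (m : ℝ) ≠ 0 := Nat.cast_ne_zero.mpr hm.ne'
    set G := (m : ℝ)⁻¹ • H with hG
    have hmG : m • G = H := by
      rw [← Nat.cast_smul_eq_nsmul ℝ, hG, smul_smul, mul_inv_cancel₀ hm0, one_smul]
    have hGj : ∀ j ≤ m, ‖j • G‖ < r := fun j hj => by
      rw [← Nat.cast_smul_eq_nsmul ℝ, hG, smul_smul, norm_smul, Real.norm_of_nonneg (by positivity)]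
      refine lt_of_le_of_lt (mul_le_of_le_one_left (norm_nonneg _) ?_) hH
      rw [← div_eq_mul_inv, div_le_one (by positivity)]
      exact_mod_cast hj
    have hG1 : ‖G‖ < r := by simpa using hGj 1 hm
    have hind : ∀ j ≤ m, f₀ (j • G) = j • f₀ G := by
      intro j
      induction j with
      | zero =>
        intro _
        have := argSelfAdjoint_expUnitary (x := (0 : selfAdjoint A)) (by simpa using Real.pi_pos)
        rw [expUnitary_zero] at this
        simp [hf₀, h1, this]
      | succ j ih =>
        intro hj
        have hb := hball _ (hGj _ hj)
        refine expUnitary_eq_of_norm_lt_pi (hb.1.trans (by linarith [Real.pi_gt_three])) ?_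
          (hb.2.1.trans (hnsmul G hG1 (j + 1)))
        rw [succ_nsmul, ← ih (by omega)]
        have := norm_add_le (f₀ (j • G)) (f₀ G)
        linarith [Real.pi_gt_three, (hball _ (hGj j (by omega))).1, (hball _ hG1).1]
    have hfm := hind m le_rfl
    rw [hmG, ← Nat.cast_smul_eq_nsmul ℝ] at hfm
    rw [hfm, smul_smul, inv_mul_cancel₀ hm0, one_smul]
    exact (hball G hG1).2.1.symm
  have hex : ∀ H : selfAdjoint A, ∃ F : selfAdjoint A, ∀ m : ℕ, 0 < m →
      ψ (expUnitary ((m : ℝ)⁻¹ • H)) = expUnitary ((m : ℝ)⁻¹ • F) := by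
    intro H
    obtain ⟨k, hkr, hk⟩ : ∃ k : ℕ, ‖(k : ℝ)⁻¹ • H‖ < r ∧ 0 < k := by
      have h2 : Tendsto (fun m : ℕ => ‖(m : ℝ)⁻¹ • H‖) atTop (𝓝 ‖(0 : ℝ) • H‖) :=
        ((tendsto_inv_atTop_nhds_zero_nat (𝕜 := ℝ)).smul_const H).norm
      exact ((h2.eventually_lt_const (by simpa using hr)).and (eventually_gt_atTop 0)).exists
    have hk0 : (k : ℝ) ≠ 0 := Nat.cast_ne_zero.mpr hk.ne'
    set G := (k : ℝ)⁻¹ • H with hG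
    have hkG : H = k • G := by
      rw [← Nat.cast_smul_eq_nsmul ℝ, hG, smul_smul, mul_inv_cancel₀ hk0, one_smul]
    refine ⟨k • f₀ G, fun m hm => ?_⟩
    have hmG : ‖(m : ℝ)⁻¹ • G‖ < r := by
      rw [norm_smul, Real.norm_of_nonneg (by positivity)]
      refine lt_of_le_of_lt (mul_le_of_le_one_left (norm_nonneg _) ?_) hkr
      exact inv_le_one_of_one_le₀ (by exact_mod_cast hm)
    rw [hkG, smul_comm, smul_comm (m : ℝ)⁻¹ k, expUnitary_nsmul, expUnitary_nsmul,
      hpow _ (hball _ hmG).2.2, hhom G hkr m hm]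
  choose f hf using hex
  have hf1 : ∀ H, ψ (expUnitary H) = expUnitary (f H) := fun H => by simpa using hf H 1 one_pos
  have huniq : ∀ H F : selfAdjoint A, (∀ m : ℕ, 0 < m →
      ψ (expUnitary ((m : ℝ)⁻¹ • H)) = expUnitary ((m : ℝ)⁻¹ • F)) → f H = F := fun H F hF =>
    eq_of_forall_expUnitary_inv_smul_eq fun m hm => (hf H m hm).symm.trans (hF m hm)
  have hfinv : ∀ H, ∀ k : ℕ, 0 < k → f ((k : ℝ)⁻¹ • H) = (k : ℝ)⁻¹ • f H := fun H k hk =>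
    huniq _ _ fun m hm => by
      have := hf H (m * k) (by positivity)
      rwa [Nat.cast_mul, mul_inv, mul_smul, mul_smul] at this
  have hhalf : ∀ H, f ((1 / 2 : ℝ) • H) = (1 / 2 : ℝ) • f H := fun H => by
    simpa using hfinv H 2 two_pos
  have hexpadd : ∀ H G, ψ (expUnitary (H + G)) = expUnitary (f H + f G) := by
    intro H G
    have hsmall : ∀ F : selfAdjoint A,
        Tendsto (fun m : ℕ => expUnitary ((m : ℝ)⁻¹ • F)) atTop (𝓝 1) := fun F => by
      refine hE0.comp ?_
      simpa using (tendsto_inv_atTop_nhds_zero_nat (𝕜 := ℝ)).smul_const F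
    have t1 := (hcont.tendsto _).comp (tendsto_expUnitary_symmetrized_pow H G)
    have t2 := tendsto_expUnitary_symmetrized_pow (f H) (f G)
    refine tendsto_nhds_unique_of_eventuallyEq t1 t2 ?_
    have s1 := hsmall ((1 / 2 : ℝ) • H)
    have s2 := hsmall G
    have s3 : Tendsto (fun m : ℕ => expUnitary ((m : ℝ)⁻¹ • ((1 / 2 : ℝ) • H)) *
        expUnitary ((m : ℝ)⁻¹ • G) * expUnitary ((m : ℝ)⁻¹ • ((1 / 2 : ℝ) • H))) atTop (𝓝 1) := by
      simpa using (s1.mul s2).mul s1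
    have s4 : Tendsto (fun m : ℕ => dist (expUnitary ((m : ℝ)⁻¹ • G))⁻¹
        (expUnitary ((m : ℝ)⁻¹ • ((1 / 2 : ℝ) • H)))) atTop (𝓝 0) := by
      simpa using s2.inv.dist s1
    filter_upwards [s3.eventually (Metric.ball_mem_nhds 1 hδ), s4.eventually_lt_const hδ,
      s2.eventually (Metric.ball_mem_nhds 1 hδ), eventually_gt_atTop 0] with m m1 m2 m3 hm
    have hinv : ψ (expUnitary ((m : ℝ)⁻¹ • G))⁻¹ = (ψ (expUnitary ((m : ℝ)⁻¹ • G)))⁻¹ := by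
      simpa [h1] using htriple _ 1 m3
    have htr := htriple _ _ m2
    rw [inv_inv, hinv, inv_inv] at htr
    simp only [Function.comp_apply]
    rw [hpow _ m1, htr, hf G m hm, hf _ m hm, hhalf]
  have hadd : ∀ H G, f (H + G) = f H + f G := fun H G => huniq _ _ fun m hm => by
    rw [smul_add, hexpadd, hfinv _ _ hm, hfinv _ _ hm, smul_add]
  let F : selfAdjoint A →+ selfAdjoint A := AddMonoidHom.mk' f hadd
  have hF : Continuous F := by
    refine continuous_of_continuousAt_zero F ?_
    have hev : f₀ =ᶠ[𝓝 0] F := Metric.eventually_nhds_iff.mpr ⟨r, hr, fun H hH =>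
      (huniq H _ (hhom H (by simpa using hH))).symm⟩
    have hF0 : F 0 = 0 := map_zero F
    rw [ContinuousAt, hF0]
    exact hf₀0.congr' hev
  exact ⟨F.toRealLinearMap hF, hf1⟩

end UnitaryGauge

end Gauge

section Wigner

variable {m : Type*} [Fintype m] [DecidableEq m]

/-- The rank-one Hermitian matrix `x xᴴ`. -/
def rankOneSA (x : m → ℂ) : selfAdjoint (Matrix m m ℂ) :=
  ⟨vecMulVec x (star x), by
    rw [selfAdjoint.mem_iff, star_eq_conjTranspose, conjTranspose_vecMulVec, star_star]⟩

/-- The Hermitian matrix `z Eᵢⱼ + z̄ Eⱼᵢ`. -/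
def offDiagSA (i j : m) (z : ℂ) : selfAdjoint (Matrix m m ℂ) :=
  ⟨single i j z + single j i (star z), by
    rw [selfAdjoint.mem_iff, star_eq_conjTranspose, conjTranspose_add, conjTranspose_single,
      conjTranspose_single, star_star, add_comm]⟩

theorem rankOneSA_apply (x : m → ℂ) (i j : m) :
    (rankOneSA x : Matrix m m ℂ) i j = x i * star (x j) := rfl

theorem rankOneSA_smul (c : ℂ) (x : m → ℂ) :
    rankOneSA (c • x) = (‖c‖ ^ 2 : ℝ) • rankOneSA x := by
  ext i j
  have h : c * star c = ((‖c‖ ^ 2 : ℝ) : ℂ) := by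
    rw [Complex.star_def, Complex.mul_conj, Complex.normSq_eq_norm_sq]
  simp only [rankOneSA_apply, selfAdjoint.val_smul, Matrix.smul_apply, Pi.smul_apply, smul_eq_mul,
    Complex.real_smul, ← h, star_mul']
  ring

theorem coe_rankOneSA_single (k : m) :
    (rankOneSA (Pi.single k 1) : Matrix m m ℂ) = single k k 1 := by
  ext i j
  rw [rankOneSA_apply]
  by_cases hi : k = i <;> by_cases hj : k = j <;>
    simp [single_apply, hi, hj, Pi.single_apply, eq_comm]

theorem rankOneSA_pair {i j : m} (hij : i ≠ j) (a b : ℂ) :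
    rankOneSA (Pi.single i a + Pi.single j b) = (‖a‖ ^ 2 : ℝ) • rankOneSA (Pi.single i 1) +
      (‖b‖ ^ 2 : ℝ) • rankOneSA (Pi.single j 1) + offDiagSA i j (a * star b) := by
  rw [← rankOneSA_smul, ← rankOneSA_smul]
  ext k l
  simp only [rankOneSA_apply, AddSubgroup.coe_add, Matrix.add_apply, offDiagSA, Pi.add_apply,
    Pi.smul_apply, smul_eq_mul, Pi.single_apply, single_apply]
  by_cases hki : k = i <;> by_cases hkj : k = j <;> by_cases hli : l = i <;>
    by_cases hlj : l = j <;> simp_all [eq_comm, mul_comm]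

theorem trace_mul_offDiagSA (H : selfAdjoint (Matrix m m ℂ)) (i j : m) (z : ℂ) :
    trace ((H : Matrix m m ℂ) * (offDiagSA i j z : Matrix m m ℂ)) =
      ((2 * (star ((H : Matrix m m ℂ) i j) * z).re : ℝ) : ℂ) := by
  have hH : (H : Matrix m m ℂ) j i = star ((H : Matrix m m ℂ) i j) := by
    have : star (H : Matrix m m ℂ) = H := H.2
    conv_lhs => rw [← this]
    rfl
  simp only [offDiagSA, Matrix.mul_add, trace_add, trace_mul_single, hH]
  apply Complex.ext <;> simp <;> ring

theorem trace_mul_rankOneSA_single (H : selfAdjoint (Matrix m m ℂ)) (k : m) :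
    trace ((H : Matrix m m ℂ) * (rankOneSA (Pi.single k 1) : Matrix m m ℂ)) =
      (H : Matrix m m ℂ) k k := by
  rw [coe_rankOneSA_single, trace_mul_single]
  simp

theorem offDiagSA_apply {i j : m} (hij : i ≠ j) (z : ℂ) :
    (offDiagSA i j z : Matrix m m ℂ) i j = z := by
  simp [offDiagSA, hij, hij.symm]

theorem complex_eq_of_norm_one_of_re {z w : ℂ} (hz : ‖z‖ = 1) (hw : ‖w‖ = 1)
    (h : (star z * w).re = 1) : w = z := by
  have hz' : z.re * z.re + z.im * z.im = 1 := by
    rw [← Complex.normSq_apply, Complex.normSq_eq_norm_sq, hz]; norm_num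
  have hw' : w.re * w.re + w.im * w.im = 1 := by
    rw [← Complex.normSq_apply, Complex.normSq_eq_norm_sq, hw]; norm_num
  simp only [Complex.star_def, Complex.mul_re, Complex.conj_re, Complex.conj_im] at h
  have : (w.re - z.re) ^ 2 + (w.im - z.im) ^ 2 = 0 := by nlinarith
  apply Complex.ext
  · nlinarith [sq_nonneg (w.re - z.re), sq_nonneg (w.im - z.im)]
  · nlinarith [sq_nonneg (w.re - z.re), sq_nonneg (w.im - z.im)]

theorem selfAdjoint_apply_swap (H : selfAdjoint (Matrix m m ℂ)) (i j : m) :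
    (H : Matrix m m ℂ) j i = star ((H : Matrix m m ℂ) i j) := by
  have : star (H : Matrix m m ℂ) = H := H.2
  conv_lhs => rw [← this]
  rfl

/-- A real-linear map of Hermitian matrices preserving the trace form, the rank-one matrices and
the diagonal matrix units. -/
structure DiagonalRankOnePreserver
    (G : selfAdjoint (Matrix m m ℂ) →ₗ[ℝ] selfAdjoint (Matrix m m ℂ)) : Prop where
  trace_mul : ∀ H K, trace ((G H : Matrix m m ℂ) * (G K : Matrix m m ℂ)) =
    trace ((H : Matrix m m ℂ) * (K : Matrix m m ℂ))
  rankOne : ∀ x, ∃ y, G (rankOneSA x) = rankOneSA y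
  diag : ∀ k, G (rankOneSA (Pi.single k 1)) = rankOneSA (Pi.single k 1)
  ones : G (rankOneSA 1) = rankOneSA 1

namespace DiagonalRankOnePreserver

variable {G : selfAdjoint (Matrix m m ℂ) →ₗ[ℝ] selfAdjoint (Matrix m m ℂ)}

theorem apply_self (h : DiagonalRankOnePreserver G) (H : selfAdjoint (Matrix m m ℂ)) (k : m) :
    (G H : Matrix m m ℂ) k k = (H : Matrix m m ℂ) k k := by
  rw [← trace_mul_rankOneSA_single, ← trace_mul_rankOneSA_single H, ← h.trace_mul H, h.diag]

theorem norm_eq (h : DiagonalRankOnePreserver G) {x y : m → ℂ}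
    (hxy : G (rankOneSA x) = rankOneSA y) (k : m) : ‖y k‖ = ‖x k‖ := by
  have h1 := h.apply_self (rankOneSA x) k
  rw [hxy, rankOneSA_apply, rankOneSA_apply] at h1
  have h2 := congrArg norm h1
  rw [norm_mul, norm_mul, norm_star, norm_star] at h2
  exact (mul_self_inj (norm_nonneg _) (norm_nonneg _)).1 h2

theorem exists_map_offDiagSA (h : DiagonalRankOnePreserver G) {i j : m} (hij : i ≠ j) {z : ℂ}
    (hz : ‖z‖ = 1) : ∃ w : ℂ, ‖w‖ = 1 ∧ G (offDiagSA i j z) = offDiagSA i j w := by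
  obtain ⟨y, hy⟩ := h.rankOne (Pi.single i 1 + Pi.single j (star z))
  have hn := h.norm_eq hy
  have hi : ‖y i‖ = 1 := by rw [hn]; simp [hij]
  have hj : ‖y j‖ = 1 := by rw [hn]; simp [hij.symm, hz]
  have hy' : y = Pi.single i (y i) + Pi.single j (y j) := by
    ext k
    by_cases hki : k = i
    · subst hki; simp [hij]
    by_cases hkj : k = j
    · subst hkj; simp [hij.symm]
    have : ‖y k‖ = 0 := by rw [hn]; simp [hki, hkj]
    simp [hki, hkj, norm_eq_zero.1 this]
  refine ⟨y i * star (y j), by rw [norm_mul, norm_star, hi, hj, one_mul], ?_⟩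
  rw [hy', rankOneSA_pair hij, rankOneSA_pair hij] at hy
  simp only [hi, hj, hz, norm_star, norm_one, one_pow, one_smul, star_star, one_mul, map_add,
    h.diag] at hy
  exact add_left_cancel hy

theorem map_offDiagSA_one (h : DiagonalRankOnePreserver G) {i j : m} (hij : i ≠ j) :
    G (offDiagSA i j 1) = offDiagSA i j 1 := by
  obtain ⟨w, hw, hG⟩ := h.exists_map_offDiagSA hij (z := 1) norm_one
  have ht := h.trace_mul (rankOneSA 1) (offDiagSA i j 1)
  rw [hG, h.ones, trace_mul_offDiagSA, trace_mul_offDiagSA] at ht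
  have ht' := Complex.ofReal_injective ht
  simp only [rankOneSA_apply, Pi.one_apply] at ht'
  rw [hG, complex_eq_of_norm_one_of_re (z := 1) norm_one hw]
  simp at ht' ⊢
  exact ht'

theorem apply_eq_or_star (h : DiagonalRankOnePreserver G) (i j : m) :
    (∀ H, (G H : Matrix m m ℂ) i j = (H : Matrix m m ℂ) i j) ∨
      (∀ H, (G H : Matrix m m ℂ) i j = star ((H : Matrix m m ℂ) i j)) := by
  rcases eq_or_ne i j with rfl | hij
  · exact Or.inl fun H => h.apply_self H i
  have key : ∀ H (z w : ℂ), G (offDiagSA i j z) = offDiagSA i j w →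
      (star ((G H : Matrix m m ℂ) i j) * w).re = (star ((H : Matrix m m ℂ) i j) * z).re := by
    intro H z w hzw
    have ht := h.trace_mul H (offDiagSA i j z)
    rw [hzw, trace_mul_offDiagSA, trace_mul_offDiagSA] at ht
    have ht' := Complex.ofReal_injective ht
    linarith
  have hre : ∀ H, ((G H : Matrix m m ℂ) i j).re = ((H : Matrix m m ℂ) i j).re := by
    intro H
    simpa using key H 1 1 (h.map_offDiagSA_one hij)
  obtain ⟨w, hw, hG⟩ := h.exists_map_offDiagSA hij Complex.norm_I
  have hwre : w.re = 0 := by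
    have := hre (offDiagSA i j Complex.I)
    rw [hG, offDiagSA_apply hij, offDiagSA_apply hij] at this
    simpa using this
  have hwim : w.im ^ 2 = 1 := by
    have := Complex.sq_norm w
    rw [hw, Complex.normSq_apply, hwre] at this
    linarith
  have him : ∀ H, ((G H : Matrix m m ℂ) i j).im * w.im = ((H : Matrix m m ℂ) i j).im := by
    intro H
    simpa [hwre] using key H _ _ hG
  rcases sq_eq_one_iff.1 hwim with hs | hs
  · left
    intro H
    apply Complex.ext (hre H)
    have := him H
    rw [hs] at this
    linarith
  · right
    intro H
    have := him H
    rw [hs] at this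
    apply Complex.ext
    · simpa using hre H
    · simp; linarith

theorem false_of_apply_eq_of_apply_star (h : DiagonalRankOnePreserver G) {i j k : m} (hik : i ≠ k)
    (hjk : j ≠ k) (hi : ∀ H, (G H : Matrix m m ℂ) i k = (H : Matrix m m ℂ) i k)
    (hj : ∀ H, (G H : Matrix m m ℂ) j k = star ((H : Matrix m m ℂ) j k)) : False := by
  obtain ⟨y, hy⟩ := h.rankOne (Function.update 1 k Complex.I)
  have h1 := hi (rankOneSA (Function.update 1 k Complex.I))
  have h2 := hj (rankOneSA (Function.update 1 k Complex.I))
  have h3 : y i * star (y j) = 1 := by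
    rcases h.apply_eq_or_star i j with h3 | h3
    · have := h3 (rankOneSA (Function.update 1 k Complex.I))
      rw [hy] at this
      simpa [rankOneSA_apply, hik, hjk] using this
    · have := h3 (rankOneSA (Function.update 1 k Complex.I))
      rw [hy] at this
      simpa [rankOneSA_apply, hik, hjk] using this
  rw [hy] at h1 h2
  simp only [rankOneSA_apply, Function.update_self, Function.update_of_ne hik,
    Function.update_of_ne hjk, Pi.one_apply, one_mul, star_star] at h1 h2
  have hnj : star (y j) * y j = 1 := by
    have := h.norm_eq hy j
    rw [Complex.star_def, Complex.conj_mul', this]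
    simp [hjk]
  have hyij : y i = y j := by
    calc y i = y i * (star (y j) * y j) := by rw [hnj, mul_one]
      _ = y j := by rw [← mul_assoc, h3, one_mul]
  rw [hyij, h2] at h1
  have := congrArg Complex.im h1
  norm_num at this

theorem eq_id_or_transpose (h : DiagonalRankOnePreserver G) :
    (∀ H, (G H : Matrix m m ℂ) = H) ∨ (∀ H, (G H : Matrix m m ℂ) = (H : Matrix m m ℂ)ᵀ) := by
  by_cases hP : ∀ i j H, (G H : Matrix m m ℂ) i j = (H : Matrix m m ℂ) i j
  · left
    intro H
    ext i j
    exact hP i j H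
  right
  simp only [not_forall] at hP
  obtain ⟨a, b, hab⟩ := hP
  have hab' : ¬ ∀ H, (G H : Matrix m m ℂ) a b = (H : Matrix m m ℂ) a b := by
    simpa only [not_forall] using hab
  have hne : a ≠ b := by
    rintro rfl
    exact hab' fun H => h.apply_self H a
  have hN : ∀ H, (G H : Matrix m m ℂ) a b = star ((H : Matrix m m ℂ) a b) :=
    (h.apply_eq_or_star a b).resolve_left hab'
  have spread : ∀ {i j k : m}, i ≠ k → j ≠ k →
      (∀ H, (G H : Matrix m m ℂ) j k = star ((H : Matrix m m ℂ) j k)) →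
      ∀ H, (G H : Matrix m m ℂ) i k = star ((H : Matrix m m ℂ) i k) := by
    intro i j k hik hjk hj
    exact (h.apply_eq_or_star i k).resolve_left fun hi =>
      h.false_of_apply_eq_of_apply_star hik hjk hi hj
  have swap : ∀ {i j : m}, (∀ H, (G H : Matrix m m ℂ) i j = star ((H : Matrix m m ℂ) i j)) →
      ∀ H, (G H : Matrix m m ℂ) j i = star ((H : Matrix m m ℂ) j i) := by
    intro i j hh H
    rw [selfAdjoint_apply_swap, hh, ← selfAdjoint_apply_swap H]
  intro H
  ext i j
  rw [transpose_apply, selfAdjoint_apply_swap H]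
  rcases eq_or_ne i j with rfl | hij
  · rw [h.apply_self, ← selfAdjoint_apply_swap H]
  rcases eq_or_ne i b with rfl | hib
  · exact swap (spread hij.symm hne hN) H
  · exact swap (spread hij.symm hib.symm (swap (spread hib hne hN))) H

end DiagonalRankOnePreserver

theorem trace_rankOneSA_mul_rankOneSA (x y : m → ℂ) :
    trace ((rankOneSA x : Matrix m m ℂ) * (rankOneSA y : Matrix m m ℂ)) =
      ((‖star x ⬝ᵥ y‖ ^ 2 : ℝ) : ℂ) := by
  have h : (star y ⬝ᵥ x) = star (star x ⬝ᵥ y) := by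
    rw [star_dotProduct]
  change trace (vecMulVec x (star x) * vecMulVec y (star y)) = _
  rw [vecMulVec_mul_vecMulVec, trace_vecMulVec, dotProduct_smul, dotProduct_comm x, h, smul_eq_mul,
    Complex.star_def, Complex.mul_conj, Complex.normSq_eq_norm_sq]

theorem conjTranspose_mul_rankOneSA_mul (V : Matrix m m ℂ) (x : m → ℂ) :
    Vᴴ * (rankOneSA x : Matrix m m ℂ) * V = rankOneSA (Vᴴ *ᵥ x) := by
  change Vᴴ * vecMulVec x (star x) * V = vecMulVec _ _
  rw [mul_vecMulVec, vecMulVec_mul, star_mulVec, conjTranspose_conjTranspose]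

theorem exists_smul_unit (x : m → ℂ) (hx : x ≠ 0) :
    ∃ (c : ℝ) (u : m → ℂ), star u ⬝ᵥ u = 1 ∧ x = (c : ℂ) • u := by
  have h0 : WithLp.toLp 2 x ≠ 0 := by simpa using hx
  have hn : ‖WithLp.toLp 2 x‖ ≠ 0 := norm_ne_zero_iff.2 h0
  refine ⟨‖WithLp.toLp 2 x‖, ((‖WithLp.toLp 2 x‖ : ℂ)⁻¹) • x, ?_, ?_⟩
  · have : star x ⬝ᵥ x = ((‖WithLp.toLp 2 x‖ : ℝ) : ℂ) ^ 2 := by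
      rw [dotProduct_comm, ← EuclideanSpace.inner_toLp_toLp, inner_self_eq_norm_sq_to_K]
      rfl
    rw [star_smul, smul_dotProduct, dotProduct_smul, this]
    have hn' : (‖WithLp.toLp 2 x‖ : ℂ) ≠ 0 := by exact_mod_cast hn
    simp only [star_inv₀, Complex.star_def, Complex.conj_ofReal, smul_eq_mul]
    field_simp
  · rw [smul_smul, mul_inv_cancel₀ (by exact_mod_cast hn), one_smul]

theorem Matrix.IsHermitian.exists_unitary_diagonal {A : Matrix m m ℂ} (hA : A.IsHermitian) :
    ∃ Q ∈ unitaryGroup m ℂ, A = Q * diagonal (fun i => (hA.eigenvalues i : ℂ)) * Qᴴ := by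
  refine ⟨hA.eigenvectorUnitary, hA.eigenvectorUnitary.2, ?_⟩
  have h := hA.spectral_theorem
  rw [Unitary.conjStarAlgAut_apply] at h
  exact h

theorem exists_eq_sum_eigenvalues_smul_rankOneSA {H : selfAdjoint (Matrix m m ℂ)}
    (hH : (H : Matrix m m ℂ).IsHermitian) : ∃ v : m → m → ℂ, (∀ j, star (v j) ⬝ᵥ v j = 1) ∧
      H = ∑ j, hH.eigenvalues j • rankOneSA (v j) := by
  obtain ⟨Q, hQ, hHQ⟩ := hH.exists_unitary_diagonal
  refine ⟨fun j i => Q i j, fun j => ?_, ?_⟩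
  · have := congrFun (congrFun (mem_unitaryGroup_iff'.1 hQ) j) j
    rwa [one_apply_eq] at this
  · ext a b
    have h := congrFun (congrFun hHQ a) b
    rw [h, AddSubgroup.val_finsetSum, Matrix.sum_apply, Matrix.mul_apply]
    refine Finset.sum_congr rfl fun i _ => ?_
    rw [mul_diagonal, selfAdjoint.val_smul, Matrix.smul_apply, rankOneSA_apply,
      conjTranspose_apply, Complex.real_smul]
    ring

theorem trace_mul_eq_of_rankOneSA
    {g : selfAdjoint (Matrix m m ℂ) →ₗ[ℝ] selfAdjoint (Matrix m m ℂ)}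
    (h : ∀ x y : m → ℂ, star x ⬝ᵥ x = 1 → star y ⬝ᵥ y = 1 →
      trace ((g (rankOneSA x) : Matrix m m ℂ) * (g (rankOneSA y) : Matrix m m ℂ)) =
        trace ((rankOneSA x : Matrix m m ℂ) * (rankOneSA y : Matrix m m ℂ)))
    (H K : selfAdjoint (Matrix m m ℂ)) :
    trace ((g H : Matrix m m ℂ) * (g K : Matrix m m ℂ)) =
      trace ((H : Matrix m m ℂ) * (K : Matrix m m ℂ)) := by
  obtain ⟨v, hv, hH⟩ := exists_eq_sum_eigenvalues_smul_rankOneSA H.2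
  obtain ⟨w, hw, hK⟩ := exists_eq_sum_eigenvalues_smul_rankOneSA K.2
  rw [hH, hK]
  simp only [map_sum, map_smul, AddSubgroup.val_finsetSum, selfAdjoint.val_smul, Finset.sum_mul,
    Finset.mul_sum, trace_sum, smul_mul_assoc, mul_smul_comm, trace_smul, h _ _ (hv _) (hw _)]

/-- **Wigner's theorem** for real-linear maps of Hermitian matrices: preserving unit rank-one
projections and their transition probabilities forces a unitary or antiunitary conjugation. -/
theorem exists_unitary_conj_or_transpose
    (g : selfAdjoint (Matrix m m ℂ) →ₗ[ℝ] selfAdjoint (Matrix m m ℂ))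
    (h1 : ∀ x : m → ℂ, star x ⬝ᵥ x = 1 → ∃ y, star y ⬝ᵥ y = 1 ∧ g (rankOneSA x) = rankOneSA y)
    (h2 : ∀ x y : m → ℂ, star x ⬝ᵥ x = 1 → star y ⬝ᵥ y = 1 →
      trace ((g (rankOneSA x) : Matrix m m ℂ) * (g (rankOneSA y) : Matrix m m ℂ)) =
        trace ((rankOneSA x : Matrix m m ℂ) * (rankOneSA y : Matrix m m ℂ))) :
    ∃ V ∈ unitaryGroup m ℂ, (∀ H, (g H : Matrix m m ℂ) = V * (H : Matrix m m ℂ) * Vᴴ) ∨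
      (∀ H, (g H : Matrix m m ℂ) = V * (H : Matrix m m ℂ)ᵀ * Vᴴ) := by
  have htr := trace_mul_eq_of_rankOneSA h2
  have hR : ∀ x, ∃ y, g (rankOneSA x) = rankOneSA y := by
    intro x
    by_cases hx : x = 0
    · refine ⟨0, ?_⟩
      have h0 : rankOneSA (0 : m → ℂ) = 0 := by ext; simp [rankOneSA_apply]
      rw [hx, h0, map_zero]
    · obtain ⟨c, u, hu, rfl⟩ := exists_smul_unit x hx
      obtain ⟨y, -, hy⟩ := h1 u hu
      exact ⟨(c : ℂ) • y, by rw [rankOneSA_smul, rankOneSA_smul, map_smul, hy]⟩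
  have hunit : ∀ k : m, star (Pi.single k 1 : m → ℂ) ⬝ᵥ Pi.single k 1 = 1 := by simp
  choose y hy1 hy using fun k : m => h1 (Pi.single k 1) (hunit k)
  obtain ⟨w, hw⟩ := hR 1
  have hyw : ∀ k, ‖star (y k) ⬝ᵥ w‖ = 1 := by
    intro k
    have := htr (rankOneSA (Pi.single k 1)) (rankOneSA 1)
    rw [hy, hw, trace_rankOneSA_mul_rankOneSA, trace_rankOneSA_mul_rankOneSA] at this
    have := Complex.ofReal_injective this
    rw [← Pi.single_star] at this
    refine (sq_eq_sq₀ (norm_nonneg _) zero_le_one).1 ?_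
    simpa using this
  have hyy : ∀ k l, k ≠ l → star (y k) ⬝ᵥ y l = 0 := by
    intro k l hkl
    have := htr (rankOneSA (Pi.single k 1)) (rankOneSA (Pi.single l 1))
    rw [hy, hy, trace_rankOneSA_mul_rankOneSA, trace_rankOneSA_mul_rankOneSA] at this
    have := Complex.ofReal_injective this
    simpa [hkl] using this
  set q : m → m → ℂ := fun k => (star (y k) ⬝ᵥ w) • y k with hq
  have hqR : ∀ k, g (rankOneSA (Pi.single k 1)) = rankOneSA (q k) := by
    intro k
    rw [hq, rankOneSA_smul, hyw, hy, one_pow, one_smul]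
  have hqq : ∀ k l, star (q k) ⬝ᵥ q l = if k = l then 1 else 0 := by
    intro k l
    rw [hq]
    simp only [star_smul, smul_dotProduct, dotProduct_smul]
    split_ifs with hkl
    · subst hkl
      rw [hy1, smul_eq_mul, smul_eq_mul, mul_one, Complex.star_def, Complex.mul_conj', hyw]
      simp
    · simp [hyy k l hkl]
  have hqw : ∀ k, star (q k) ⬝ᵥ w = 1 := by
    intro k
    rw [hq]
    simp only [star_smul, smul_dotProduct]
    rw [smul_eq_mul, Complex.star_def, Complex.conj_mul', hyw]
    simp
  set V : Matrix m m ℂ := of fun i k => q k i with hV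
  have hVx : ∀ x k, (Vᴴ *ᵥ x) k = star (q k) ⬝ᵥ x := fun x k => rfl
  have hVV : Vᴴ * V = 1 := by
    ext k l
    rw [one_apply, ← hqq]
    rfl
  have hVV' : V * Vᴴ = 1 := mul_eq_one_comm.1 hVV
  have hVmem : V ∈ unitaryGroup m ℂ := mem_unitaryGroup_iff'.2 hVV
  let G : selfAdjoint (Matrix m m ℂ) →ₗ[ℝ] selfAdjoint (Matrix m m ℂ) :=
    { toFun := fun H => ⟨Vᴴ * (g H : Matrix m m ℂ) * V,
        isHermitian_conjTranspose_mul_mul V (g H).2⟩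
      map_add' := fun H K => by ext1; simp [Matrix.mul_add, Matrix.add_mul]
      map_smul' := fun c H => by ext1; simp }
  have hG : ∀ H, (G H : Matrix m m ℂ) = Vᴴ * (g H : Matrix m m ℂ) * V := fun _ => rfl
  have hGR : ∀ x z, g (rankOneSA x) = rankOneSA z → G (rankOneSA x) = rankOneSA (Vᴴ *ᵥ z) := by
    intro x z hxz
    ext1
    rw [hG, hxz, conjTranspose_mul_rankOneSA_mul]
  have hGp : DiagonalRankOnePreserver G :=
    { trace_mul := fun H K => by
        rw [← htr H K, hG, hG]
        calc trace (Vᴴ * (g H : Matrix m m ℂ) * V * (Vᴴ * (g K : Matrix m m ℂ) * V))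
            = trace (Vᴴ * ((g H : Matrix m m ℂ) * (V * Vᴴ) * (g K : Matrix m m ℂ) * V)) := by
              simp only [Matrix.mul_assoc]
          _ = _ := by
              rw [trace_mul_comm, hVV', Matrix.mul_one, Matrix.mul_assoc, hVV', Matrix.mul_one]
      rankOne := fun x => by
        obtain ⟨z, hz⟩ := hR x
        exact ⟨_, hGR x z hz⟩
      diag := fun k => by
        rw [hGR _ _ (hqR k)]
        congr 1
        ext l
        rw [hVx, hqq, Pi.single_apply]
      ones := by
        rw [hGR _ _ hw]
        congr 1
        ext l
        rw [hVx, hqw, Pi.one_apply] }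
  have hback : ∀ H, (g H : Matrix m m ℂ) = V * (G H : Matrix m m ℂ) * Vᴴ := by
    intro H
    rw [hG]
    calc (g H : Matrix m m ℂ) = (V * Vᴴ) * (g H : Matrix m m ℂ) * (V * Vᴴ) := by
          rw [hVV', Matrix.one_mul, Matrix.mul_one]
      _ = _ := by simp only [Matrix.mul_assoc]
  refine ⟨V, hVmem, ?_⟩
  rcases hGp.eq_id_or_transpose with h | h
  · exact Or.inl fun H => by rw [hback, h]
  · exact Or.inr fun H => by rw [hback, h]

end Wigner

section Schatten

variable {m : Type*} [Fintype m] [DecidableEq m]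

theorem Matrix.IsHermitian.sum_eigenvalues_eq {A : Matrix m m ℂ} (hA : A.IsHermitian)
    {Q : Matrix m m ℂ} (hQ : Q ∈ unitaryGroup m ℂ) {μ : m → ℝ}
    (h : A = Q * diagonal (fun i => (μ i : ℂ)) * Qᴴ) (φ : ℝ → ℝ) :
    ∑ i, φ (hA.eigenvalues i) = ∑ i, φ (μ i) := by
  have hroots := hA.roots_charpoly_eq_eigenvalues
  have hc : A.charpoly = (diagonal (fun i => (μ i : ℂ))).charpoly := by
    rw [h, charpoly_mul_comm, ← Matrix.mul_assoc, ← star_eq_conjTranspose,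
      mem_unitaryGroup_iff'.1 hQ, Matrix.one_mul]
  rw [hc, charpoly_diagonal, Polynomial.roots_prod _ _
    (Finset.prod_ne_zero_iff.2 fun i _ => Polynomial.X_sub_C_ne_zero _)] at hroots
  simp only [Polynomial.roots_X_sub_C, Multiset.bind_singleton] at hroots
  have := congrArg (fun s : Multiset ℂ => (s.map fun z => φ z.re).sum) hroots
  simpa using this.symm

/-- The `p`-th power of the Schatten `p`-quasinorm. -/
noncomputable def schatten (p : ℝ) (A : Matrix m m ℂ) : ℝ :=
  ∑ i, ((posSemidef_conjTranspose_mul_self A).isHermitian.eigenvalues i) ^ (p / 2)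

theorem schatten_nonneg (p : ℝ) (A : Matrix m m ℂ) : 0 ≤ schatten p A :=
  Finset.sum_nonneg fun i _ =>
    Real.rpow_nonneg ((posSemidef_conjTranspose_mul_self A).eigenvalues_nonneg i) _

theorem schatten_eq_of_lpnorm_eq [Nonempty m] {p : ℝ} (hp : 0 < p) {A B : Matrix m m ℂ}
    (h : lpnorm p A = lpnorm p B) : schatten p A = schatten p B := by
  change (schatten p A / (Fintype.card m : ℝ)) ^ (1 / p) =
    (schatten p B / (Fintype.card m : ℝ)) ^ (1 / p) at h
  have hc : (0 : ℝ) < Fintype.card m := by exact_mod_cast Fintype.card_pos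
  rw [Real.rpow_left_inj (div_nonneg (schatten_nonneg p A) hc.le)
    (div_nonneg (schatten_nonneg p B) hc.le) (one_div_pos.2 hp).ne'] at h
  exact (div_left_inj' hc.ne').1 h

theorem schatten_eq_of_charpoly {p : ℝ} {A B : Matrix m m ℂ}
    (h : (Aᴴ * A).charpoly = (Bᴴ * B).charpoly) : schatten p A = schatten p B := by
  have := (IsHermitian.eigenvalues_eq_eigenvalues_iff
    (posSemidef_conjTranspose_mul_self A).isHermitian
    (posSemidef_conjTranspose_mul_self B).isHermitian).2 h
  rw [schatten, schatten, this]

theorem schatten_conjTranspose (p : ℝ) (A : Matrix m m ℂ) : schatten p Aᴴ = schatten p A :=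
  schatten_eq_of_charpoly (by rw [conjTranspose_conjTranspose, charpoly_mul_comm])

theorem schatten_unitary_mul (p : ℝ) {U : Matrix m m ℂ} (hU : U ∈ unitaryGroup m ℂ)
    (A : Matrix m m ℂ) : schatten p (U * A) = schatten p A :=
  schatten_eq_of_charpoly (by
    rw [conjTranspose_mul, Matrix.mul_assoc, ← Matrix.mul_assoc Uᴴ, ← star_eq_conjTranspose U,
      mem_unitaryGroup_iff'.1 hU, Matrix.one_mul])

theorem schatten_mul_unitary (p : ℝ) {U : Matrix m m ℂ} (hU : U ∈ unitaryGroup m ℂ)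
    (A : Matrix m m ℂ) : schatten p (A * U) = schatten p A := by
  rw [← schatten_conjTranspose, conjTranspose_mul, ← star_eq_conjTranspose U,
    schatten_unitary_mul p (Unitary.star_mem hU),
    schatten_conjTranspose]

theorem schatten_eq_sum (p : ℝ) {A Q : Matrix m m ℂ} (hQ : Q ∈ unitaryGroup m ℂ) {μ : m → ℝ}
    (h : Aᴴ * A = Q * diagonal (fun i => (μ i : ℂ)) * Qᴴ) :
    schatten p A = ∑ i, μ i ^ (p / 2) :=
  IsHermitian.sum_eigenvalues_eq _ hQ h fun x => x ^ (p / 2)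

open scoped Matrix.Norms.L2Operator

theorem norm_sq_eq_of_conjTranspose_mul_self {A Q : Matrix m m ℂ} (hQ : Q ∈ unitaryGroup m ℂ)
    {μ : m → ℝ} (h : Aᴴ * A = Q * diagonal (fun i => (μ i : ℂ)) * Qᴴ) :
    ‖A‖ ^ 2 = ‖μ‖ := by
  rw [sq, ← l2_opNorm_conjTranspose_mul_self, h, ← star_eq_conjTranspose Q,
    CStarRing.norm_mul_mem_unitary _ (Unitary.star_mem hQ),
    CStarRing.norm_mem_unitary_mul _ hQ, l2_opNorm_diagonal]
  simp [Pi.norm_def]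

theorem eigenvalue_le_norm_sq {A Q : Matrix m m ℂ} (hQ : Q ∈ unitaryGroup m ℂ)
    {μ : m → ℝ} (h : Aᴴ * A = Q * diagonal (fun i => (μ i : ℂ)) * Qᴴ) (i : m) :
    μ i ≤ ‖A‖ ^ 2 := by
  rw [norm_sq_eq_of_conjTranspose_mul_self hQ h]
  exact (le_abs_self _).trans (norm_le_pi_norm μ i)

theorem exists_conjTranspose_mul_self_eq (A : Matrix m m ℂ) : ∃ Q ∈ unitaryGroup m ℂ,
    ∃ μ : m → ℝ, (∀ i, 0 ≤ μ i) ∧ Aᴴ * A = Q * diagonal (fun i => (μ i : ℂ)) * Qᴴ := by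
  have hA := posSemidef_conjTranspose_mul_self A
  obtain ⟨Q, hQ, h⟩ := hA.isHermitian.exists_unitary_diagonal
  exact ⟨Q, hQ, _, hA.eigenvalues_nonneg, h⟩

theorem schatten_le {p : ℝ} (hp : 0 < p) (A : Matrix m m ℂ) :
    schatten p A ≤ Fintype.card m * ‖A‖ ^ p := by
  obtain ⟨Q, hQ, μ, hμ, h⟩ := exists_conjTranspose_mul_self_eq A
  have hle : ∀ i, μ i ^ (p / 2) ≤ ‖A‖ ^ p := by
    intro i
    have h2 : ‖A‖ ^ p = (‖A‖ ^ 2) ^ (p / 2) := by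
      rw [← Real.rpow_natCast, ← Real.rpow_mul (norm_nonneg _)]
      congr 1
      push_cast
      ring
    rw [h2]
    exact Real.rpow_le_rpow (hμ i) (eigenvalue_le_norm_sq hQ h i) (by positivity)
  rw [schatten_eq_sum p hQ h]
  calc ∑ i, μ i ^ (p / 2) ≤ ∑ _i : m, ‖A‖ ^ p := Finset.sum_le_sum fun i _ => hle i
    _ = Fintype.card m * ‖A‖ ^ p := by simp

theorem norm_lt_of_schatten_lt {p : ℝ} (hp : 0 < p) {A : Matrix m m ℂ} {ε : ℝ} (hε : 0 < ε)
    (hA : schatten p A < ε ^ p) : ‖A‖ < ε := by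
  obtain ⟨Q, hQ, μ, hμ, h⟩ := exists_conjTranspose_mul_self_eq A
  have h2 : ε ^ p = (ε ^ 2) ^ (p / 2) := by
    rw [← Real.rpow_natCast, ← Real.rpow_mul hε.le]
    congr 1
    push_cast
    ring
  rw [schatten_eq_sum p hQ h, h2] at hA
  have hlt : ∀ i, ‖μ i‖ < ε ^ 2 := by
    intro i
    rw [Real.norm_of_nonneg (hμ i)]
    have : μ i ^ (p / 2) < (ε ^ 2) ^ (p / 2) :=
      (Finset.single_le_sum (f := fun i => μ i ^ (p / 2))
        (fun i _ => Real.rpow_nonneg (hμ i) _) (Finset.mem_univ i)).trans_lt hA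
    exact (Real.rpow_lt_rpow_iff (hμ i) (by positivity) (by positivity)).1 this
  have : ‖A‖ ^ 2 < ε ^ 2 := by
    rw [norm_sq_eq_of_conjTranspose_mul_self hQ h]
    exact (pi_norm_lt_iff (by positivity)).2 hlt
  exact lt_of_pow_lt_pow_left₀ 2 hε.le this

theorem schatten_inv_sub_self_ge {p : ℝ} (hp : 0 < p) {X : Matrix m m ℂ}
    (hX : X ∈ unitaryGroup m ℂ) (h1 : ‖X - 1‖ ≤ 1) :
    3 ^ (p / 2) * schatten p (X - 1) ≤ schatten p (Xᴴ - X) := by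
  obtain ⟨Q, hQ, μ, hμ, h⟩ := exists_conjTranspose_mul_self_eq (X - 1)
  have hXl : Xᴴ * X = 1 := mem_unitaryGroup_iff'.1 hX
  have hXr : X * Xᴴ = 1 := mem_unitaryGroup_iff.1 hX
  have hQl : Qᴴ * Q = 1 := mem_unitaryGroup_iff'.1 hQ
  have hQr : Q * Qᴴ = 1 := mem_unitaryGroup_iff.1 hQ
  have hD : (X - 1)ᴴ * (X - 1) = 2 - X - Xᴴ := by
    rw [conjTranspose_sub, conjTranspose_one, sub_mul, mul_sub, hXl]
    grind
  have h' : (Xᴴ - X)ᴴ * (Xᴴ - X) =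
      Q * diagonal (fun i => ((μ i * (4 - μ i) : ℝ) : ℂ)) * Qᴴ := by
    have e1 : (Xᴴ - X)ᴴ * (Xᴴ - X) =
        (X - 1)ᴴ * (X - 1) * (4 - (X - 1)ᴴ * (X - 1)) := by
      rw [hD, conjTranspose_sub, conjTranspose_conjTranspose]
      have e2 : (2 - X - Xᴴ) * (4 - (2 - X - Xᴴ)) =
          4 - X * X - Xᴴ * Xᴴ - X * Xᴴ - Xᴴ * X := by grind
      rw [e2, sub_mul, mul_sub, mul_sub, hXl, hXr]
      grind
    have e3 : diagonal (fun i => ((μ i * (4 - μ i) : ℝ) : ℂ)) =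
        diagonal (fun i => (μ i : ℂ)) * (4 - diagonal (fun i => (μ i : ℂ))) := by
      rw [show (4 : Matrix m m ℂ) = diagonal (fun _ => 4) from rfl, diagonal_sub, diagonal_mul_diagonal]
      simp
    rw [e1, h, e3]
    generalize diagonal (fun i => (μ i : ℂ)) = E
    calc Q * E * Qᴴ * (4 - Q * E * Qᴴ) = 4 * (Q * E * Qᴴ) - Q * E * (Qᴴ * Q) * E * Qᴴ := by
          grind
      _ = _ := by rw [hQl]; grind
  rw [schatten_eq_sum p hQ h, schatten_eq_sum p hQ h', Finset.mul_sum]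
  refine Finset.sum_le_sum fun i _ => ?_
  rw [← Real.mul_rpow (by norm_num) (hμ i)]
  have hle : μ i ≤ 1 := (eigenvalue_le_norm_sq hQ h i).trans (pow_le_one₀ (norm_nonneg _) h1)
  exact Real.rpow_le_rpow (by nlinarith [hμ i]) (by nlinarith [hμ i]) (by positivity)

theorem unitaryGauge_schatten {p : ℝ} (hp : 0 < p) :
    UnitaryGauge (fun u v : unitary (Matrix m m ℂ) =>
      schatten p ((u : Matrix m m ℂ) - (v : Matrix m m ℂ)))
      (3 ^ (p / 2)) where
  nonneg u v := schatten_nonneg p _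
  bounded := by
    refine ⟨Fintype.card m * 2 ^ p, fun u v => (schatten_le hp _).trans ?_⟩
    have : ‖(u : Matrix m m ℂ) - v‖ ≤ 2 :=
      (norm_sub_le _ _).trans (by linarith [norm_unitary_le_one u, norm_unitary_le_one v])
    gcongr
  mul_left w u v := by
    simp only [Submonoid.coe_mul, ← mul_sub]
    exact schatten_unitary_mul p w.2 _
  mul_right w u v := by
    simp only [Submonoid.coe_mul, ← sub_mul]
    exact schatten_mul_unitary p w.2 _
  inv u v := by
    rw [← schatten_conjTranspose, conjTranspose_sub]
    rw [← star_eq_conjTranspose, ← star_eq_conjTranspose, ← Unitary.coe_star, ← Unitary.coe_star,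
      Unitary.star_eq_inv, Unitary.star_eq_inv, inv_inv, inv_inv]
  small_of_dist ε hε := by
    have hc : (0 : ℝ) < Fintype.card m + 1 := by positivity
    refine ⟨(ε / (Fintype.card m + 1)) ^ (1 / p), by positivity, fun u v huv => ?_⟩
    rw [Subtype.dist_eq, dist_eq_norm] at huv
    have h1 : ‖(u : Matrix m m ℂ) - v‖ ^ p < ε / (Fintype.card m + 1) := by
      have := Real.rpow_lt_rpow (norm_nonneg _) huv hp
      rwa [← Real.rpow_mul (by positivity), one_div_mul_cancel hp.ne', Real.rpow_one] at this
    have h0 : 0 ≤ ‖(u : Matrix m m ℂ) - v‖ ^ p := by positivity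
    rw [lt_div_iff₀ hc] at h1
    nlinarith [schatten_le hp ((u : Matrix m m ℂ) - (v : Matrix m m ℂ))]
  dist_of_small ε hε := by
    refine ⟨ε ^ p, by positivity, fun u v huv => ?_⟩
    rw [Subtype.dist_eq, dist_eq_norm]
    exact norm_lt_of_schatten_lt hp hε huv
  one_lt := Real.one_lt_rpow (by norm_num) (by positivity)
  expanding u v huv := by
    set X : unitary (Matrix m m ℂ) := v⁻¹ * u with hX
    have hu : (u : Matrix m m ℂ) = v * X := by
      rw [← Submonoid.coe_mul, hX, mul_inv_cancel_left]
    have e1 : (u : Matrix m m ℂ) - v = v * ((X : Matrix m m ℂ) - 1) := by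
      rw [hu, mul_sub, mul_one]
    have e2 : ((v * u⁻¹ * v : unitary (Matrix m m ℂ)) : Matrix m m ℂ) - u =
        v * ((X : Matrix m m ℂ)ᴴ - X) := by
      rw [mul_sub, ← hu, ← star_eq_conjTranspose, ← Unitary.coe_star, Unitary.star_eq_inv,
        ← Submonoid.coe_mul, hX, _root_.mul_inv_rev, inv_inv, mul_assoc]
    have h1 : ‖(X : Matrix m m ℂ) - 1‖ ≤ 1 := by
      rw [Subtype.dist_eq, dist_eq_norm, e1, CStarRing.norm_coe_unitary_mul] at huv
      exact huv
    simp only [e1, e2]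
    rw [schatten_unitary_mul p v.2, schatten_unitary_mul p v.2]
    exact schatten_inv_sub_self_ge hp X.2 h1

open selfAdjoint Unitary

theorem expUnitary_argSelfAdjoint_of_continuousOn {A : Type*} [CStarAlgebra A] {u : unitary A}
    (harg : ContinuousOn Complex.arg (spectrum ℂ (u : A))) : expUnitary (argSelfAdjoint u) = u := by
  ext1
  rw [expUnitary_coe, argSelfAdjoint_coe, ← CFC.exp_eq_normedSpace_exp (𝕜 := ℂ),
    ← cfc_comp_smul .., ← cfc_comp' ..]
  conv_rhs => rw [← cfc_id' ℂ (u : A)]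
  refine cfc_congr fun y hy => ?_
  have hy₁ : ‖y‖ = 1 := spectrum.norm_eq_one_of_unitary u.2 hy
  have hy₀ : y ≠ 0 := by
    rintro rfl
    simp at hy₁
  have hlog : Complex.I * y.arg = Complex.log y :=
    Complex.ext (by simp [Complex.log_re, hy₁]) (by simp [Complex.log_im])
  simpa [← Complex.exp_eq_exp_ℂ, hlog] using Complex.exp_log hy₀

theorem exists_expUnitary_eq (u : unitary (Matrix m m ℂ)) :
    ∃ H : selfAdjoint (Matrix m m ℂ), expUnitary H = u :=
  ⟨_, expUnitary_argSelfAdjoint_of_continuousOn ((Matrix.finite_spectrum _).continuousOn _)⟩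

theorem exp_unitary_conj {Q : Matrix m m ℂ} (hQ : Q ∈ unitaryGroup m ℂ) (A : Matrix m m ℂ) :
    NormedSpace.exp (Q * A * Qᴴ) = Q * NormedSpace.exp A * Qᴴ := by
  have hr : Q * Qᴴ = 1 := mem_unitaryGroup_iff.1 hQ
  have h := Matrix.exp_conj Q A (IsUnit.of_mul_eq_one _ hr)
  rwa [Matrix.inv_eq_right_inv hr] at h

theorem coe_expUnitary_eq {H : selfAdjoint (Matrix m m ℂ)} {Q : Matrix m m ℂ}
    (hQ : Q ∈ unitaryGroup m ℂ) {μ : m → ℝ}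
    (h : (H : Matrix m m ℂ) = Q * diagonal (fun i => (μ i : ℂ)) * Qᴴ) :
    (expUnitary H : Matrix m m ℂ) =
      Q * diagonal (fun i => Complex.exp (Complex.I * μ i)) * Qᴴ := by
  have e : Complex.I • (H : Matrix m m ℂ) = Q * diagonal (fun i => Complex.I * μ i) * Qᴴ := by
    rw [h, ← Matrix.smul_mul, ← Matrix.mul_smul, ← diagonal_smul]
    rfl
  rw [expUnitary_coe, e, exp_unitary_conj hQ, Matrix.exp_diagonal]
  congr 3
  ext i
  rw [Pi.coe_exp, Complex.exp_eq_exp_ℂ]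

theorem schatten_one_sub_expUnitary (p : ℝ) {H : selfAdjoint (Matrix m m ℂ)} {Q : Matrix m m ℂ}
    (hQ : Q ∈ unitaryGroup m ℂ) {μ : m → ℝ}
    (h : (H : Matrix m m ℂ) = Q * diagonal (fun i => (μ i : ℂ)) * Qᴴ) :
    schatten p (1 - (expUnitary H : Matrix m m ℂ)) =
      ∑ i, (2 - 2 * Real.cos (μ i)) ^ (p / 2) := by
  have hQl : Qᴴ * Q = 1 := mem_unitaryGroup_iff'.1 hQ
  have hQr : Q * Qᴴ = 1 := mem_unitaryGroup_iff.1 hQ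
  refine schatten_eq_sum p hQ ?_
  have e : 1 - (expUnitary H : Matrix m m ℂ) =
      Q * diagonal (fun i => 1 - Complex.exp (Complex.I * μ i)) * Qᴴ := by
    rw [coe_expUnitary_eq hQ h, ← diagonal_sub, diagonal_one, mul_sub, sub_mul, mul_one, hQr]
  have hdiag : (diagonal fun i => ((2 - 2 * Real.cos (μ i) : ℝ) : ℂ)) =
      (diagonal (fun i => 1 - Complex.exp (Complex.I * μ i)))ᴴ *
        diagonal (fun i => 1 - Complex.exp (Complex.I * μ i)) := by
    rw [diagonal_conjTranspose, diagonal_mul_diagonal]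
    congr 1
    ext i
    rw [Pi.star_apply, Complex.star_def, ← Complex.normSq_eq_conj_mul_self, Complex.normSq_apply,
      mul_comm Complex.I]
    congr 1
    simp only [Complex.sub_re, Complex.sub_im, Complex.one_re, Complex.one_im,
      Complex.exp_ofReal_mul_I_re, Complex.exp_ofReal_mul_I_im]
    nlinarith [Real.sin_sq_add_cos_sq (μ i)]
  rw [e, hdiag]
  generalize diagonal (fun i => 1 - Complex.exp (Complex.I * μ i)) = E
  rw [conjTranspose_mul, conjTranspose_mul, conjTranspose_conjTranspose]
  calc Q * (Eᴴ * Qᴴ) * (Q * E * Qᴴ) = Q * Eᴴ * (Qᴴ * Q) * E * Qᴴ := by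
        simp only [Matrix.mul_assoc]
    _ = _ := by rw [hQl]; simp only [Matrix.mul_assoc, Matrix.one_mul]

end Schatten

section PowerSums

variable {ι : Type*} [Fintype ι] {q : ℝ} {a b : ι → ℝ}

theorem two_sub_two_mul_cos (x : ℝ) : 2 - 2 * Real.cos x = 4 * Real.sin (x / 2) ^ 2 := by
  rw [show x = 2 * (x / 2) by ring, Real.cos_two_mul, show 2 * (x / 2) / 2 = x / 2 by ring]
  linarith [Real.sin_sq_add_cos_sq (x / 2)]

theorem sum_sq_rpow_eq_of_sum_cos (hq : 0 < q)
    (h : ∀ t : ℝ, ∑ i, (2 - 2 * Real.cos (t * a i)) ^ q = ∑ i, (2 - 2 * Real.cos (t * b i)) ^ q) :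
    ∑ i, (a i ^ 2) ^ q = ∑ i, (b i ^ 2) ^ q := by
  have key : ∀ (c : ι → ℝ) (t : ℝ), ∑ i, (2 - 2 * Real.cos (t * c i)) ^ q =
      (t ^ 2) ^ q * ∑ i, (c i ^ 2 * Real.sinc (t * c i / 2) ^ 2) ^ q := by
    intro c t
    rw [Finset.mul_sum]
    refine Finset.sum_congr rfl fun i _ => ?_
    rw [← Real.mul_rpow (by positivity) (by positivity), two_sub_two_mul_cos]
    congr 1
    by_cases h0 : t * c i / 2 = 0
    · have : t * c i = 0 := by linarith
      rw [h0, Real.sin_zero, ← mul_assoc, ← mul_pow, this]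
      simp
    · rw [Real.sinc_of_ne_zero h0]
      have h1 : t ≠ 0 := by rintro rfl; simp at h0
      have h2 : c i ≠ 0 := by intro h; simp [h] at h0
      field_simp
      norm_num
  have hcont : ∀ c : ι → ℝ,
      Continuous fun t : ℝ => ∑ i, (c i ^ 2 * Real.sinc (t * c i / 2) ^ 2) ^ q := by
    intro c
    refine continuous_finsetSum _ fun i _ => Continuous.rpow_const ?_ fun _ => Or.inr hq.le
    have := Real.continuous_sinc
    fun_prop
  have heq := (hcont a).ext_on (dense_compl_singleton (0 : ℝ)) (hcont b) fun t ht => by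
    have ht' : (t ^ 2) ^ q ≠ 0 := by
      have : t ≠ 0 := ht
      positivity
    have := h t
    rw [key, key] at this
    exact mul_left_cancel₀ ht' this
  simpa using congrFun heq 0

theorem sin_sq_pi_mul_abs (x : ℝ) :
    Real.sin (Real.pi * x / 2) ^ 2 = Real.sin (Real.pi / 2 * |x|) ^ 2 := by
  rcases abs_choice x with h | h
  · rw [h, mul_div_right_comm]
  · rw [h, mul_neg, Real.sin_neg, neg_sq, mul_div_right_comm]

theorem sq_le_sin_sq {x : ℝ} (hx : x ^ 2 ≤ 1) : x ^ 2 ≤ Real.sin (Real.pi * x / 2) ^ 2 := by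
  rw [sin_sq_pi_mul_abs, ← sq_abs]
  have h1 : |x| ≤ 1 := (sq_le_one_iff_abs_le_one x).1 hx
  have h := Real.mul_le_sin (x := Real.pi / 2 * |x|) (by positivity)
    (by nlinarith [Real.pi_pos])
  rw [← mul_assoc, div_mul_div_comm, mul_comm 2, div_self (by positivity), one_mul] at h
  gcongr

theorem sq_eq_zero_or_one_of_sin_sq {x : ℝ} (hx : x ^ 2 ≤ 1)
    (h : x ^ 2 = Real.sin (Real.pi * x / 2) ^ 2) : x = 0 ∨ x ^ 2 = 1 := by
  by_contra! hne
  have h0 : 0 < |x| := abs_pos.2 hne.1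
  have h1 : |x| < 1 := (sq_lt_one_iff_abs_lt_one x).1 (lt_of_le_of_ne hx hne.2)
  have hlt := Real.mul_lt_sin (x := Real.pi / 2 * |x|) (by positivity)
    (by nlinarith [Real.pi_pos])
  rw [← mul_assoc, div_mul_div_comm, mul_comm 2, div_self (by positivity), one_mul] at hlt
  rw [sin_sq_pi_mul_abs, ← sq_abs] at h
  nlinarith

theorem exists_sq_eq_one_of_sum_eq (hq : 0 < q) (h1 : ∑ i, (b i ^ 2) ^ q = 1)
    (h2 : ∑ i, (2 - 2 * Real.cos (Real.pi * b i)) ^ q = 4 ^ q) :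
    ∃ j, b j ^ 2 = 1 ∧ ∀ i, i ≠ j → b i = 0 := by
  have hle : ∀ i, b i ^ 2 ≤ 1 := by
    intro i
    have : (b i ^ 2) ^ q ≤ 1 := h1 ▸ Finset.single_le_sum (f := fun i => (b i ^ 2) ^ q)
      (fun i _ => by positivity) (Finset.mem_univ i)
    by_contra! hlt
    exact absurd this (not_le.2 (Real.one_lt_rpow hlt hq))
  have h3 : ∑ i, (b i ^ 2) ^ q = ∑ i, (Real.sin (Real.pi * b i / 2) ^ 2) ^ q := by
    have h4 : (4 : ℝ) ^ q ≠ 0 := by positivity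
    apply mul_left_cancel₀ h4
    rw [h1, mul_one, Finset.mul_sum]
    refine h2.symm.trans (Finset.sum_congr rfl fun i _ => ?_)
    rw [two_sub_two_mul_cos, Real.mul_rpow (by norm_num) (by positivity)]
  have h5 := (Finset.sum_eq_sum_iff_of_le fun i _ =>
    Real.rpow_le_rpow (sq_nonneg (b i)) (sq_le_sin_sq (hle i)) hq.le).1 h3
  have h6 : ∀ i, b i = 0 ∨ b i ^ 2 = 1 := fun i => by
    refine sq_eq_zero_or_one_of_sin_sq (hle i) ?_
    exact (Real.rpow_left_inj (by positivity) (by positivity) hq.ne').1 (h5 i (Finset.mem_univ i))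
  have hex : ∃ j, b j ^ 2 = 1 := by
    by_contra! hno
    have h0 : ∀ i, b i = 0 := fun i => (h6 i).resolve_right (hno i)
    simp [h0, hq.ne'] at h1
  classical
  obtain ⟨j, hj⟩ := hex
  refine ⟨j, hj, fun i hij => (h6 i).resolve_right fun hi => ?_⟩
  have h7 : ∑ k ∈ {i, j}, (b k ^ 2) ^ q ≤ ∑ k, (b k ^ 2) ^ q :=
    Finset.sum_le_sum_of_subset_of_nonneg (Finset.subset_univ _) fun k _ _ => by positivity
  rw [Finset.sum_pair hij, hi, hj, h1, Real.one_rpow] at h7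
  norm_num at h7

end PowerSums

section Spectra

variable {m : Type*} [Fintype m] [DecidableEq m]

theorem diagonal_eigenvalues_eq {A Q : Matrix m m ℂ} (hQ : Q ∈ unitaryGroup m ℂ) {D : Matrix m m ℂ}
    (h : A = Q * D * Qᴴ) : D = Qᴴ * A * Q := by
  have hQl : Qᴴ * Q = 1 := mem_unitaryGroup_iff'.1 hQ
  calc D = (Qᴴ * Q) * D * (Qᴴ * Q) := by rw [hQl, Matrix.one_mul, Matrix.mul_one]
    _ = Qᴴ * A * Q := by rw [h]; simp only [Matrix.mul_assoc]

theorem conj_unitary_mul {Q : Matrix m m ℂ} (hQ : Q ∈ unitaryGroup m ℂ) (A B : Matrix m m ℂ) :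
    (Qᴴ * A * Q) * (Qᴴ * B * Q) = Qᴴ * (A * B) * Q := by
  have hQr : Q * Qᴴ = 1 := mem_unitaryGroup_iff.1 hQ
  calc (Qᴴ * A * Q) * (Qᴴ * B * Q) = Qᴴ * A * (Q * Qᴴ) * B * Q := by simp only [Matrix.mul_assoc]
    _ = _ := by rw [hQr, Matrix.mul_one]; simp only [Matrix.mul_assoc]

theorem Matrix.IsHermitian.eigenvalues_sq_eq_self {A : Matrix m m ℂ} (hA : A.IsHermitian)
    (h : A * A = A) (i : m) : hA.eigenvalues i = 0 ∨ hA.eigenvalues i = 1 := by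
  obtain ⟨Q, hQ, hAQ⟩ := hA.exists_unitary_diagonal
  have hD := diagonal_eigenvalues_eq hQ hAQ
  have h2 := conj_unitary_mul hQ A A
  rw [h, ← hD, diagonal_mul_diagonal] at h2
  have h3 := congrFun (diagonal_injective h2) i
  have h4 : hA.eigenvalues i * hA.eigenvalues i = hA.eigenvalues i := by exact_mod_cast h3
  rcases eq_or_ne (hA.eigenvalues i) 0 with h0 | h0
  · exact Or.inl h0
  · exact Or.inr (mul_left_cancel₀ h0 (by rw [h4, mul_one]))

theorem Matrix.IsHermitian.eigenvalues_cube_eq {A : Matrix m m ℂ} (hA : A.IsHermitian) {c : ℝ}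
    (h : A * A * A = c • A) (i : m) : hA.eigenvalues i ^ 3 = c * hA.eigenvalues i := by
  obtain ⟨Q, hQ, hAQ⟩ := hA.exists_unitary_diagonal
  have hD := diagonal_eigenvalues_eq hQ hAQ
  have h2 := conj_unitary_mul hQ (A * A) A
  rw [h, ← conj_unitary_mul hQ A A, Matrix.mul_smul, Matrix.smul_mul, ← hD, diagonal_mul_diagonal,
    diagonal_mul_diagonal, ← diagonal_smul] at h2
  have h3 := congrFun (diagonal_injective h2) i
  simp only [Pi.smul_apply, Complex.real_smul] at h3
  have h4 : hA.eigenvalues i * hA.eigenvalues i * hA.eigenvalues i = c * hA.eigenvalues i := by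
    exact_mod_cast h3
  linear_combination h4

theorem Matrix.IsHermitian.trace_mul_self {A : Matrix m m ℂ} (hA : A.IsHermitian) :
    trace (A * A) = ((∑ i, hA.eigenvalues i ^ 2 : ℝ) : ℂ) := by
  obtain ⟨Q, hQ, hAQ⟩ := hA.exists_unitary_diagonal
  have hD := diagonal_eigenvalues_eq hQ hAQ
  have hQr : Q * Qᴴ = 1 := mem_unitaryGroup_iff.1 hQ
  have h2 := congrArg trace (conj_unitary_mul hQ A A)
  rw [trace_mul_comm (Qᴴ * (A * A)), ← Matrix.mul_assoc Q Qᴴ, hQr, Matrix.one_mul, ← hD,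
    diagonal_mul_diagonal, trace_diagonal] at h2
  rw [← h2]
  push_cast
  exact Finset.sum_congr rfl fun i _ => (sq _).symm

theorem Matrix.IsHermitian.sum_sq_rpow_eigenvalues {A : Matrix m m ℂ} (hA : A.IsHermitian) {c : ℝ}
    (h3 : A * A * A = c • A) (htr : trace (A * A) = ((2 * c : ℝ) : ℂ)) {q : ℝ} (hq : 0 < q) :
    ∑ i, (hA.eigenvalues i ^ 2) ^ q = 2 * c ^ q := by
  have hcube := hA.eigenvalues_cube_eq h3
  rw [hA.trace_mul_self] at htr
  have hsum : ∑ i, hA.eigenvalues i ^ 2 = 2 * c := Complex.ofReal_injective htr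
  have hsq : ∀ i, hA.eigenvalues i = 0 ∨ hA.eigenvalues i ^ 2 = c := by
    intro i
    rcases eq_or_ne (hA.eigenvalues i) 0 with h0 | h0
    · exact Or.inl h0
    · exact Or.inr (mul_right_cancel₀ h0 (by rw [← hcube]; ring))
  by_cases hc : c = 0
  · have h0 : ∀ i, hA.eigenvalues i = 0 := fun i => (hsq i).elim id fun h => by
      rw [hc] at h
      exact pow_eq_zero_iff two_ne_zero |>.1 h
    simp [h0, hc, hq.ne']
  · have hterm : ∀ i, (hA.eigenvalues i ^ 2) ^ q = hA.eigenvalues i ^ 2 * (c ^ q / c) := by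
      intro i
      rcases hsq i with h | h
      · simp [h, hq.ne']
      · rw [h]
        field_simp
    rw [Finset.sum_congr rfl fun i _ => hterm i, ← Finset.sum_mul, hsum]
    field_simp

theorem rankOneSA_mul_rankOneSA_mul_rankOneSA (x y : m → ℂ) :
    (rankOneSA x : Matrix m m ℂ) * (rankOneSA y : Matrix m m ℂ) * (rankOneSA x : Matrix m m ℂ) =
      (‖star x ⬝ᵥ y‖ ^ 2 : ℝ) • (rankOneSA x : Matrix m m ℂ) := by
  have h : (star y ⬝ᵥ x) = star (star x ⬝ᵥ y) := by
    rw [star_dotProduct]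
  change vecMulVec x (star x) * vecMulVec y (star y) * vecMulVec x (star x) =
    (‖star x ⬝ᵥ y‖ ^ 2 : ℝ) • vecMulVec x (star x)
  rw [vecMulVec_mul_vecMulVec, vecMulVec_mul_vecMulVec, smul_dotProduct, h, smul_eq_mul,
    Complex.star_def, Complex.mul_conj, Complex.normSq_eq_norm_sq, vecMulVec_smul]
  ext i j
  simp

theorem rankOneSA_mul_self {x : m → ℂ} (hx : star x ⬝ᵥ x = 1) :
    (rankOneSA x : Matrix m m ℂ) * (rankOneSA x : Matrix m m ℂ) = rankOneSA x := by
  change vecMulVec x (star x) * vecMulVec x (star x) = vecMulVec x (star x)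
  rw [vecMulVec_mul_vecMulVec, hx, one_smul]

theorem trace_rankOneSA {x : m → ℂ} (hx : star x ⬝ᵥ x = 1) :
    trace (rankOneSA x : Matrix m m ℂ) = 1 := by
  change trace (vecMulVec x (star x)) = 1
  rw [trace_vecMulVec, dotProduct_comm, hx]

theorem sum_eigenvalues_rankOneSA {x : m → ℂ} (hx : star x ⬝ᵥ x = 1)
    (hH : (rankOneSA x : Matrix m m ℂ).IsHermitian) {φ : ℝ → ℝ} (hφ : φ 0 = 0) :
    ∑ i, φ (hH.eigenvalues i) = φ 1 := by
  have h01 := hH.eigenvalues_sq_eq_self (rankOneSA_mul_self hx)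
  have htr := hH.trace_eq_sum_eigenvalues
  rw [trace_rankOneSA hx] at htr
  have hsum : ∑ i, hH.eigenvalues i = 1 := by
    apply Complex.ofReal_injective
    push_cast
    exact htr.symm
  have hterm : ∀ i, φ (hH.eigenvalues i) = hH.eigenvalues i * φ 1 := by
    intro i
    rcases h01 i with h | h <;> simp [h, hφ]
  rw [Finset.sum_congr rfl fun i _ => hterm i, ← Finset.sum_mul, hsum, one_mul]

theorem rankOneSA_sub_cube {x y : m → ℂ} (hx : star x ⬝ᵥ x = 1) (hy : star y ⬝ᵥ y = 1) :
    ((rankOneSA x - rankOneSA y : selfAdjoint (Matrix m m ℂ)) : Matrix m m ℂ) *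
        ((rankOneSA x - rankOneSA y : selfAdjoint (Matrix m m ℂ)) : Matrix m m ℂ) *
        ((rankOneSA x - rankOneSA y : selfAdjoint (Matrix m m ℂ)) : Matrix m m ℂ) =
      (1 - ‖star x ⬝ᵥ y‖ ^ 2) •
        ((rankOneSA x - rankOneSA y : selfAdjoint (Matrix m m ℂ)) : Matrix m m ℂ) := by
  have hxy := rankOneSA_mul_rankOneSA_mul_rankOneSA x y
  have hyx := rankOneSA_mul_rankOneSA_mul_rankOneSA y x
  have h1 : ‖star y ⬝ᵥ x‖ = ‖star x ⬝ᵥ y‖ := by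
    rw [← norm_star, ← star_dotProduct]
  have hxx := rankOneSA_mul_self hx
  have hyy := rankOneSA_mul_self hy
  rw [h1] at hyx
  rw [AddSubgroup.coe_sub, smul_sub, sub_smul, sub_smul, ← hxy, ← hyx, one_smul, one_smul]
  generalize (rankOneSA x : Matrix m m ℂ) = P at *
  generalize (rankOneSA y : Matrix m m ℂ) = R at *
  have e : (P - R) * (P - R) * (P - R) = P * P * P - P * P * R - P * R * P + P * (R * R) -
      R * (P * P) + R * P * R + R * R * P - R * R * R := by
    simp only [sub_mul, mul_sub, mul_assoc]
    abel
  rw [e]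
  simp only [hxx, hyy]
  abel

theorem trace_rankOneSA_sub_mul_self {x y : m → ℂ} (hx : star x ⬝ᵥ x = 1)
    (hy : star y ⬝ᵥ y = 1) :
    trace (((rankOneSA x - rankOneSA y : selfAdjoint (Matrix m m ℂ)) : Matrix m m ℂ) *
        ((rankOneSA x - rankOneSA y : selfAdjoint (Matrix m m ℂ)) : Matrix m m ℂ)) =
      ((2 * (1 - ‖star x ⬝ᵥ y‖ ^ 2) : ℝ) : ℂ) := by
  rw [AddSubgroup.coe_sub, sub_mul, mul_sub, mul_sub, rankOneSA_mul_self hx, rankOneSA_mul_self hy,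
    trace_sub, trace_sub, trace_sub, trace_rankOneSA hx, trace_rankOneSA hy,
    trace_mul_comm (rankOneSA y : Matrix m m ℂ), trace_rankOneSA_mul_rankOneSA]
  push_cast
  ring

end Spectra

section Generator

variable {m : Type*} [Fintype m] [DecidableEq m]
open scoped Matrix.Norms.L2Operator
open selfAdjoint

theorem norm_dotProduct_sq_le_one {x y : m → ℂ} (hx : star x ⬝ᵥ x = 1) (hy : star y ⬝ᵥ y = 1) :
    0 ≤ 1 - ‖star x ⬝ᵥ y‖ ^ 2 := by
  have h := trace_rankOneSA_sub_mul_self hx hy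
  have hH : ((rankOneSA x - rankOneSA y : selfAdjoint (Matrix m m ℂ)) : Matrix m m ℂ).IsHermitian :=
    (rankOneSA x - rankOneSA y).2
  rw [hH.trace_mul_self] at h
  have h' := Complex.ofReal_injective h
  have : 0 ≤ ∑ i, hH.eigenvalues i ^ 2 := Finset.sum_nonneg fun i _ => sq_nonneg _
  linarith

variable {p : ℝ} {f : selfAdjoint (Matrix m m ℂ) →L[ℝ] selfAdjoint (Matrix m m ℂ)}

theorem sum_cos_eigenvalues_eq
    (hf : ∀ H, schatten p (1 - (expUnitary (f H) : Matrix m m ℂ)) =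
      schatten p (1 - (expUnitary H : Matrix m m ℂ)))
    {H : selfAdjoint (Matrix m m ℂ)} (hH : (H : Matrix m m ℂ).IsHermitian)
    (hfH : (f H : Matrix m m ℂ).IsHermitian) (t : ℝ) :
    ∑ i, (2 - 2 * Real.cos (t * hH.eigenvalues i)) ^ (p / 2) =
      ∑ i, (2 - 2 * Real.cos (t * hfH.eigenvalues i)) ^ (p / 2) := by
  have key : ∀ {K : selfAdjoint (Matrix m m ℂ)} (hK : (K : Matrix m m ℂ).IsHermitian),
      schatten p (1 - (expUnitary (t • K) : Matrix m m ℂ)) =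
        ∑ i, (2 - 2 * Real.cos (t * hK.eigenvalues i)) ^ (p / 2) := by
    intro K hK
    obtain ⟨Q, hQ, hKQ⟩ := hK.exists_unitary_diagonal
    refine schatten_one_sub_expUnitary p hQ (μ := fun i => t * hK.eigenvalues i) ?_
    have e : (diagonal fun i => ((t * hK.eigenvalues i : ℝ) : ℂ)) =
        t • diagonal fun i => (hK.eigenvalues i : ℂ) := by
      rw [← diagonal_smul]
      congr 1
      ext i
      simp
    rw [e, Matrix.mul_smul, Matrix.smul_mul, ← hKQ, selfAdjoint.val_smul]
  rw [← key hH, ← key hfH, ← map_smul, hf]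

theorem exists_map_rankOneSA_eq_smul (hp : 0 < p)
    (hf : ∀ H, schatten p (1 - (expUnitary (f H) : Matrix m m ℂ)) =
      schatten p (1 - (expUnitary H : Matrix m m ℂ)))
    {x : m → ℂ} (hx : star x ⬝ᵥ x = 1) :
    ∃ (ε : ℝ) (y : m → ℂ), ε ^ 2 = 1 ∧ star y ⬝ᵥ y = 1 ∧ f (rankOneSA x) = ε • rankOneSA y := by
  have hq : 0 < p / 2 := by positivity
  have hH : (rankOneSA x : Matrix m m ℂ).IsHermitian := (rankOneSA x).2
  have hfH : (f (rankOneSA x) : Matrix m m ℂ).IsHermitian := (f (rankOneSA x)).2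
  have hcos := sum_cos_eigenvalues_eq hf hH hfH
  have h1 : ∑ i, (hfH.eigenvalues i ^ 2) ^ (p / 2) = 1 := by
    rw [← sum_sq_rpow_eq_of_sum_cos hq hcos,
      sum_eigenvalues_rankOneSA hx hH (φ := fun s => (s ^ 2) ^ (p / 2)) (by simp [hq.ne'])]
    simp
  have h2 : ∑ i, (2 - 2 * Real.cos (Real.pi * hfH.eigenvalues i)) ^ (p / 2) = 4 ^ (p / 2) := by
    rw [← hcos, sum_eigenvalues_rankOneSA hx hH
      (φ := fun s => (2 - 2 * Real.cos (Real.pi * s)) ^ (p / 2)) (by simp [hp.ne'])]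
    norm_num
  obtain ⟨j, hj, hne⟩ := exists_sq_eq_one_of_sum_eq hq h1 h2
  obtain ⟨v, hv, hsum⟩ := exists_eq_sum_eigenvalues_smul_rankOneSA hfH
  refine ⟨hfH.eigenvalues j, v j, hj, hv j, ?_⟩
  rw [Finset.sum_eq_single j (fun i _ hij => by rw [hne i hij, zero_smul]) (by simp)] at hsum
  exact hsum

theorem exists_sign_map_rankOneSA [Nonempty m] (hp : 0 < p)
    (hf : ∀ H, schatten p (1 - (expUnitary (f H) : Matrix m m ℂ)) =
      schatten p (1 - (expUnitary H : Matrix m m ℂ))) :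
    ∃ ε : ℝ, (ε = 1 ∨ ε = -1) ∧ ∀ x : m → ℂ, star x ⬝ᵥ x = 1 →
      ∃ y : m → ℂ, star y ⬝ᵥ y = 1 ∧ f (rankOneSA x) = ε • rankOneSA y := by
  let s : EuclideanSpace ℂ m → ℝ := fun x => (trace (f (rankOneSA x.ofLp) : Matrix m m ℂ)).re
  have hs : ∀ {x : m → ℂ} {ε : ℝ} {y : m → ℂ}, star y ⬝ᵥ y = 1 →
      f (rankOneSA x) = ε • rankOneSA y → s (WithLp.toLp 2 x) = ε := by
    intro x ε y hy hxy
    change (trace (f (rankOneSA x) : Matrix m m ℂ)).re = ε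
    rw [hxy, selfAdjoint.val_smul, trace_smul, trace_rankOneSA hy]
    simp
  have hunit : ∀ x : EuclideanSpace ℂ m, x ∈ Metric.sphere (0 : EuclideanSpace ℂ m) 1 ↔
      star x.ofLp ⬝ᵥ x.ofLp = 1 := by
    intro x
    have h := inner_self_eq_norm_sq_to_K (𝕜 := ℂ) x
    rw [EuclideanSpace.inner_eq_star_dotProduct, dotProduct_comm] at h
    rw [h, mem_sphere_zero_iff_norm]
    constructor
    · intro h1
      simp [h1]
    · intro h1
      have h2 : ‖x‖ ^ 2 = 1 := by simpa [← Complex.ofReal_pow] using congrArg Complex.re h1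
      exact (pow_eq_one_iff_of_nonneg (norm_nonneg x) two_ne_zero).1 h2
  have hcont : Continuous s := by
    have hR : Continuous fun x : EuclideanSpace ℂ m => rankOneSA x.ofLp := by
      refine Continuous.subtype_mk (f := fun x : EuclideanSpace ℂ m =>
        vecMulVec x.ofLp (star x.ofLp)) ?_ _
      refine continuous_matrix fun i j => ?_
      simp only [vecMulVec_apply, Pi.star_apply]
      fun_prop
    have hf' : Continuous fun x : EuclideanSpace ℂ m => (f (rankOneSA x.ofLp) : Matrix m m ℂ) :=
      continuous_subtype_val.comp (f.continuous.comp hR)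
    exact Complex.continuous_re.comp hf'.matrix_trace
  have hrank : 1 < Module.rank ℝ (EuclideanSpace ℂ m) := by
    rw [← Module.finrank_eq_rank, ← Module.finrank_mul_finrank ℝ ℂ (EuclideanSpace ℂ m),
      Complex.finrank_real_complex, finrank_euclideanSpace]
    have : 0 < Fintype.card m := Fintype.card_pos
    exact_mod_cast (by omega : 1 < 2 * Fintype.card m)
  have hsq : Set.EqOn (s ^ 2) 1 (Metric.sphere (0 : EuclideanSpace ℂ m) 1) := by
    intro x hx
    obtain ⟨ε, y, hε, hy, hxy⟩ := exists_map_rankOneSA_eq_smul hp hf ((hunit x).1 hx)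
    have := hs hy hxy
    rw [Pi.pow_apply, Pi.one_apply]
    rw [WithLp.toLp_ofLp] at this
    rw [this, hε]
  have hpm := (isPreconnected_sphere hrank (0 : EuclideanSpace ℂ m) 1).eq_one_or_eq_neg_one_of_sq_eq
    hcont.continuousOn hsq
  have main : ∀ ε : ℝ, Set.EqOn s (fun _ => ε) (Metric.sphere (0 : EuclideanSpace ℂ m) 1) →
      ∀ x : m → ℂ, star x ⬝ᵥ x = 1 →
        ∃ y : m → ℂ, star y ⬝ᵥ y = 1 ∧ f (rankOneSA x) = ε • rankOneSA y := by
    intro ε hε x hx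
    obtain ⟨ε', y, -, hy, hxy⟩ := exists_map_rankOneSA_eq_smul hp hf hx
    have h1 : ε = ε' := (hε ((hunit (WithLp.toLp 2 x)).2 hx)).symm.trans (hs hy hxy)
    exact ⟨y, hy, by rw [hxy, h1]⟩
  rcases hpm with h | h
  · exact ⟨1, Or.inl rfl, main 1 h⟩
  · exact ⟨-1, Or.inr rfl, main (-1) h⟩

theorem exists_sign_unitary_conj [Nonempty m] (hp : 0 < p)
    (hf : ∀ H, schatten p (1 - (expUnitary (f H) : Matrix m m ℂ)) =
      schatten p (1 - (expUnitary H : Matrix m m ℂ))) :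
    ∃ ε : ℝ, (ε = 1 ∨ ε = -1) ∧ ∃ V ∈ unitaryGroup m ℂ,
      (∀ H, (f H : Matrix m m ℂ) = ε • (V * (H : Matrix m m ℂ) * Vᴴ)) ∨
      (∀ H, (f H : Matrix m m ℂ) = ε • (V * (H : Matrix m m ℂ)ᵀ * Vᴴ)) := by
  have hq : 0 < p / 2 := by positivity
  obtain ⟨ε, hε, hR⟩ := exists_sign_map_rankOneSA hp hf
  have hεε : ε * ε = 1 := by rcases hε with rfl | rfl <;> norm_num
  have hg1 : ∀ x : m → ℂ, star x ⬝ᵥ x = 1 → ∃ y, star y ⬝ᵥ y = 1 ∧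
      (ε • (f : selfAdjoint (Matrix m m ℂ) →ₗ[ℝ] selfAdjoint (Matrix m m ℂ))) (rankOneSA x) =
        rankOneSA y := by
    intro x hx
    obtain ⟨y, hy, hxy⟩ := hR x hx
    refine ⟨y, hy, ?_⟩
    rw [LinearMap.smul_apply, ContinuousLinearMap.coe_coe, hxy, smul_smul, hεε, one_smul]
  obtain ⟨V, hV, h⟩ := exists_unitary_conj_or_transpose
    (ε • (f : selfAdjoint (Matrix m m ℂ) →ₗ[ℝ] selfAdjoint (Matrix m m ℂ))) hg1 (by
      intro x x' hx hx'
      obtain ⟨y, hy, hxy⟩ := hR x hx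
      obtain ⟨y', hy', hxy'⟩ := hR x' hx'
      simp only [LinearMap.smul_apply, ContinuousLinearMap.coe_coe, hxy, hxy', smul_smul, hεε,
        one_smul]
      have hH : ((rankOneSA x - rankOneSA x' : selfAdjoint (Matrix m m ℂ)) :
          Matrix m m ℂ).IsHermitian := (rankOneSA x - rankOneSA x').2
      have hfH : (f (rankOneSA x - rankOneSA x') : Matrix m m ℂ).IsHermitian :=
        (f (rankOneSA x - rankOneSA x')).2
      have hsum := sum_sq_rpow_eq_of_sum_cos hq (sum_cos_eigenvalues_eq hf hH hfH)
      have hmap : (f (rankOneSA x - rankOneSA x') : Matrix m m ℂ) =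
          ε • ((rankOneSA y - rankOneSA y' : selfAdjoint (Matrix m m ℂ)) : Matrix m m ℂ) := by
        rw [map_sub, hxy, hxy', ← smul_sub, selfAdjoint.val_smul]
      rw [hH.sum_sq_rpow_eigenvalues (rankOneSA_sub_cube hx hx')
          (trace_rankOneSA_sub_mul_self hx hx') hq,
        hfH.sum_sq_rpow_eigenvalues (c := 1 - ‖star y ⬝ᵥ y'‖ ^ 2)
          (by
            rw [hmap, smul_mul_smul_comm, hεε, one_smul, Matrix.mul_smul,
              rankOneSA_sub_cube hy hy', smul_comm])
          (by
            rw [hmap, smul_mul_smul_comm, hεε, one_smul, trace_rankOneSA_sub_mul_self hy hy'])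
          hq] at hsum
      have h1 := (Real.rpow_left_inj (norm_dotProduct_sq_le_one hx hx')
        (norm_dotProduct_sq_le_one hy hy') hq.ne').1 (mul_left_cancel₀ two_ne_zero hsum)
      rw [trace_rankOneSA_mul_rankOneSA, trace_rankOneSA_mul_rankOneSA]
      congr 1
      linarith)
  have hback : ∀ H, (f H : Matrix m m ℂ) = ε • ((ε • (f : selfAdjoint (Matrix m m ℂ) →ₗ[ℝ]
      selfAdjoint (Matrix m m ℂ))) H : selfAdjoint (Matrix m m ℂ)).1 := by
    intro H
    rw [LinearMap.smul_apply, ContinuousLinearMap.coe_coe, selfAdjoint.val_smul, smul_smul, hεε,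
      one_smul]
  refine ⟨ε, hε, V, hV, ?_⟩
  rcases h with h | h
  · exact Or.inl fun H => by rw [hback, h]
  · exact Or.inr fun H => by rw [hback, h]

end Generator

section Generator

variable {m : Type*} [Fintype m] [DecidableEq m]
open scoped Matrix.Norms.L2Operator
open selfAdjoint

theorem coe_expUnitary_transpose (H : selfAdjoint (Matrix m m ℂ)) :
    (expUnitary H : Matrix m m ℂ)ᵀ = NormedSpace.exp (Complex.I • (H : Matrix m m ℂ)ᵀ) := by
  rw [expUnitary_coe, ← Matrix.exp_transpose, transpose_smul]

theorem coe_expUnitary_conjTranspose (H : selfAdjoint (Matrix m m ℂ)) :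
    (expUnitary H : Matrix m m ℂ)ᴴ = NormedSpace.exp (-(Complex.I • (H : Matrix m m ℂ))) := by
  have hH : (H : Matrix m m ℂ)ᴴ = H := H.2
  rw [expUnitary_coe, ← Matrix.exp_conjTranspose, conjTranspose_smul, hH]
  simp

theorem coe_expUnitary_map_conj (H : selfAdjoint (Matrix m m ℂ)) :
    (expUnitary H : Matrix m m ℂ).map (starRingEnd ℂ) =
      NormedSpace.exp (-(Complex.I • (H : Matrix m m ℂ)ᵀ)) := by
  have h : (expUnitary H : Matrix m m ℂ).map (starRingEnd ℂ) =
      ((expUnitary H : Matrix m m ℂ)ᴴ)ᵀ := rfl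
  rw [h, coe_expUnitary_conjTranspose, ← Matrix.exp_transpose, transpose_neg, transpose_smul]

/-- Surjective isometries of the unitary group for a Schatten gauge that fix the identity. -/
theorem exists_unitary_conj_of_perm [Nonempty m] {p : ℝ} (hp : 0 < p)
    {φ : Equiv.Perm (unitary (Matrix m m ℂ))}
    (hφ : ∀ u v, schatten p ((φ u : Matrix m m ℂ) - (φ v : Matrix m m ℂ)) =
      schatten p ((u : Matrix m m ℂ) - (v : Matrix m m ℂ))) (h1 : φ 1 = 1) :
    ∃ V ∈ unitaryGroup m ℂ,
      (∀ u, (φ u : Matrix m m ℂ) = V * u * Vᴴ) ∨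
      (∀ u, (φ u : Matrix m m ℂ) = V * (u : Matrix m m ℂ)ᵀ * Vᴴ) ∨
      (∀ u, (φ u : Matrix m m ℂ) = V * (u : Matrix m m ℂ)ᴴ * Vᴴ) ∨
      (∀ u, (φ u : Matrix m m ℂ) = V * (u : Matrix m m ℂ).map (starRingEnd ℂ) * Vᴴ) := by
  obtain ⟨f, hf⟩ := (unitaryGauge_schatten (m := m) hp).exists_generator hφ h1
  have hf' : ∀ H, schatten p (1 - (expUnitary (f H) : Matrix m m ℂ)) =
      schatten p (1 - (expUnitary H : Matrix m m ℂ)) := fun H => by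
    simpa [h1, hf] using hφ 1 (expUnitary H)
  obtain ⟨ε, hε, V, hV, hfV⟩ := exists_sign_unitary_conj hp hf'
  have key : ∀ X : Matrix m m ℂ, Complex.I • ((-1 : ℝ) • (V * X * Vᴴ)) =
      V * (-(Complex.I • X)) * Vᴴ := fun X => by
    rw [neg_one_smul, smul_neg, Matrix.mul_neg, Matrix.neg_mul, Matrix.mul_smul, Matrix.smul_mul]
  have key' : ∀ X : Matrix m m ℂ, Complex.I • ((1 : ℝ) • (V * X * Vᴴ)) =
      V * (Complex.I • X) * Vᴴ := fun X => by
    rw [one_smul, Matrix.mul_smul, Matrix.smul_mul]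
  refine ⟨V, hV, ?_⟩
  rcases hε with rfl | rfl <;> rcases hfV with hfV | hfV
  · left
    intro u
    obtain ⟨H, rfl⟩ := exists_expUnitary_eq u
    rw [hf, expUnitary_coe, hfV, key', exp_unitary_conj hV, expUnitary_coe]
  · right; left
    intro u
    obtain ⟨H, rfl⟩ := exists_expUnitary_eq u
    rw [hf, expUnitary_coe, hfV, key', exp_unitary_conj hV, coe_expUnitary_transpose]
  · right; right; left
    intro u
    obtain ⟨H, rfl⟩ := exists_expUnitary_eq u
    rw [hf, expUnitary_coe, hfV, key, exp_unitary_conj hV, coe_expUnitary_conjTranspose]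
  · right; right; right
    intro u
    obtain ⟨H, rfl⟩ := exists_expUnitary_eq u
    rw [hf, expUnitary_coe, hfV, key, exp_unitary_conj hV, coe_expUnitary_map_conj]

/-- A surjective isometry of the unitary group for a Schatten gauge, left-translated so that it
fixes the identity. -/
theorem exists_perm_fixing_one {p : ℝ} (hp : 0 < p)
    {θ : unitary (Matrix m m ℂ) → unitary (Matrix m m ℂ)} (hsurj : Function.Surjective θ)
    (hθ : ∀ u v, schatten p ((θ u : Matrix m m ℂ) - (θ v : Matrix m m ℂ)) =
      schatten p ((u : Matrix m m ℂ) - (v : Matrix m m ℂ))) :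
    ∃ φ : Equiv.Perm (unitary (Matrix m m ℂ)), (∀ u, θ u = θ 1 * φ u) ∧ φ 1 = 1 ∧
      ∀ u v, schatten p ((φ u : Matrix m m ℂ) - (φ v : Matrix m m ℂ)) =
        schatten p ((u : Matrix m m ℂ) - (v : Matrix m m ℂ)) := by
  have hg := unitaryGauge_schatten (m := m) hp
  have hinj : Function.Injective θ := fun u v huv =>
    hg.eq_of_eq_zero ((hθ u v).symm.trans (by rw [huv]; exact hg.self (θ v)))
  refine ⟨(Equiv.ofBijective θ ⟨hinj, hsurj⟩).trans (Equiv.mulLeft (θ 1)⁻¹), fun u => ?_, ?_,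
    fun u v => ?_⟩
  · exact (mul_inv_cancel_left (θ 1) (θ u)).symm
  · exact inv_mul_cancel (θ 1)
  · exact (hg.mul_left (θ 1)⁻¹ (θ u) (θ v)).trans (hθ u v)

end Generator

/-- Surjective `L^p`-isometries of the unitary group of `Mₙ(ℂ)`: each is of the form
`U ↦ W·φ(U)` or `U ↦ W·φ(U*)` with `φ` a *-automorphism (`U ↦ VUVᴴ`) or a
*-anti-automorphism (`U ↦ VUᵀVᴴ`) of `Mₙ(ℂ)`. -/
theorem stmt0 (n : ℕ) (hn : 1 ≤ n) (p : ℝ) (hp : 0 < p)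
    (ψ : Matrix (Fin n) (Fin n) ℂ → Matrix (Fin n) (Fin n) ℂ)
    (hmem : ∀ U ∈ Matrix.unitaryGroup (Fin n) ℂ, ψ U ∈ Matrix.unitaryGroup (Fin n) ℂ)
    (hsurj : ∀ V ∈ Matrix.unitaryGroup (Fin n) ℂ,
      ∃ U ∈ Matrix.unitaryGroup (Fin n) ℂ, ψ U = V)
    (hiso : ∀ U ∈ Matrix.unitaryGroup (Fin n) ℂ, ∀ V ∈ Matrix.unitaryGroup (Fin n) ℂ,
      lpnorm p (ψ U - ψ V) = lpnorm p (U - V)) :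
    ∃ W ∈ Matrix.unitaryGroup (Fin n) ℂ, ∃ V ∈ Matrix.unitaryGroup (Fin n) ℂ,
      (∀ U ∈ Matrix.unitaryGroup (Fin n) ℂ, ψ U = W * (V * U * Vᴴ)) ∨
      (∀ U ∈ Matrix.unitaryGroup (Fin n) ℂ, ψ U = W * (V * Uᵀ * Vᴴ)) ∨
      (∀ U ∈ Matrix.unitaryGroup (Fin n) ℂ, ψ U = W * (V * Uᴴ * Vᴴ)) ∨
      (∀ U ∈ Matrix.unitaryGroup (Fin n) ℂ, ψ U = W * (V * U.map (starRingEnd ℂ) * Vᴴ)) := by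
  have : Nonempty (Fin n) := ⟨⟨0, hn⟩⟩
  let θ : unitary (Matrix (Fin n) (Fin n) ℂ) → unitary (Matrix (Fin n) (Fin n) ℂ) :=
    fun u => ⟨ψ u, hmem u u.2⟩
  have hθ : Function.Surjective θ := fun v => by
    obtain ⟨U, hU, hUv⟩ := hsurj v v.2
    exact ⟨⟨U, hU⟩, Subtype.ext hUv⟩
  obtain ⟨φ, hθφ, hφ1, hφ⟩ := exists_perm_fixing_one hp hθ fun u v =>
    schatten_eq_of_lpnorm_eq hp (hiso u u.2 v v.2)
  obtain ⟨V, hV, h⟩ := exists_unitary_conj_of_perm hp hφ hφ1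
  have hψ : ∀ U (hU : U ∈ unitaryGroup (Fin n) ℂ), ψ U = ψ 1 * φ ⟨U, hU⟩ := fun U hU =>
    congrArg Subtype.val (hθφ ⟨U, hU⟩)
  refine ⟨ψ 1, hmem 1 (one_mem _), V, hV, ?_⟩
  exact h.imp (fun h U hU => by rw [hψ U hU, h]) fun h =>
    h.imp (fun h U hU => by rw [hψ U hU, h]) fun h =>
    h.imp (fun h U hU => by rw [hψ U hU, h]) fun h U hU => by rw [hψ U hU, h]
end

section
/- Let n ≥ 1, p ∈ (0,∞), and let ψ : 𝒰(Mₙ(ℂ)) → 𝒰(Mₙ(ℂ)) be a surjective L^p-isometry with ψ(I) = I. Then for every unitary U ∈ Mₙ(ℂ): U = Uᴴ if and only if ψ(U) = ψ(U)ᴴ. -/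
open Matrix
open scoped ComplexOrder

open Unitary in
/-- Sums over the eigenvalues of a Hermitian matrix can be computed from any unitary
diagonalization. -/
lemma Matrix.IsHermitian.sum_eigenvalues_eq_of_diagonalization {m : Type*} [Fintype m]
    [DecidableEq m] {B : Matrix m m ℂ} (hB : B.IsHermitian) (W : Matrix.unitaryGroup m ℂ)
    (d : m → ℝ) (hd : B = conjStarAlgAut ℂ _ W (diagonal (RCLike.ofReal ∘ d))) (f : ℝ → ℝ) :
    ∑ i, f (hB.eigenvalues i) = ∑ i, f (d i) := by
  have hroots : B.charpoly.roots = Multiset.map (RCLike.ofReal ∘ d) Finset.univ.val := by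
    have hchar : B.charpoly = ∏ i, (Polynomial.X - Polynomial.C ((d i : ℝ) : ℂ)) := by
      rw [hd, conjStarAlgAut_apply, charpoly_mul_comm, ← mul_assoc]
      simp [charpoly_diagonal]
    rw [hchar, Polynomial.roots_prod]
    · simp
    · simp [Finset.prod_ne_zero_iff, Polynomial.X_sub_C_ne_zero]
  rw [hB.roots_charpoly_eq_eigenvalues] at hroots
  have h := congrArg (fun s => (s.map (fun z : ℂ => f z.re)).sum) hroots
  simpa [Multiset.map_map, Function.comp_def] using h

lemma rpow_add_rpow_sub_eq_iff {q t : ℝ} (hq : 0 < q) (hq1 : q ≠ 1) (h0 : 0 ≤ t) (h4 : t ≤ 4) :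
    t ^ q + (4 - t) ^ q = 4 ^ q ↔ t * (4 - t) = 0 := by
  constructor
  · intro h
    by_contra hne
    have ht : 0 < t := lt_of_le_of_ne h0 (by rintro rfl; simp at hne)
    have ht4 : t < 4 := lt_of_le_of_ne h4 (by rintro rfl; simp at hne)
    have e : ∀ x : ℝ, 0 < x → x ^ q = x * x ^ (q - 1) := fun x hx => by
      rw [Real.rpow_sub_one hx.ne']; field_simp
    have hs : 0 < 4 - t := by linarith
    rw [e t ht, e _ hs, e 4 (by norm_num)] at h
    rcases lt_or_gt_of_ne hq1 with hlt | hgt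
    · have h1 := Real.rpow_lt_rpow_of_neg ht ht4 (by linarith : q - 1 < 0)
      have h2 := Real.rpow_lt_rpow_of_neg hs (by linarith : 4 - t < 4) (by linarith : q - 1 < 0)
      nlinarith [mul_lt_mul_of_pos_left h1 ht, mul_lt_mul_of_pos_left h2 hs]
    · have h1 := Real.rpow_lt_rpow h0 ht4 (by linarith : 0 < q - 1)
      have h2 := Real.rpow_lt_rpow hs.le (by linarith : 4 - t < 4) (by linarith : 0 < q - 1)
      nlinarith [mul_lt_mul_of_pos_left h1 ht, mul_lt_mul_of_pos_left h2 hs]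
  · intro h
    rcases mul_eq_zero.1 h with h | h
    · simp [h, Real.zero_rpow hq.ne']
    · have : t = 4 := by linarith
      simp [this, Real.zero_rpow hq.ne']

lemma sum_rpow_add_rpow_sub_eq_iff {m : Type*} [Fintype m] {q : ℝ} (hq : 0 < q) (hq1 : q ≠ 1)
    {a : m → ℝ} (ha : ∀ i, 0 ≤ a i ∧ a i ≤ 4) :
    ∑ i, a i ^ q + ∑ i, (4 - a i) ^ q = ∑ _i : m, (4 : ℝ) ^ q ↔ ∀ i, a i * (4 - a i) = 0 := by
  rw [← Finset.sum_add_distrib]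
  simp_rw [← rpow_add_rpow_sub_eq_iff hq hq1 (ha _).1 (ha _).2]
  rcases lt_or_gt_of_ne hq1 with hlt | hgt
  · rw [eq_comm, Finset.sum_eq_sum_iff_of_le]
    · simp [eq_comm]
    · intro i _
      have := Real.rpow_add_le_add_rpow (ha i).1 (by linarith [(ha i).2] : 0 ≤ 4 - a i) hq.le hlt.le
      simpa using this
  · rw [Finset.sum_eq_sum_iff_of_le]
    · simp
    · intro i _
      have := Real.add_rpow_le_rpow_add (ha i).1 (by linarith [(ha i).2] : 0 ≤ 4 - a i) hgt.le
      simpa using this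

lemma sum_rpow_eq_iff {m : Type*} [Fintype m] {q : ℝ} (hq : 0 < q)
    {a : m → ℝ} (ha : ∀ i, 0 ≤ a i ∧ a i ≤ 4) :
    ∑ i, a i ^ q = ∑ _i : m, (4 : ℝ) ^ q ↔ ∀ i, a i = 4 := by
  rw [Finset.sum_eq_sum_iff_of_le fun i _ => Real.rpow_le_rpow (ha i).1 (ha i).2 hq.le]
  simp only [Finset.mem_univ, true_imp_iff]
  exact forall_congr' fun i => Real.rpow_left_inj (ha i).1 (by norm_num) (ne_of_gt hq)

/-- The unnormalized sum `∑ sᵢ ^ p` over the singular values `sᵢ` of `A`. -/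
noncomputable def singularPowSum {m : Type*} [Fintype m] [DecidableEq m] (p : ℝ)
    (A : Matrix m m ℂ) : ℝ :=
  ∑ i, ((posSemidef_conjTranspose_mul_self A).isHermitian.eigenvalues i) ^ (p / 2)

lemma singularPowSum_eq_of_lpnorm_eq {n : ℕ} (hn : 1 ≤ n) {p : ℝ} (hp : 0 < p)
    {A B : Matrix (Fin n) (Fin n) ℂ} (h : lpnorm p A = lpnorm p B) :
    singularPowSum p A = singularPowSum p B := by
  have hn' : (0 : ℝ) < n := by exact_mod_cast hn
  have hnonneg : ∀ C : Matrix (Fin n) (Fin n) ℂ,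
      0 ≤ singularPowSum p C / (Fintype.card (Fin n) : ℝ) := fun C =>
    div_nonneg (Finset.sum_nonneg fun i _ =>
      Real.rpow_nonneg ((posSemidef_conjTranspose_mul_self C).eigenvalues_nonneg i) _) (by positivity)
  have h' := (Real.rpow_left_inj (hnonneg A) (hnonneg B) (one_div_pos.2 hp).ne').1 h
  rw [Fintype.card_fin] at h'
  field_simp at h'
  exact h'

lemma singularPowSum_two {m : Type*} [Fintype m] [DecidableEq m] (A : Matrix m m ℂ) :
    singularPowSum 2 A = (trace (Aᴴ * A)).re := by
  rw [(posSemidef_conjTranspose_mul_self A).isHermitian.trace_eq_sum_eigenvalues]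
  simp [singularPowSum]

/-- The eigenvalues `a` of `(U - 1)ᴴ * (U - 1)` determine the distances of a unitary `U` from `1`
and from `-1`, whether `U = -1`, and whether `U` is self-adjoint. -/
lemma exists_spectral_data {m : Type*} [Fintype m] [DecidableEq m] (p : ℝ)
    {U : Matrix m m ℂ} (hU : U ∈ unitaryGroup m ℂ) :
    ∃ a : m → ℝ, (∀ i, 0 ≤ a i ∧ a i ≤ 4) ∧
      singularPowSum p (U - 1) = ∑ i, a i ^ (p / 2) ∧
      singularPowSum p (U - -1) = ∑ i, (4 - a i) ^ (p / 2) ∧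
      ((∀ i, a i = 4) ↔ U = -1) ∧ ((∀ i, a i * (4 - a i) = 0) ↔ Uᴴ = U) := by
  have h1 : Uᴴ * U = 1 := mem_unitaryGroup_iff'.1 hU
  have h2 : U * Uᴴ = 1 := mem_unitaryGroup_iff.1 hU
  have hM := (posSemidef_conjTranspose_mul_self (U - 1)).isHermitian
  have hspec := hM.spectral_theorem
  set a := hM.eigenvalues
  set W := hM.eigenvectorUnitary
  set φ := Unitary.conjStarAlgAut ℂ (Matrix m m ℂ) W
  have htwo : (2 : Matrix m m ℂ) = 1 + 1 := one_add_one_eq_two.symm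
  have hfour_add : (4 : Matrix m m ℂ) = 1 + 1 + 1 + 1 := by norm_num
  have hMM : (U - 1)ᴴ * (U - 1) = 2 - (U + Uᴴ) := by
    simp only [conjTranspose_sub, conjTranspose_one]
    simp only [sub_mul, mul_sub, h1, htwo]
    noncomm_ring
  have hNN : (U - -1)ᴴ * (U - -1) = 4 - (U - 1)ᴴ * (U - 1) := by
    rw [hMM]
    simp only [conjTranspose_sub, conjTranspose_one, conjTranspose_neg]
    simp only [sub_mul, mul_sub, h1, htwo, hfour_add]
    noncomm_ring
  have hfour : (4 : Matrix m m ℂ) = diagonal (fun _ => 4) := by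
    rw [← diagonal_ofNat']; rfl
  have hN : (U - -1)ᴴ * (U - -1) = φ (diagonal (RCLike.ofReal ∘ fun i => 4 - a i)) := by
    have : diagonal ((RCLike.ofReal : ℝ → ℂ) ∘ fun i => 4 - a i)
        = 4 - diagonal (RCLike.ofReal ∘ a) := by
      rw [hfour, diagonal_sub]; congr 1; ext i; simp
    rw [hNN, this, map_sub, ← hspec, map_ofNat]
  refine ⟨a, fun i => ⟨(posSemidef_conjTranspose_mul_self (U - 1)).eigenvalues_nonneg i, ?_⟩,
    rfl, ?_, ?_, ?_⟩
  · have h := IsHermitian.sum_eigenvalues_eq_of_diagonalization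
      (posSemidef_conjTranspose_mul_self (U - -1)).isHermitian W _ hN (fun x => max (-x) 0)
    have hzero : ∑ i, max (-(posSemidef_conjTranspose_mul_self
        (U - -1)).isHermitian.eigenvalues i) 0 = 0 :=
      Finset.sum_eq_zero fun j _ => max_eq_right
        (neg_nonpos.2 ((posSemidef_conjTranspose_mul_self (U - -1)).eigenvalues_nonneg j))
    rw [hzero, eq_comm, Finset.sum_eq_zero_iff_of_nonneg fun j _ => le_max_right _ _] at h
    have hi := max_eq_right_iff.1 (h i (Finset.mem_univ i))
    linarith
  · exact IsHermitian.sum_eigenvalues_eq_of_diagonalization _ W _ hN (fun x => x ^ (p / 2))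
  · trans (U - -1)ᴴ * (U - -1) = 0
    · rw [hN, EmbeddingLike.map_eq_zero_iff, diagonal_eq_zero, funext_iff]
      refine forall_congr' fun i => ?_
      simp only [Function.comp_apply, Pi.zero_apply, RCLike.ofReal_eq_zero]
      constructor <;> intro h <;> linarith
    · rw [conjTranspose_mul_self_eq_zero, sub_eq_zero]
  · trans (U - 1)ᴴ * (U - 1) * ((U - -1)ᴴ * (U - -1)) = 0
    · rw [hN, hspec, ← map_mul, EmbeddingLike.map_eq_zero_iff, diagonal_mul_diagonal,
        diagonal_eq_zero, funext_iff]
      refine forall_congr' fun i => ?_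
      simp only [Function.comp_apply, Pi.zero_apply, ← RCLike.ofReal_mul, RCLike.ofReal_eq_zero]
    · have : (U - 1)ᴴ * (U - 1) * ((U - -1)ᴴ * (U - -1)) = (U - Uᴴ)ᴴ * (U - Uᴴ) := by
        rw [hNN, hMM]
        simp only [conjTranspose_sub, conjTranspose_conjTranspose, htwo, hfour_add]
        noncomm_ring
        rw [h1, h2]
        abel
      rw [this, conjTranspose_mul_self_eq_zero, sub_eq_zero, eq_comm]

/-- If unitaries `V'`, `W'` have the same real inner products with each other and with `1` as a
skew-Hermitian unitary `V` and the unitary `3/5 + (4/5) V`, then `W' = 3/5 + (4/5) V'`, and hence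
`V'` is skew-Hermitian. -/
lemma conjTranspose_eq_neg_of_trace_eq {m : Type*} [Fintype m] [DecidableEq m]
    {V V' W' : Matrix m m ℂ} (hV : V ∈ unitaryGroup m ℂ) (hs : Vᴴ = -V)
    (hV' : V' ∈ unitaryGroup m ℂ) (hW' : W' ∈ unitaryGroup m ℂ)
    (h1V : (trace V').re = (trace V).re)
    (h1W : (trace W').re = (trace ((3 / 5 : ℂ) • 1 + (4 / 5 : ℂ) • V)).re)
    (hVW : (trace (V'ᴴ * W')).re = (trace (Vᴴ * ((3 / 5 : ℂ) • 1 + (4 / 5 : ℂ) • V))).re) :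
    V'ᴴ = -V' := by
  have h1 : Vᴴ * V = 1 := mem_unitaryGroup_iff'.1 hV
  have h1' : V'ᴴ * V' = 1 := mem_unitaryGroup_iff'.1 hV'
  have h2' : W'ᴴ * W' = 1 := mem_unitaryGroup_iff'.1 hW'
  have ht : (trace V).re = 0 := by
    have := congrArg (fun M => (trace M).re) hs
    simp [trace_conjTranspose] at this
    linarith
  have hWV : (trace (W'ᴴ * V')).re = (trace (V'ᴴ * W')).re := by
    rw [← conjTranspose_conjTranspose V', ← conjTranspose_mul, trace_conjTranspose]
    simp
  have hVstar : (trace V'ᴴ).re = (trace V').re := by simp [trace_conjTranspose]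
  have hWstar : (trace W'ᴴ).re = (trace W').re := by simp [trace_conjTranspose]
  rw [mul_add, mul_smul_comm, mul_smul_comm, h1, hs] at hVW
  set X := W' - ((3 / 5 : ℂ) • 1 + (4 / 5 : ℂ) • V') with hX
  have hXX : Xᴴ * X = (2 : ℂ) • 1 - (3 / 5 : ℂ) • (W' + W'ᴴ)
      - (4 / 5 : ℂ) • (W'ᴴ * V' + V'ᴴ * W') + (12 / 25 : ℂ) • (V' + V'ᴴ) := by
    simp [hX, mul_add, add_mul, mul_sub, sub_mul, h1', h2']
    module
  have hre : (trace (Xᴴ * X)).re = 0 := by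
    rw [hXX]
    simp [ht] at h1W hVW h1V ⊢
    rw [hWV, hVW, h1W, h1V]
    ring
  have hX0 : X = 0 := by
    have hnn := (posSemidef_conjTranspose_mul_self X).trace_nonneg
    rw [← trace_conjTranspose_mul_self_eq_zero_iff]
    exact Complex.ext hre (Complex.le_def.1 hnn).2.symm
  have hWeq : W' = (3 / 5 : ℂ) • 1 + (4 / 5 : ℂ) • V' := sub_eq_zero.1 hX0
  rw [hWeq] at h2'
  simp [mul_add, add_mul, smul_smul, h1'] at h2'
  have hsum : (12 / 25 : ℂ) • (V'ᴴ + V') = 0 := by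
    rw [← sub_eq_zero.2 h2']
    module
  rw [smul_eq_zero_iff_right (by norm_num)] at hsum
  exact eq_neg_of_add_eq_zero_left hsum

lemma smul_one_add_smul_mem_unitaryGroup {m : Type*} [Fintype m] [DecidableEq m]
    {V : Matrix m m ℂ} (hV : V ∈ unitaryGroup m ℂ) (hs : Vᴴ = -V) :
    (3 / 5 : ℂ) • 1 + (4 / 5 : ℂ) • V ∈ unitaryGroup m ℂ := by
  have h1 : Vᴴ * V = 1 := mem_unitaryGroup_iff'.1 hV
  rw [mem_unitaryGroup_iff', star_eq_conjTranspose]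
  rw [hs] at h1
  have h1' : V * V = -1 := by rw [← h1]; simp
  simp [hs, mul_add, add_mul, smul_smul, h1']
  module

lemma trace_re_eq_zero_of_skew {m : Type*} [Fintype m]
    {U V : Matrix m m ℂ} (hU : Uᴴ = U) (hV : Vᴴ = -V) : (trace (Uᴴ * V)).re = 0 := by
  have h : star (trace (U * V)) = - trace (U * V) := by
    rw [← trace_conjTranspose, conjTranspose_mul, hU, hV, neg_mul, trace_neg, trace_mul_comm]
  have := congrArg Complex.re h
  simp at this
  rw [hU]; linarith

lemma conjTranspose_eq_self_of_trace_re_eq_zero {m : Type*} [Fintype m] [DecidableEq m]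
    {U : Matrix m m ℂ}
    (h : ∀ V ∈ unitaryGroup m ℂ, Vᴴ = -V → (trace (Uᴴ * V)).re = 0) : Uᴴ = U := by
  have hK : (Complex.I • (U - Uᴴ)).IsHermitian := by
    rw [IsHermitian, conjTranspose_smul, conjTranspose_sub, conjTranspose_conjTranspose]
    simp [smul_sub, neg_add_eq_sub]
  have hspec := hK.spectral_theorem
  set d := hK.eigenvalues
  set W := hK.eigenvectorUnitary
  set φ := Unitary.conjStarAlgAut ℂ (Matrix m m ℂ) W with hφ
  let ε : m → ℝ := fun i => if 0 ≤ d i then 1 else -1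
  have hε2 : ∀ i, ε i * ε i = 1 := fun i => by simp only [ε]; split_ifs <;> norm_num
  have hεd : ∀ i, d i * ε i = |d i| := fun i => by
    simp only [ε]; split_ifs with hi
    · simp [abs_of_nonneg hi]
    · simp [abs_of_neg (not_le.1 hi)]
  set S := φ (diagonal (RCLike.ofReal ∘ ε)) with hS
  have hSS : S * S = 1 := by
    rw [hS, ← map_mul, diagonal_mul_diagonal]
    have : (diagonal fun i => ((RCLike.ofReal : ℝ → ℂ) ∘ ε) i * (RCLike.ofReal ∘ ε) i)
        = (1 : Matrix m m ℂ) := by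
      rw [← diagonal_one]; congr 1; ext i
      simp only [Function.comp_apply, ← RCLike.ofReal_mul, hε2]; simp
    rw [this, map_one]
  have hSstar : Sᴴ = S := by
    rw [hS, ← star_eq_conjTranspose, ← map_star, star_eq_conjTranspose, diagonal_conjTranspose]
    congr 2; ext i; simp
  have hIS : (Complex.I • S)ᴴ = -(Complex.I • S) := by
    simp [hSstar]
  have hmem : Complex.I • S ∈ unitaryGroup m ℂ := by
    rw [mem_unitaryGroup_iff', star_eq_conjTranspose, hIS]
    simp [smul_smul, hSS]
  have h0 := h _ hmem hIS
  have hKS : trace ((Complex.I • (U - Uᴴ)) * S) = ∑ i, (|d i| : ℝ) := by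
    rw [hspec, hS, ← map_mul, diagonal_mul_diagonal, hφ, Unitary.conjStarAlgAut_apply,
      trace_mul_comm, ← mul_assoc]
    simp only [Function.comp_apply, ← RCLike.ofReal_mul, hεd]
    simp [trace_diagonal]
  have hconj : (trace (U * S)).re = (trace (Uᴴ * S)).re ∧
      (trace (U * S)).im = - (trace (Uᴴ * S)).im := by
    have : trace (U * S) = star (trace (Uᴴ * S)) := by
      rw [← trace_conjTranspose, conjTranspose_mul, hSstar, conjTranspose_conjTranspose,
        trace_mul_comm]
    rw [this]; simp
  have hre := congrArg Complex.re hKS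
  simp [sub_mul] at hre h0
  have hsum : ∑ i, |d i| = 0 := by
    have : (∑ i, |d i|) = (∑ i, ((|d i| : ℝ) : ℂ)).re := by simp
    linarith [hconj.2]
  have hd : d = 0 := by
    ext i
    have := (Finset.sum_eq_zero_iff_of_nonneg fun i _ => abs_nonneg (d i)).1 hsum i (by simp)
    simpa using this
  have hK0 := hK.eigenvalues_eq_zero_iff.1 hd
  rw [smul_eq_zero_iff_right Complex.I_ne_zero, sub_eq_zero] at hK0
  exact hK0.symm

/-- A surjective `L^p`-isometry of the unitary group fixing `I` preserves
self-adjointness of unitaries in both directions. -/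
theorem stmt5 (n : ℕ) (hn : 1 ≤ n) (p : ℝ) (hp : 0 < p)
    (ψ : Matrix (Fin n) (Fin n) ℂ → Matrix (Fin n) (Fin n) ℂ)
    (hmem : ∀ U ∈ Matrix.unitaryGroup (Fin n) ℂ, ψ U ∈ Matrix.unitaryGroup (Fin n) ℂ)
    (hsurj : ∀ V ∈ Matrix.unitaryGroup (Fin n) ℂ,
      ∃ U ∈ Matrix.unitaryGroup (Fin n) ℂ, ψ U = V)
    (hiso : ∀ U ∈ Matrix.unitaryGroup (Fin n) ℂ, ∀ V ∈ Matrix.unitaryGroup (Fin n) ℂ,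
      lpnorm p (ψ U - ψ V) = lpnorm p (U - V))
    (hone : ψ 1 = 1) :
    ∀ U ∈ Matrix.unitaryGroup (Fin n) ℂ, (Uᴴ = U ↔ (ψ U)ᴴ = ψ U) := by
  have hS := fun U hU V hV => singularPowSum_eq_of_lpnorm_eq hn hp (hiso U hU V hV)
  have h1mem : (1 : Matrix (Fin n) (Fin n) ℂ) ∈ unitaryGroup (Fin n) ℂ := one_mem _
  rcases eq_or_ne p 2 with rfl | hp2
  · have hip : ∀ U ∈ unitaryGroup (Fin n) ℂ, ∀ V ∈ unitaryGroup (Fin n) ℂ,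
        (trace ((ψ U)ᴴ * ψ V)).re = (trace (Uᴴ * V)).re := by
      have key : ∀ U ∈ unitaryGroup (Fin n) ℂ, ∀ V ∈ unitaryGroup (Fin n) ℂ,
          singularPowSum 2 (U - V) = 2 * n - 2 * (trace (Uᴴ * V)).re := by
        intro U hU V hV
        have h1 : Uᴴ * U = 1 := mem_unitaryGroup_iff'.1 hU
        have h2 : Vᴴ * V = 1 := mem_unitaryGroup_iff'.1 hV
        have h3 : (trace (Vᴴ * U)).re = (trace (Uᴴ * V)).re := by
          rw [← conjTranspose_conjTranspose U, ← conjTranspose_mul, trace_conjTranspose]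
          simp
        rw [singularPowSum_two, conjTranspose_sub, sub_mul, mul_sub, mul_sub, h1, h2]
        simp [h3]; ring
      intro U hU V hV
      have h := hS U hU V hV
      rw [key _ (hmem U hU) _ (hmem V hV), key U hU V hV] at h
      linarith
    have htr : ∀ U ∈ unitaryGroup (Fin n) ℂ, (trace (ψ U)).re = (trace U).re := by
      intro U hU
      simpa [hone] using hip 1 h1mem U hU
    have hskew : ∀ V ∈ unitaryGroup (Fin n) ℂ, (Vᴴ = -V ↔ (ψ V)ᴴ = -ψ V) := by
      intro V hV
      constructor <;> intro hs
      · have hW := smul_one_add_smul_mem_unitaryGroup hV hs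
        exact conjTranspose_eq_neg_of_trace_eq hV hs (hmem V hV) (hmem _ hW) (htr V hV)
          (htr _ hW) (hip V hV _ hW)
      · obtain ⟨W, hW, hWeq⟩ := hsurj _ (smul_one_add_smul_mem_unitaryGroup (hmem V hV) hs)
        refine conjTranspose_eq_neg_of_trace_eq (hmem V hV) hs hV hW (htr V hV).symm ?_ ?_
        · rw [← hWeq, htr W hW]
        · rw [← hWeq, hip V hV W hW]
    intro U hU
    constructor <;> intro hs <;> refine conjTranspose_eq_self_of_trace_re_eq_zero fun V hV hVs => ?_
    · obtain ⟨V, hV₀, rfl⟩ := hsurj V hV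
      rw [hip U hU V hV₀]
      exact trace_re_eq_zero_of_skew hs ((hskew V hV₀).2 hVs)
    · rw [← hip U hU V hV]
      exact trace_re_eq_zero_of_skew hs ((hskew V hV).1 hVs)
  · have hq : 0 < p / 2 := by positivity
    have hq1 : p / 2 ≠ 1 := fun h => hp2 (by linarith)
    have hneg : (-1 : Matrix (Fin n) (Fin n) ℂ) ∈ unitaryGroup (Fin n) ℂ := by
      rw [mem_unitaryGroup_iff']; simp
    have hψneg : ψ (-1) = -1 := by
      obtain ⟨a, ha, ha1, -, ha4, -⟩ := exists_spectral_data p hneg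
      obtain ⟨b, hb, hb1, -, hb4, -⟩ := exists_spectral_data p (hmem _ hneg)
      rw [← hb4, ← sum_rpow_eq_iff hq hb, ← hb1]
      have h := hS _ hneg 1 h1mem
      rw [hone] at h
      rw [h, ha1, sum_rpow_eq_iff hq ha, ha4]
    intro U hU
    obtain ⟨a, ha, ha1, ha2, -, ha4⟩ := exists_spectral_data p hU
    obtain ⟨b, hb, hb1, hb2, -, hb4⟩ := exists_spectral_data p (hmem _ hU)
    have h1 := hS U hU 1 h1mem
    have h2 := hS U hU (-1) hneg
    rw [hone] at h1
    rw [hψneg] at h2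
    rw [← ha4, ← hb4, ← sum_rpow_add_rpow_sub_eq_iff hq hq1 ha,
      ← sum_rpow_add_rpow_sub_eq_iff hq hq1 hb, ← ha1, ← ha2, ← hb1, ← hb2, h1, h2]
end

section
/- Let n ≥ 1, p ∈ (0,∞), and let ψ : 𝒰(Mₙ(ℂ)) → 𝒰(Mₙ(ℂ)) be a surjective L^p-isometry with ψ(I) = I. Then there exists a unitary V ∈ Mₙ(ℂ) such that either ψ(U) = V U Vᴴ for every self-adjoint unitary U ∈ Mₙ(ℂ), or ψ(U) = V Uᵀ Vᴴ for every self-adjoint unitary U ∈ Mₙ(ℂ). -/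
open Matrix
open scoped ComplexOrder

section Spectral

variable {m : Type*} [Fintype m] [DecidableEq m]

/-- A polynomial identity satisfied by a Hermitian matrix is satisfied by its eigenvalues, and
conversely. -/
lemma Matrix.IsHermitian.aeval_eq_zero_iff {B : Matrix m m ℂ} (hB : B.IsHermitian)
    (f : Polynomial ℂ) :
    Polynomial.aeval B f = 0 ↔ ∀ i, f.eval (hB.eigenvalues i : ℂ) = 0 := by
  have h : Polynomial.aeval B f = Unitary.conjStarAlgAut ℂ _ hB.eigenvectorUnitary
      (diagonal fun i => f.eval (hB.eigenvalues i : ℂ)) := by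
    conv_lhs => rw [hB.spectral_theorem]
    rw [← StarAlgEquiv.coe_toAlgEquiv, Polynomial.aeval_algHom_apply]
    congr 1
    have := Polynomial.aeval_algHom_apply (diagonalAlgHom ℂ)
      (RCLike.ofReal ∘ hB.eigenvalues : m → ℂ) f
    simpa [Polynomial.aeval_pi_apply, Polynomial.coe_aeval_eq_eval] using this
  rw [h, EmbeddingLike.map_eq_zero_iff, diagonal_eq_zero]
  exact funext_iff

lemma Matrix.IsHermitian.sum_eigenvalues_eq_re_trace {B : Matrix m m ℂ} (hB : B.IsHermitian) :
    ∑ i, hB.eigenvalues i = B.trace.re := by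
  simp [hB.trace_eq_sum_eigenvalues]

lemma Matrix.IsHermitian.sum_eigenvalues_sq_eq_re_trace {B : Matrix m m ℂ} (hB : B.IsHermitian) :
    ∑ i, hB.eigenvalues i ^ 2 = (B * B).trace.re := by
  have h : B * B = Unitary.conjStarAlgAut ℂ _ hB.eigenvectorUnitary
      (diagonal (RCLike.ofReal ∘ hB.eigenvalues) * diagonal (RCLike.ofReal ∘ hB.eigenvalues)) := by
    rw [map_mul, ← hB.spectral_theorem]
  rw [h, Unitary.conjStarAlgAut_apply, trace_mul_cycle, Unitary.coe_star_mul_self, one_mul,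
    diagonal_mul_diagonal, trace_diagonal]
  simp [sq]

lemma Matrix.IsHermitian.sum_eigenvalues_sub {B C : Matrix m m ℂ} (hB : B.IsHermitian)
    (hC : C.IsHermitian) (c : ℝ) (h : C = (c : ℂ) • (1 : Matrix m m ℂ) - B) (g : ℝ → ℝ) :
    ∑ i, g (hC.eigenvalues i) = ∑ i, g (c - hB.eigenvalues i) := by
  have hD : C = Unitary.conjStarAlgAut ℂ _ hB.eigenvectorUnitary
      (diagonal fun i => ((c - hB.eigenvalues i : ℝ) : ℂ)) := by
    have : (diagonal fun i => ((c - hB.eigenvalues i : ℝ) : ℂ)) =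
        (c : ℂ) • (1 : Matrix m m ℂ) - diagonal (RCLike.ofReal ∘ hB.eigenvalues) := by
      rw [smul_one_eq_diagonal, diagonal_sub]
      simp
    rw [this, map_sub, ← hB.spectral_theorem, map_smul, map_one, h]
  have hroots : C.charpoly.roots =
      Multiset.map (fun i => ((c - hB.eigenvalues i : ℝ) : ℂ)) Finset.univ.val := by
    have : C.charpoly = ∏ i, (Polynomial.X - Polynomial.C ((c - hB.eigenvalues i : ℝ) : ℂ)) := by
      rw [hD, Unitary.conjStarAlgAut_apply, charpoly_mul_comm, ← mul_assoc,
        Unitary.coe_star_mul_self, one_mul, charpoly_diagonal]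
    rw [this, Polynomial.roots_prod]
    · simp only [Polynomial.roots_X_sub_C, Multiset.bind_singleton]
    · simp only [ne_eq, Polynomial.X_sub_C_ne_zero, not_false_eq_true, implies_true,
        Finset.prod_ne_zero_iff]
  rw [hC.roots_charpoly_eq_eigenvalues] at hroots
  have := congrArg (fun s => (Multiset.map (fun z : ℂ => g z.re) s).sum) hroots
  simpa [Multiset.map_map, Function.comp_def] using this

/-- The `p`-th power sum of the singular values. -/
noncomputable def powSum (p : ℝ) (A : Matrix m m ℂ) : ℝ :=
  ∑ i, ((posSemidef_conjTranspose_mul_self A).isHermitian.eigenvalues i) ^ (p / 2)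

lemma powSum_nonneg (p : ℝ) (A : Matrix m m ℂ) : 0 ≤ powSum p A :=
  Finset.sum_nonneg fun i _ =>
    Real.rpow_nonneg ((posSemidef_conjTranspose_mul_self A).eigenvalues_nonneg i) _

lemma powSum_eq_of_lpnorm_eq [Nonempty m] {p : ℝ} (hp : 0 < p) {A B : Matrix m m ℂ}
    (h : lpnorm p A = lpnorm p B) : powSum p A = powSum p B := by
  have hc : (0 : ℝ) < Fintype.card m := by exact_mod_cast Fintype.card_pos
  have := Real.rpow_left_injOn (x := 1 / p) (by positivity)
    (div_nonneg (powSum_nonneg p A) hc.le) (div_nonneg (powSum_nonneg p B) hc.le) h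
  exact (div_left_inj' hc.ne').1 this

lemma powSum_eq (p : ℝ) {A B : Matrix m m ℂ} (hB : B.IsHermitian) (h : Aᴴ * A = B) :
    powSum p A = ∑ i, hB.eigenvalues i ^ (p / 2) := by
  subst h
  rfl

end Spectral

section Distance

variable {m : Type*} [Fintype m] [DecidableEq m]

lemma conjTranspose_add_mul_add_eq {U V : Matrix m m ℂ} (hU : Uᴴ * U = 1) (hV : Vᴴ * V = 1) :
    (U + V)ᴴ * (U + V) = ((4 : ℝ) : ℂ) • (1 : Matrix m m ℂ) - (U - V)ᴴ * (U - V) := by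
  simp only [conjTranspose_add, conjTranspose_sub, add_mul, mul_add, sub_mul, mul_sub, hU, hV]
  push_cast
  module

lemma eigenvalues_sub_le_four {U V : Matrix m m ℂ} (hU : Uᴴ * U = 1) (hV : Vᴴ * V = 1) (i : m) :
    (posSemidef_conjTranspose_mul_self (U - V)).isHermitian.eigenvalues i ≤ 4 := by
  have h := IsHermitian.sum_eigenvalues_sub
    (posSemidef_conjTranspose_mul_self (U - V)).isHermitian
    (posSemidef_conjTranspose_mul_self (U + V)).isHermitian 4
    (conjTranspose_add_mul_add_eq hU hV) (fun t => max (-t) 0)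
  have h0 : ∀ i, max (-(posSemidef_conjTranspose_mul_self (U + V)).isHermitian.eigenvalues i) 0
      = 0 := fun i => max_eq_right
    (neg_nonpos.2 ((posSemidef_conjTranspose_mul_self (U + V)).eigenvalues_nonneg i))
  simp only [h0, Finset.sum_const_zero] at h
  have := (Finset.sum_eq_zero_iff_of_nonneg fun i _ => le_max_right _ _).1 h.symm i
    (Finset.mem_univ i)
  have := le_max_left (-(4 - (posSemidef_conjTranspose_mul_self
    (U - V)).isHermitian.eigenvalues i)) 0
  linarith

lemma powSum_sub_neg_self (p : ℝ) {U : Matrix m m ℂ} (hU : Uᴴ * U = 1) :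
    powSum p (U - -U) = ∑ _i : m, (4 : ℝ) ^ (p / 2) := by
  have hH := (posSemidef_conjTranspose_mul_self (U - -U)).isHermitian
  have h4 : (U - -U)ᴴ * (U - -U) = (4 : ℂ) • (1 : Matrix m m ℂ) := by
    rw [sub_neg_eq_add, ← two_smul ℂ U, conjTranspose_smul, smul_mul_smul_comm, hU]
    norm_num
  refine Finset.sum_congr rfl fun i _ => ?_
  have := (hH.aeval_eq_zero_iff (Polynomial.X - Polynomial.C 4)).1 (by
    rw [map_sub, Polynomial.aeval_X, Polynomial.aeval_C, h4, Algebra.algebraMap_eq_smul_one,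
      sub_self]) i
  congr 1
  have h' : ((hH.eigenvalues i : ℝ) : ℂ) = ((4 : ℝ) : ℂ) := by
    simpa [sub_eq_zero] using this
  exact_mod_cast h'

lemma eq_neg_of_powSum_sub_eq {p : ℝ} (hp : 0 < p) {U V : Matrix m m ℂ} (hU : Uᴴ * U = 1)
    (hV : Vᴴ * V = 1) (h : powSum p (U - V) = ∑ _i : m, (4 : ℝ) ^ (p / 2)) : V = -U := by
  have hH := (posSemidef_conjTranspose_mul_self (U - V)).isHermitian
  have hnn := (posSemidef_conjTranspose_mul_self (U - V)).eigenvalues_nonneg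
  have hle : ∀ i ∈ Finset.univ, hH.eigenvalues i ^ (p / 2) ≤ (4 : ℝ) ^ (p / 2) := fun i _ =>
    Real.rpow_le_rpow (hnn i) (eigenvalues_sub_le_four hU hV i) (by positivity)
  have heq : ∀ i, hH.eigenvalues i = 4 := fun i =>
    Real.rpow_left_injOn (x := p / 2) (by positivity) (hnn i) (by norm_num : (0 : ℝ) ≤ 4)
      ((Finset.sum_eq_sum_iff_of_le hle).1 h i (Finset.mem_univ i))
  have h4 := (hH.aeval_eq_zero_iff (Polynomial.X - Polynomial.C 4)).2 fun i => by
    rw [heq i]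
    simp
  have h0 : (U + V)ᴴ * (U + V) = 0 := by
    rw [conjTranspose_add_mul_add_eq hU hV, ← neg_eq_zero, ← h4]
    simp [Algebra.algebraMap_eq_smul_one]
  rw [conjTranspose_mul_self_eq_zero] at h0
  exact eq_neg_of_add_eq_zero_right h0

lemma exists_sign_rpow_add_rpow {q : ℝ} (hq : 0 < q) (hq1 : q ≠ 1) :
    ∃ σ : ℝ, ∀ b : ℝ, 0 ≤ b → b ≤ 4 → 0 ≤ σ * (b ^ q + (4 - b) ^ q - 4 ^ q) ∧
      (σ * (b ^ q + (4 - b) ^ q - 4 ^ q) = 0 → b = 0 ∨ b = 4) := by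
  have h4 : (0 : ℝ) < 4 ^ q := by positivity
  have hscale : ∀ b : ℝ, 0 ≤ b → b ≤ 4 →
      b ^ q + (4 - b) ^ q - 4 ^ q = 4 ^ q * ((b / 4) ^ q + (1 - b / 4) ^ q - 1) := by
    intro b hb hb4
    have h1 : 4 ^ q * (b / 4) ^ q = b ^ q := by
      rw [← Real.mul_rpow (by norm_num) (by positivity)]; congr 1; ring
    have h2 : 4 ^ q * (1 - b / 4) ^ q = (4 - b) ^ q := by
      rw [← Real.mul_rpow (by norm_num) (by linarith)]; congr 1; ring
    rw [mul_sub, mul_add, h1, h2, mul_one]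
  have hends : ∀ b : ℝ, b = 0 ∨ b = 4 → b ^ q + (4 - b) ^ q - 4 ^ q = 0 := by
    rintro b (rfl | rfl) <;> simp [Real.zero_rpow hq.ne']
  suffices ∃ σ : ℝ, ∀ b : ℝ, 0 < b → b < 4 → 0 < σ * (b ^ q + (4 - b) ^ q - 4 ^ q) by
    obtain ⟨σ, hσ⟩ := this
    refine ⟨σ, fun b hb hb4 => ?_⟩
    by_cases h : b = 0 ∨ b = 4
    · simp [hends b h, h]
    · push Not at h
      have := hσ b (lt_of_le_of_ne hb h.1.symm) (lt_of_le_of_ne hb4 h.2)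
      exact ⟨this.le, fun h0 => absurd h0 this.ne'⟩
  rcases lt_or_gt_of_ne hq1 with h | h
  · refine ⟨1, fun b hb hb4 => ?_⟩
    have h1 := Real.self_lt_rpow_of_lt_one (x := b / 4) (by positivity) (by linarith) h
    have h2 := Real.self_lt_rpow_of_lt_one (x := 1 - b / 4) (by linarith) (by linarith) h
    rw [hscale b hb.le hb4.le, one_mul]
    exact mul_pos h4 (by linarith)
  · refine ⟨-1, fun b hb hb4 => ?_⟩
    have h1 := Real.rpow_lt_self_of_lt_one (x := b / 4) (by positivity) (by linarith) h
    have h2 := Real.rpow_lt_self_of_lt_one (x := 1 - b / 4) (by linarith) (by linarith) h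
    rw [hscale b hb.le hb4.le, neg_one_mul, ← mul_neg]
    exact mul_pos h4 (by linarith)

/-- For `p ≠ 2`, self-adjointness of a unitary is detected by its distances to `1` and `-1`. -/
lemma conjTranspose_eq_self_iff_powSum {p : ℝ} (hp : 0 < p) (hp2 : p ≠ 2) {U : Matrix m m ℂ}
    (hU : Uᴴ * U = 1) :
    Uᴴ = U ↔ powSum p (U - 1) + powSum p (U - -1) = ∑ _i : m, (4 : ℝ) ^ (p / 2) := by
  have h1 : (1 : Matrix m m ℂ)ᴴ * 1 = 1 := by simp
  have hU' : U * Uᴴ = 1 := mul_eq_one_comm.1 hU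
  have hH := (posSemidef_conjTranspose_mul_self (U - 1)).isHermitian
  have hnn := (posSemidef_conjTranspose_mul_self (U - 1)).eigenvalues_nonneg
  have hneg : powSum p (U - -1) = ∑ i, (4 - hH.eigenvalues i) ^ (p / 2) :=
    (powSum_eq p (posSemidef_conjTranspose_mul_self (U + 1)).isHermitian (by
      rw [sub_neg_eq_add])).trans (IsHermitian.sum_eigenvalues_sub hH _ 4
        (conjTranspose_add_mul_add_eq hU h1) (fun t => t ^ (p / 2)))
  obtain ⟨σ, hσ⟩ := exists_sign_rpow_add_rpow (q := p / 2) (by positivity)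
    (by contrapose! hp2; linarith)
  have hσ' := fun i => hσ (hH.eigenvalues i) (hnn i) (eigenvalues_sub_le_four hU h1 i)
  have hpoly : Polynomial.aeval ((U - 1)ᴴ * (U - 1))
      (Polynomial.X * (Polynomial.X - Polynomial.C (4 : ℂ))) = (U - Uᴴ) * (U - Uᴴ) := by
    have hB : (U - 1)ᴴ * (U - 1) = (2 : ℂ) • (1 : Matrix m m ℂ) - U - Uᴴ := by
      simp only [conjTranspose_sub, conjTranspose_one, sub_mul, mul_sub, hU, one_mul, mul_one]
      module
    simp only [map_mul, map_sub, Polynomial.aeval_X, Polynomial.aeval_C, hB,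
      Algebra.algebraMap_eq_smul_one]
    simp only [sub_mul, mul_sub, smul_mul_assoc, mul_smul_comm, one_mul, mul_one, hU, hU']
    module
  have hsplit : powSum p (U - 1) + powSum p (U - -1) - ∑ _i : m, (4 : ℝ) ^ (p / 2) =
      ∑ i, (hH.eigenvalues i ^ (p / 2) + (4 - hH.eigenvalues i) ^ (p / 2) - 4 ^ (p / 2)) := by
    rw [hneg, powSum, Finset.sum_sub_distrib, Finset.sum_add_distrib]
  constructor
  · intro h
    rw [h, sub_self, mul_zero, hH.aeval_eq_zero_iff] at hpoly
    rw [← sub_eq_zero, hsplit]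
    refine Finset.sum_eq_zero fun i _ => ?_
    have h0 : hH.eigenvalues i = 0 ∨ hH.eigenvalues i = 4 := by
      have := hpoly i
      simp only [Polynomial.eval_mul, Polynomial.eval_X, Polynomial.eval_sub, Polynomial.eval_C,
        mul_eq_zero, sub_eq_zero] at this
      exact_mod_cast this
    rcases h0 with h0 | h0 <;> rw [h0] <;> simp [Real.zero_rpow (by positivity : p / 2 ≠ 0)]
  · intro h
    rw [h, sub_self] at hsplit
    have hsum : ∑ i, σ * (hH.eigenvalues i ^ (p / 2) + (4 - hH.eigenvalues i) ^ (p / 2)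
        - 4 ^ (p / 2)) = 0 := by rw [← Finset.mul_sum, ← hsplit, mul_zero]
    have h0 := (Finset.sum_eq_zero_iff_of_nonneg fun i _ => (hσ' i).1).1 hsum
    have hz := (hH.aeval_eq_zero_iff (Polynomial.X * (Polynomial.X - Polynomial.C 4))).2
      fun i => by
        rcases (hσ' i).2 (h0 i (Finset.mem_univ i)) with hi | hi <;> rw [hi] <;> simp
    rw [hpoly] at hz
    have : (U - Uᴴ)ᴴ * (U - Uᴴ) = 0 := by
      rw [← neg_eq_zero, ← hz]
      simp [← neg_mul]
    rw [conjTranspose_mul_self_eq_zero, sub_eq_zero] at this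
    exact this.symm

end Distance

section Reflection

variable {m : Type*} [Fintype m] [DecidableEq m]

lemma powSum_sub_one_of_conjTranspose_eq {p : ℝ} (hp : 0 < p) {U : Matrix m m ℂ}
    (hU : U * U = 1) (hUs : Uᴴ = U) :
    powSum p (U - 1) = 4 ^ (p / 2) / 4 * (2 * Fintype.card m - 2 * U.trace.re) := by
  have hH := (posSemidef_conjTranspose_mul_self (U - 1)).isHermitian
  have hB : (U - 1)ᴴ * (U - 1) = (2 : ℂ) • (1 : Matrix m m ℂ) - (2 : ℂ) • U := by
    simp only [conjTranspose_sub, conjTranspose_one, sub_mul, mul_sub, hU, hUs, one_mul, mul_one]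
    module
  have hpoly : Polynomial.aeval ((U - 1)ᴴ * (U - 1))
      (Polynomial.X * (Polynomial.X - Polynomial.C (4 : ℂ))) = 0 := by
    simp only [map_mul, map_sub, Polynomial.aeval_X, Polynomial.aeval_C, hB,
      Algebra.algebraMap_eq_smul_one]
    simp only [sub_mul, mul_sub, smul_mul_assoc, mul_smul_comm, one_mul, mul_one, hU]
    module
  have htr : ∑ i, hH.eigenvalues i = 2 * Fintype.card m - 2 * U.trace.re := by
    rw [hH.sum_eigenvalues_eq_re_trace, hB]
    simp
  rw [powSum, ← htr, Finset.mul_sum]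
  refine Finset.sum_congr rfl fun i _ => ?_
  have h0 : hH.eigenvalues i = 0 ∨ hH.eigenvalues i = 4 := by
    have := (hH.aeval_eq_zero_iff _).1 hpoly i
    simp only [Polynomial.eval_mul, Polynomial.eval_X, Polynomial.eval_sub, Polynomial.eval_C,
      mul_eq_zero, sub_eq_zero] at this
    exact_mod_cast this
  rcases h0 with h0 | h0 <;> rw [h0]
  · simp [Real.zero_rpow (by positivity : p / 2 ≠ 0)]
  · ring

/-- The distance from a self-adjoint unitary to a reflection `1 - 2Q` across a hyperplane. -/
lemma powSum_sub_reflection {p : ℝ} (hp : 0 < p) {U Q : Matrix m m ℂ} (hU : U * U = 1)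
    (hUs : Uᴴ = U) (hQ : Q * Q = Q) (hQs : Qᴴ = Q) (hQt : Q.trace = 1) {u : ℝ}
    (hu : Q * U * Q = (u : ℂ) • Q) :
    0 ≤ 2 + 2 * u ∧ powSum p (U - (1 - (2 : ℂ) • Q)) =
      4 ^ (p / 2) / 4 * (2 * Fintype.card m - 2 * U.trace.re - 4) + 2 * (2 + 2 * u) ^ (p / 2) := by
  set R : Matrix m m ℂ := 1 - (2 : ℂ) • Q with hR
  have hH := (posSemidef_conjTranspose_mul_self (U - R)).isHermitian
  have hU' : ∀ Z, U * (U * Z) = Z := fun Z => by rw [← mul_assoc, hU, one_mul]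
  have hQ' : ∀ Z, Q * (Q * Z) = Q * Z := fun Z => by rw [← mul_assoc, hQ]
  have hu1 : Q * (U * Q) = (u : ℂ) • Q := by rw [← mul_assoc, hu]
  have hu2 : ∀ Z, Q * (U * (Q * Z)) = (u : ℂ) • (Q * Z) := fun Z => by
    rw [← mul_assoc, ← mul_assoc, hu, smul_mul_assoc]
  have htUQ : (U * Q).trace = u := by
    have := congrArg trace hu
    rwa [trace_mul_cycle, hQ, trace_mul_comm, trace_smul, hQt, smul_eq_mul, mul_one] at this
  have hB : (U - R)ᴴ * (U - R) = (2 : ℂ) • ((1 : Matrix m m ℂ) - U + U * Q + Q * U) := by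
    simp only [hR, conjTranspose_sub, conjTranspose_one, conjTranspose_smul, hUs, hQs, sub_mul,
      mul_sub, smul_mul_assoc, mul_smul_comm, one_mul, mul_one, hU, hQ, smul_sub, smul_smul]
    simp only [RCLike.star_def, map_ofNat]
    module
  have hBB : (U - R)ᴴ * (U - R) * ((U - R)ᴴ * (U - R)) =
      (4 : ℂ) • ((2 : ℂ) • ((1 : Matrix m m ℂ) - U) + (2 + u : ℂ) • (U * Q + Q * U)
        - Q - U * (Q * U)) := by
    rw [hB]
    simp only [add_mul, mul_add, sub_mul, mul_sub, smul_mul_assoc, mul_smul_comm, one_mul, mul_one,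
      mul_assoc, hU, hU', hQ, hQ', hu1, hu2, smul_sub, smul_add, smul_smul]
    module
  have hpoly : Polynomial.aeval ((U - R)ᴴ * (U - R)) (Polynomial.X * Polynomial.X *
      (Polynomial.X - Polynomial.C (2 + 2 * u : ℂ)) - Polynomial.C (4 : ℂ) * Polynomial.X *
      (Polynomial.X - Polynomial.C (2 + 2 * u : ℂ))) = 0 := by
    simp only [map_mul, map_sub, Polynomial.aeval_X, Polynomial.aeval_C, hBB,
      Algebra.algebraMap_eq_smul_one]
    rw [hB]
    simp only [add_mul, mul_add, sub_mul, mul_sub, smul_mul_assoc, mul_smul_comm, one_mul, mul_one,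
      mul_assoc, hU, hU', hQ, hQ', hu1, hu2, smul_sub, smul_add, smul_smul]
    module
  have hcase : ∀ i, hH.eigenvalues i = 0 ∨ hH.eigenvalues i = 4 ∨
      hH.eigenvalues i = 2 + 2 * u := by
    intro i
    have := (hH.aeval_eq_zero_iff _).1 hpoly i
    simp only [Polynomial.eval_mul, Polynomial.eval_X, Polynomial.eval_sub, Polynomial.eval_C]
      at this
    have h' : hH.eigenvalues i * ((hH.eigenvalues i - 4) *
        (hH.eigenvalues i - (2 + 2 * u))) = 0 := by
      have h'' : (hH.eigenvalues i : ℂ) * (((hH.eigenvalues i : ℂ) - 4) *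
        ((hH.eigenvalues i : ℂ) - (2 + 2 * u))) = 0 := by rw [← this]; ring
      exact_mod_cast h''
    simpa only [mul_eq_zero, sub_eq_zero] using h'
  have hsum : ∑ i, hH.eigenvalues i = 2 * Fintype.card m - 2 * U.trace.re + 4 * u := by
    rw [hH.sum_eigenvalues_eq_re_trace, hB, trace_smul, trace_add, trace_add, trace_sub,
      trace_mul_comm Q, htUQ, trace_one]
    simp
    ring
  have hsum2 : ∑ i, hH.eigenvalues i ^ 2 =
      4 * (2 * (Fintype.card m - U.trace.re) + 2 * (2 + u) * u - 2) := by
    rw [hH.sum_eigenvalues_sq_eq_re_trace, hBB, trace_smul, trace_sub, trace_sub, trace_add,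
      trace_smul, trace_smul, trace_sub, trace_add, trace_mul_comm Q, htUQ, trace_one, hQt,
      trace_mul_comm U, mul_assoc, hU, mul_one, hQt]
    simp
    ring
  have hz : (0 : ℝ) ^ (p / 2) = 0 := Real.zero_rpow (by positivity)
  constructor
  · have hnn := (posSemidef_conjTranspose_mul_self ((U - R) * Q)).trace_nonneg
    have heq : ((U - R) * Q)ᴴ * ((U - R) * Q) = (2 + 2 * u : ℂ) • Q := by
      rw [conjTranspose_mul, hQs, mul_assoc, ← mul_assoc (U - R)ᴴ, hB]
      simp only [add_mul, mul_add, sub_mul, mul_sub, smul_mul_assoc, mul_smul_comm, one_mul,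
        mul_assoc, hQ, hu1]
      module
    rw [heq, trace_smul, hQt, smul_eq_mul, mul_one] at hnn
    exact_mod_cast hnn
  · have hend : 2 + 2 * u = 0 ∨ 2 + 2 * u = 4 → powSum p (U - R) =
        4 ^ (p / 2) / 4 * (2 * Fintype.card m - 2 * U.trace.re + 4 * u) := by
      intro hv
      rw [powSum, ← hsum, Finset.mul_sum]
      refine Finset.sum_congr rfl fun i _ => ?_
      have h0 : hH.eigenvalues i = 0 ∨ hH.eigenvalues i = 4 := by
        rcases hcase i with h | h | h
        · exact Or.inl h
        · exact Or.inr h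
        · rw [h]
          exact hv
      rcases h0 with h0 | h0 <;> rw [h0]
      · rw [hz, mul_zero]
      · ring
    by_cases h0 : 2 + 2 * u = 0
    · rw [hend (Or.inl h0), h0, hz]
      linear_combination 4 ^ (p / 2) / 4 * 2 * h0
    by_cases h4 : 2 + 2 * u = 4
    · rw [hend (Or.inr h4), h4]
      linear_combination 4 ^ (p / 2) / 4 * 2 * h4
    set v := 2 + 2 * u with hv
    have hne : v * (4 - v) ≠ 0 := mul_ne_zero h0 (sub_ne_zero.2 (Ne.symm h4))
    -- interpolate `b ↦ b ^ (p / 2)` on the spectrum by a quadratic polynomial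
    obtain ⟨β, hβ⟩ : ∃ β : ℝ, β * (v * (4 - v)) = v ^ (p / 2) - 4 ^ (p / 2) / 4 * v :=
      ⟨(v ^ (p / 2) - 4 ^ (p / 2) / 4 * v) / (v * (4 - v)), div_mul_cancel₀ _ hne⟩
    have hpt : ∀ i, hH.eigenvalues i ^ (p / 2) = (4 ^ (p / 2) / 4 + 4 * β) * hH.eigenvalues i
        - β * hH.eigenvalues i ^ 2 := by
      intro i
      rcases hcase i with h | h | h <;> rw [h]
      · rw [hz]
        ring
      · ring
      · linear_combination -hβ
    have hps : powSum p (U - R) = ∑ i, hH.eigenvalues i ^ (p / 2) := rfl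
    rw [hps, Finset.sum_congr rfl fun i _ => hpt i, Finset.sum_sub_distrib, ← Finset.mul_sum,
      ← Finset.mul_sum, hsum, hsum2]
    have hu' : u = (v - 2) / 2 := by rw [hv]; ring
    rw [hu']
    linear_combination 2 * hβ

end Reflection

section Wigner

lemma star_dotProduct_of_support_pair {m : Type*} [Fintype m] {j k : m} (hjk : j ≠ k) {w : m → ℂ}
    (hw : ∀ i, i ≠ j → i ≠ k → w i = 0) (y : m → ℂ) :
    star w ⬝ᵥ y = star (w j) * y j + star (w k) * y k := by
  rw [dotProduct, Fintype.sum_eq_add j k hjk]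
  · rfl
  · rintro i ⟨hj, hk⟩
    simp [hw i hj hk]

variable {m : Type*} [Fintype m] [DecidableEq m]

lemma star_pair_dotProduct {j k : m} (hjk : j ≠ k) (c : ℂ) (y : m → ℂ) :
    star (Pi.single j 1 + Pi.single k c : m → ℂ) ⬝ᵥ y = y j + star c * y k := by
  rw [star_dotProduct_of_support_pair hjk]
  · simp [hjk, hjk.symm]
  · intro i hj hk
    simp [hj, hk]

lemma eq_of_normSq_add_eq_four {a b : ℂ} (ha : Complex.normSq a = 1) (hb : Complex.normSq b = 1)
    (h : Complex.normSq (a + b) = 4) : b = a := by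
  simp only [Complex.normSq_apply, Complex.add_re, Complex.add_im] at *
  apply Complex.ext <;> nlinarith [sq_nonneg (a.re - b.re), sq_nonneg (a.im - b.im)]

/-- A map of `ℂᵐ` preserving transition probabilities and fixing, up to phases, the coordinate axes
and the all-ones vector. -/
structure IsNormalizedWigner (T : (m → ℂ) → (m → ℂ)) : Prop where
  normSq_dotProduct : ∀ x y,
    Complex.normSq (star (T x) ⬝ᵥ T y) = Complex.normSq (star x ⬝ᵥ y)
  normSq_apply : ∀ x i, Complex.normSq (T x i) = Complex.normSq (x i)
  normSq_sum : ∀ x, Complex.normSq (∑ i, T x i) = Complex.normSq (∑ i, x i)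

namespace IsNormalizedWigner

variable {T : (m → ℂ) → (m → ℂ)}

lemma apply_pair_eq_zero (hT : IsNormalizedWigner T) {j k : m} (c : ℂ) (i : m)
    (hj : i ≠ j) (hk : i ≠ k) :
    T (Pi.single j 1 + Pi.single k c) i = 0 := by
  rw [← Complex.normSq_eq_zero, hT.normSq_apply]
  simp [hj, hk]

lemma re_mul_star_apply (hT : IsNormalizedWigner T) (x : m → ℂ) {j k : m} (hjk : j ≠ k) :
    (T x j * star (T x k)).re = (x j * star (x k)).re := by
  set e : m → ℂ := Pi.single j 1 + Pi.single k 1 with he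
  have hz := hT.apply_pair_eq_zero (j := j) (k := k) 1
  have ha : Complex.normSq (T e j) = 1 := by simp [hT.normSq_apply, he, hjk]
  have hb : Complex.normSq (T e k) = 1 := by simp [hT.normSq_apply, he, hjk.symm]
  have hab : T e k = T e j := by
    refine eq_of_normSq_add_eq_four ha hb ?_
    have := hT.normSq_sum e
    rw [Fintype.sum_eq_add j k hjk (fun i hi => hz i hi.1 hi.2),
      Fintype.sum_eq_add j k hjk (fun i hi => by simp [he, hi.1, hi.2])] at this
    rw [this]
    simp [he, hjk, hjk.symm]
    norm_num [Complex.normSq_apply]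
  have h := hT.normSq_dotProduct e x
  rw [star_dotProduct_of_support_pair hjk hz, star_pair_dotProduct hjk, hab, ← mul_add,
    Complex.normSq_mul, star_one, Complex.star_def, Complex.normSq_conj, ha, one_mul, one_mul,
    Complex.normSq_add, Complex.normSq_add, hT.normSq_apply, hT.normSq_apply] at h
  simpa using h

lemma exists_sign_im_mul_star_apply (hT : IsNormalizedWigner T) {j k : m} (hjk : j ≠ k) :
    ∃ ε : ℝ, ε ^ 2 = 1 ∧
      ∀ x, (T x j * star (T x k)).im = ε * (x j * star (x k)).im := by
  set e : m → ℂ := Pi.single j 1 + Pi.single k Complex.I with he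
  have hz := hT.apply_pair_eq_zero (j := j) (k := k) Complex.I
  have ha : Complex.normSq (T e j) = 1 := by simp [hT.normSq_apply, he, hjk]
  have hb : Complex.normSq (T e k) = 1 := by simp [hT.normSq_apply, he, hjk.symm]
  have hre := hT.re_mul_star_apply e hjk
  have hre0 : (e j * star (e k)).re = 0 := by simp [he, hjk, hjk.symm]
  rw [hre0] at hre
  simp only [Complex.star_def, Complex.mul_re, Complex.conj_re, Complex.conj_im] at hre
  rw [Complex.normSq_apply] at ha hb
  have hε : ((T e j).re * (T e k).im - (T e j).im * (T e k).re) ^ 2 = 1 := by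
    linear_combination ((T e j).re * (T e j).re + (T e j).im * (T e j).im) * hb + ha -
      ((T e j).re * (T e k).re + (T e j).im * (T e k).im) * hre
  refine ⟨_, hε, fun x => ?_⟩
  have h := hT.normSq_dotProduct e x
  rw [star_dotProduct_of_support_pair hjk hz, star_pair_dotProduct hjk, ← he] at h
  have hj := hT.normSq_apply x j
  have hk := hT.normSq_apply x k
  simp only [Complex.normSq_apply, Complex.star_def, Complex.mul_re, Complex.mul_im,
    Complex.add_re, Complex.add_im, Complex.conj_re, Complex.conj_im, Complex.I_re, Complex.I_im]
    at h hj hk ⊢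
  set ε := (T e j).re * (T e k).im - (T e j).im * (T e k).re with hεdef
  have key : ε * ((T x j).re * -(T x k).im + (T x j).im * (T x k).re) =
      (x j).re * -(x k).im + (x j).im * (x k).re := by
    rw [hεdef]
    linear_combination (-1 / 2 : ℝ) * h +
      (1 / 2 : ℝ) * (((T x j).re * (T x j).re + (T x j).im * (T x j).im) * ha +
      ((T x k).re * (T x k).re + (T x k).im * (T x k).im) * hb + hj + hk) +
      ((T x j).re * (T x k).re + (T x j).im * (T x k).im) * hre
  linear_combination ε * key - ((T x j).re * -(T x k).im + (T x j).im * (T x k).re) * hε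

lemma exists_sign_forall (hT : IsNormalizedWigner T) : ∃ ε : ℝ, ε ^ 2 = 1 ∧
    ∀ x j k, (T x j * star (T x k)).im = ε * (x j * star (x k)).im := by
  have hex : ∀ j k, ∃ ε : ℝ, j ≠ k → ε ^ 2 = 1 ∧
      ∀ x, (T x j * star (T x k)).im = ε * (x j * star (x k)).im := by
    intro j k
    by_cases hjk : j = k
    · exact ⟨1, fun h => absurd hjk h⟩
    · obtain ⟨ε, hε⟩ := hT.exists_sign_im_mul_star_apply hjk
      exact ⟨ε, fun _ => hε⟩
  choose ε hε using hex
  have hsymm : ∀ j k, j ≠ k → ε j k = ε k j := by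
    intro j k hjk
    have h1 := (hε j k hjk).2 (Pi.single j 1 + Pi.single k Complex.I)
    have h2 := (hε k j hjk.symm).2 (Pi.single j 1 + Pi.single k Complex.I)
    simp [hjk, hjk.symm] at h1 h2
    linarith
  have htriple : ∀ j k l, j ≠ k → k ≠ l → j ≠ l → ε j k = ε k l := by
    intro j k l hjk hkl hjl
    set x : m → ℂ := Pi.single j 1 + Pi.single k Complex.I + Pi.single l 1 with hx
    have hxj : x j = 1 := by simp [hx, hjk, hjl]
    have hxk : x k = Complex.I := by simp [hx, hjk.symm, hkl]
    have hxl : x l = 1 := by simp [hx, hkl.symm, hjl.symm]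
    have e1 : T x j * star (T x k) = -(ε j k) * Complex.I := by
      apply Complex.ext
      · rw [hT.re_mul_star_apply x hjk]; simp [hxj, hxk]
      · rw [(hε j k hjk).2]; simp [hxj, hxk]
    have e2 : T x k * star (T x l) = ε k l * Complex.I := by
      apply Complex.ext
      · rw [hT.re_mul_star_apply x hkl]; simp [hxl, hxk]
      · rw [(hε k l hkl).2]; simp [hxl, hxk]
    have e3 : T x j * star (T x l) = 1 := by
      apply Complex.ext
      · rw [hT.re_mul_star_apply x hjl]; simp [hxl, hxj]
      · rw [(hε j l hjl).2]; simp [hxl, hxj]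
    have e4 : T x k * star (T x k) = 1 := by
      rw [Complex.star_def, Complex.mul_conj, hT.normSq_apply, hxk]; simp
    have hprod : (ε j k : ℂ) * ε k l = 1 := by
      linear_combination ((ε j k : ℂ) * ε k l) * Complex.I_mul_I - (ε k l * Complex.I) * e1
        - (T x j * star (T x k)) * e2 + e3 + (T x j * star (T x l)) * e4
    have hprod' : ε j k * ε k l = 1 := by exact_mod_cast hprod
    linear_combination ε k l * (hε j k hjk).1 - ε j k * hprod'
  have hstep : ∀ j k l, j ≠ k → j ≠ l → ε j k = ε j l := by
    intro j k l hjk hjl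
    by_cases hkl : k = l
    · rw [hkl]
    · rw [hsymm j k hjk, htriple k j l hjk.symm hjl hkl]
  by_cases hm : ∃ a b : m, a ≠ b
  · obtain ⟨a, b, hab⟩ := hm
    refine ⟨ε a b, (hε a b hab).1, fun x j k => ?_⟩
    by_cases hjk : j = k
    · subst hjk
      simp [Complex.mul_conj]
    · rw [(hε j k hjk).2 x]
      congr 1
      by_cases hja : j = a
      · subst hja
        exact hstep j k b hjk hab
      · rw [hstep j k a hjk hja, hsymm j a hja, hstep a j b (Ne.symm hja) hab]
  · push Not at hm
    refine ⟨1, by norm_num, fun x j k => ?_⟩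
    rw [hm j k]
    simp [Complex.mul_conj]

/-- **Wigner's theorem** for normalized maps: such a map acts on lines as the identity or as
complex conjugation. -/
lemma mul_star_apply_eq_or (hT : IsNormalizedWigner T) :
    (∀ x j k, T x j * star (T x k) = x j * star (x k)) ∨
      (∀ x j k, T x j * star (T x k) = star (x j) * x k) := by
  obtain ⟨ε, hε, h⟩ := hT.exists_sign_forall
  have hre : ∀ x j k, (T x j * star (T x k)).re = (x j * star (x k)).re := by
    intro x j k
    by_cases hjk : j = k
    · rw [hjk, Complex.star_def, Complex.mul_conj, Complex.mul_conj, hT.normSq_apply]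
    · exact hT.re_mul_star_apply x hjk
  rcases sq_eq_one_iff.1 hε with rfl | rfl
  · left
    intro x j k
    apply Complex.ext
    · exact hre x j k
    · rw [h]; simp
  · right
    intro x j k
    apply Complex.ext
    · rw [hre]; simp
    · rw [h]; simp; ring

end IsNormalizedWigner

/-- **Wigner's theorem** in finite dimension: a map preserving transition probabilities acts on
lines as a unitary or an antiunitary map. -/
theorem exists_unitary_of_normSq_dotProduct_eq {T : (m → ℂ) → (m → ℂ)}
    (hT : ∀ x y, Complex.normSq (star (T x) ⬝ᵥ T y) = Complex.normSq (star x ⬝ᵥ y)) :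
    ∃ V ∈ unitaryGroup m ℂ,
      (∀ x, vecMulVec (T x) (star (T x)) = V * vecMulVec x (star x) * Vᴴ) ∨
      (∀ x, vecMulVec (T x) (star (T x)) = V * vecMulVec (star x) x * Vᴴ) := by
  set F : m → m → ℂ := fun i => T (Pi.single i 1) with hF
  set c : m → ℂ := fun i => star (F i) ⬝ᵥ T (fun _ => 1) with hc
  have hcn' : ∀ i, Complex.normSq (c i) = 1 := by
    intro i
    simp [hc, hF, hT]
  have hcn : ∀ i, star (c i) * c i = 1 := by
    intro i
    rw [Complex.star_def, mul_comm, Complex.mul_conj, hcn', Complex.ofReal_one]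
  have hFF : ∀ i j, star (F i) ⬝ᵥ F j = if i = j then 1 else 0 := by
    intro i j
    have h := hT (Pi.single i 1) (Pi.single j 1)
    split_ifs with hij
    · subst hij
      have hnn : (0 : ℂ) ≤ star (F i) ⬝ᵥ F i := dotProduct_star_self_nonneg (F i)
      obtain ⟨hre, him⟩ := Complex.nonneg_iff.1 hnn
      have h1 : Complex.normSq (star (F i) ⬝ᵥ F i) = 1 := by
        rw [h]
        simp
      rw [Complex.normSq_apply, ← him] at h1
      refine Complex.ext ?_ him.symm
      rw [Complex.one_re]
      nlinarith
    · rw [← Complex.normSq_eq_zero, h]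
      simp [hij]
  set V : Matrix m m ℂ := of fun a i => F i a * c i with hV
  have hVV : Vᴴ * V = 1 := by
    ext i j
    have : (Vᴴ * V) i j = star (c i) * c j * (star (F i) ⬝ᵥ F j) := by
      rw [mul_apply, dotProduct, Finset.mul_sum]
      refine Finset.sum_congr rfl fun a _ => ?_
      simp [hV]
      ring
    rw [this, hFF, one_apply]
    split_ifs with hij
    · rw [← hij, hcn, mul_one]
    · rw [mul_zero]
  have hVV' : V * Vᴴ = 1 := mul_eq_one_comm.1 hVV
  have hdot : ∀ x y, star (Vᴴ *ᵥ T x) ⬝ᵥ (Vᴴ *ᵥ T y) = star (T x) ⬝ᵥ T y := by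
    intro x y
    rw [star_mulVec, conjTranspose_conjTranspose, dotProduct_mulVec, vecMul_vecMul, hVV',
      vecMul_one]
  have happ : ∀ x i, (Vᴴ *ᵥ T x) i = star (c i) * (star (F i) ⬝ᵥ T x) := by
    intro x i
    rw [mulVec, dotProduct, dotProduct, Finset.mul_sum]
    refine Finset.sum_congr rfl fun a _ => ?_
    simp [hV]
    ring
  have hW : IsNormalizedWigner fun x => Vᴴ *ᵥ T x := by
    refine ⟨fun x y => by rw [hdot, hT], fun x i => ?_, fun x => ?_⟩
    · rw [happ, Complex.normSq_mul, Complex.star_def, Complex.normSq_conj, hcn', one_mul, hT]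
      simp
    · have h1 : Vᴴ *ᵥ T (fun _ => 1) = fun _ => 1 := funext fun i => (happ _ i).trans (hcn i)
      have h := hdot (fun _ => 1) x
      rw [h1] at h
      have h2 := hT (fun _ => 1) x
      rw [← h] at h2
      simpa [dotProduct] using h2
  have hrec : ∀ x, vecMulVec (T x) (star (T x)) =
      V * vecMulVec (Vᴴ *ᵥ T x) (star (Vᴴ *ᵥ T x)) * Vᴴ := by
    intro x
    rw [mul_vecMulVec, vecMulVec_mul, ← star_mulVec, mulVec_mulVec, hVV', one_mulVec]
  refine ⟨V, mem_unitaryGroup_iff'.2 hVV, hW.mul_star_apply_eq_or.imp ?_ ?_⟩ <;>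
  · intro h x
    rw [hrec]
    congr 2
    ext j k
    exact h x j k

end Wigner

section RankOne

variable {m : Type*} [Fintype m]

/-- The orthogonal projection onto the line spanned by `x`. -/
noncomputable def lineProj (x : m → ℂ) : Matrix m m ℂ :=
  (star x ⬝ᵥ x)⁻¹ • vecMulVec x (star x)

lemma smul_lineProj {x : m → ℂ} (hx : x ≠ 0) :
    (star x ⬝ᵥ x) • lineProj x = vecMulVec x (star x) :=
  smul_inv_smul₀ (dotProduct_star_self_eq_zero.not.2 hx) _

lemma conjTranspose_lineProj (x : m → ℂ) : (lineProj x)ᴴ = lineProj x := by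
  have h : star (star x ⬝ᵥ x) = star x ⬝ᵥ x := (star_dotProduct x x).symm
  rw [lineProj, conjTranspose_smul, conjTranspose_vecMulVec, star_star, star_inv₀, h]

lemma trace_lineProj {x : m → ℂ} (hx : x ≠ 0) : (lineProj x).trace = 1 := by
  rw [lineProj, trace_smul, trace_vecMulVec, dotProduct_comm x (star x), smul_eq_mul]
  exact inv_mul_cancel₀ (dotProduct_star_self_eq_zero.not.2 hx)

lemma lineProj_mul_mul_lineProj (x : m → ℂ) (A : Matrix m m ℂ) :
    lineProj x * A * lineProj x = (A * lineProj x).trace • lineProj x := by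
  have h : vecMulVec x (star x) * A * vecMulVec x (star x) =
      (star x ᵥ* A ⬝ᵥ x) • vecMulVec x (star x) := by
    rw [vecMulVec_mul, vecMulVec_mul_vecMulVec, vecMulVec_smul]
  simp only [lineProj, smul_mul_assoc, mul_smul_comm, h, trace_smul]
  rw [mul_vecMulVec, trace_vecMulVec, dotProduct_comm (A *ᵥ x), dotProduct_mulVec]
  simp only [smul_smul, smul_eq_mul]
  congr 1
  ring

lemma lineProj_mul_self [DecidableEq m] {x : m → ℂ} (hx : x ≠ 0) :
    lineProj x * lineProj x = lineProj x := by
  have := lineProj_mul_mul_lineProj x 1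
  rwa [mul_one, one_mul, trace_lineProj hx, one_smul] at this

lemma eq_lineProj_of_trace_eq_one [DecidableEq m] {P : Matrix m m ℂ} (hP : P * P = P)
    (hPs : Pᴴ = P) (hPt : P.trace = 1) : ∃ y, y ≠ 0 ∧ P = lineProj y := by
  obtain ⟨j, hj⟩ : ∃ j, P.col j ≠ 0 := by
    by_contra! h
    have : P = 0 := by
      ext a b
      exact congrFun (h b) a
    simp [this] at hPt
  refine ⟨P.col j, hj, ?_⟩
  have hPy : P *ᵥ P.col j = P.col j := by
    conv_rhs => rw [← hP]
    rfl
  have hPL : P * lineProj (P.col j) = lineProj (P.col j) := by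
    rw [lineProj, mul_smul_comm, mul_vecMulVec, hPy]
  have hLP : lineProj (P.col j) * P = lineProj (P.col j) := by
    have := congrArg conjTranspose hPL
    rwa [conjTranspose_mul, conjTranspose_lineProj, hPs] at this
  have hD : (P - lineProj (P.col j))ᴴ * (P - lineProj (P.col j)) = P - lineProj (P.col j) := by
    rw [conjTranspose_sub, conjTranspose_lineProj, hPs, sub_mul, mul_sub, mul_sub, hP, hPL, hLP,
      lineProj_mul_self hj, sub_self, sub_zero]
  have h0 : ((P - lineProj (P.col j))ᴴ * (P - lineProj (P.col j))).trace = 0 := by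
    rw [hD, trace_sub, hPt, trace_lineProj hj, sub_self]
  rw [trace_conjTranspose_mul_self_eq_zero_iff, sub_eq_zero] at h0
  exact h0

lemma exists_eq_lineProj_dotProduct_eq [DecidableEq m] {P : Matrix m m ℂ} (hP : P * P = P)
    (hPs : Pᴴ = P) (hPt : P.trace = 1) {x : m → ℂ} (hx : x ≠ 0) :
    ∃ y, star y ⬝ᵥ y = star x ⬝ᵥ x ∧ P = lineProj y := by
  obtain ⟨y, hy, rfl⟩ := eq_lineProj_of_trace_eq_one hP hPs hPt
  have hpos : ∀ z : m → ℂ, z ≠ 0 → ∃ r : ℝ, 0 < r ∧ star z ⬝ᵥ z = r := by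
    intro z hz
    have h := dotProduct_star_self_pos_iff.2 hz
    refine ⟨(star z ⬝ᵥ z).re, (Complex.pos_iff.1 h).1, ?_⟩
    exact Complex.ext rfl (Complex.pos_iff.1 h).2.symm
  obtain ⟨a, ha, hxa⟩ := hpos x hx
  obtain ⟨b, hb, hyb⟩ := hpos y hy
  have hs : ((Real.sqrt (a / b) : ℝ) : ℂ) * (Real.sqrt (a / b) : ℝ) = a / b := by
    rw [← Complex.ofReal_mul, Real.mul_self_sqrt (by positivity), Complex.ofReal_div]
  have ha' : (a : ℂ) ≠ 0 := by exact_mod_cast ha.ne'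
  have hb' : (b : ℂ) ≠ 0 := by exact_mod_cast hb.ne'
  have hdot : star (((Real.sqrt (a / b) : ℝ) : ℂ) • y) ⬝ᵥ (((Real.sqrt (a / b) : ℝ) : ℂ) • y) =
      a := by
    rw [star_smul, smul_dotProduct, dotProduct_smul, hyb, smul_smul, Complex.star_def,
      Complex.conj_ofReal, hs, smul_eq_mul, div_mul_cancel₀ _ hb']
  refine ⟨((Real.sqrt (a / b) : ℝ) : ℂ) • y, by rw [hdot, hxa], ?_⟩
  rw [lineProj, lineProj, hdot, hyb, star_smul, Complex.star_def, Complex.conj_ofReal,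
    smul_vecMulVec, vecMulVec_smul, smul_smul, smul_smul, mul_assoc, hs]
  congr 1
  field_simp

lemma eq_zero_of_trace_mul_vecMulVec [DecidableEq m] {A : Matrix m m ℂ}
    (h : ∀ x, (A * vecMulVec x (star x)).trace = 0) : A = 0 := by
  have : toEuclideanLin A = 0 := by
    rw [← inner_map_self_eq_zero]
    intro x
    have := h x.ofLp
    rw [mul_vecMulVec, trace_vecMulVec] at this
    rw [← inner_conj_symm, EuclideanSpace.inner_eq_star_dotProduct, map_eq_zero]
    exact this
  simpa using this

lemma re_trace_conjTranspose_mul_comm (A B : Matrix m m ℂ) :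
    (Bᴴ * A).trace.re = (Aᴴ * B).trace.re := by
  have : Bᴴ * A = (Aᴴ * B)ᴴ := by simp
  rw [this, trace_conjTranspose, Complex.star_def, Complex.conj_re]

lemma ofReal_re_trace_mul_lineProj {U : Matrix m m ℂ} (hUs : Uᴴ = U) (x : m → ℂ) :
    (((U * lineProj x).trace.re : ℝ) : ℂ) = (U * lineProj x).trace := by
  have hconj : (U * lineProj x)ᴴ = lineProj x * U := by
    rw [conjTranspose_mul, hUs, conjTranspose_lineProj]
  rw [← Complex.conj_eq_iff_re, ← Complex.star_def, ← trace_conjTranspose, hconj, trace_mul_comm]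

lemma trace_vecMulVec_mul_vecMulVec (x z : m → ℂ) :
    (vecMulVec z (star z) * vecMulVec x (star x)).trace = Complex.normSq (star z ⬝ᵥ x) := by
  have hconj : star x ⬝ᵥ z = star (star z ⬝ᵥ x) := star_dotProduct x z
  rw [vecMulVec_mul_vecMulVec, trace_vecMulVec, dotProduct_smul, dotProduct_comm z, smul_eq_mul,
    hconj, Complex.star_def, Complex.mul_conj]

end RankOne

section Reflection

variable {m : Type*} [DecidableEq m]

lemma reflection_mul_self [Fintype m] {Q : Matrix m m ℂ} (hQ : Q * Q = Q) :
    (1 - (2 : ℂ) • Q) * (1 - (2 : ℂ) • Q) = 1 := by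
  simp only [sub_mul, mul_sub, smul_mul_assoc, mul_smul_comm, one_mul, mul_one, hQ]
  module

lemma conjTranspose_reflection {Q : Matrix m m ℂ} (hQ : Qᴴ = Q) :
    (1 - (2 : ℂ) • Q)ᴴ = 1 - (2 : ℂ) • Q := by
  simp [hQ]

end Reflection

section Isometry

variable {m : Type*} [Fintype m] [DecidableEq m]

/-- A unital self-map of the unitary matrices that preserves the `p`-th power of the
(unnormalized) `L^p`-distance. -/
structure IsUnitalPowSumIsometry (p : ℝ) (ψ : Matrix m m ℂ → Matrix m m ℂ) : Prop where
  map_one : ψ 1 = 1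
  map_unitary : ∀ U, Uᴴ * U = 1 → (ψ U)ᴴ * ψ U = 1
  powSum_map : ∀ U V, Uᴴ * U = 1 → Vᴴ * V = 1 → powSum p (ψ U - ψ V) = powSum p (U - V)

variable {p : ℝ} {ψ : Matrix m m ℂ → Matrix m m ℂ}

lemma IsUnitalPowSumIsometry.conjTranspose_map_of_ne_two (h : IsUnitalPowSumIsometry p ψ)
    (hp : 0 < p) (hp2 : p ≠ 2) {U : Matrix m m ℂ} (hU : Uᴴ * U = 1) (hUs : Uᴴ = U) :
    (ψ U)ᴴ = ψ U := by
  have h1 : (1 : Matrix m m ℂ)ᴴ * 1 = 1 := by simp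
  have hn1 : (-1 : Matrix m m ℂ)ᴴ * -1 = 1 := by simp
  have hneg : ψ (-1) = -1 := by
    refine eq_neg_of_powSum_sub_eq hp h1 (h.map_unitary _ hn1) ?_
    rw [← powSum_sub_neg_self p h1, ← h.powSum_map _ _ h1 hn1, h.map_one]
  rw [conjTranspose_eq_self_iff_powSum hp hp2 (h.map_unitary _ hU)]
  rw [conjTranspose_eq_self_iff_powSum hp hp2 hU, ← h.powSum_map _ _ hU h1,
    ← h.powSum_map _ _ hU hn1, h.map_one, hneg] at hUs
  exact hUs

lemma powSum_two (A : Matrix m m ℂ) : powSum 2 A = (Aᴴ * A).trace.re := by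
  rw [← (posSemidef_conjTranspose_mul_self A).isHermitian.sum_eigenvalues_eq_re_trace]
  simp [powSum]

lemma powSum_two_sub {U V : Matrix m m ℂ} (hU : Uᴴ * U = 1) (hV : Vᴴ * V = 1) :
    powSum 2 (U - V) = 2 * Fintype.card m - 2 * (Uᴴ * V).trace.re := by
  have := re_trace_conjTranspose_mul_comm U V
  simp only [powSum_two, conjTranspose_sub, sub_mul, mul_sub, hU, hV, trace_sub, trace_one,
    Complex.sub_re, Complex.natCast_re, this]
  ring

lemma IsUnitalPowSumIsometry.re_trace_map (h : IsUnitalPowSumIsometry 2 ψ) {U V : Matrix m m ℂ}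
    (hU : Uᴴ * U = 1) (hV : Vᴴ * V = 1) : ((ψ U)ᴴ * ψ V).trace.re = (Uᴴ * V).trace.re := by
  have := h.powSum_map U V hU hV
  rw [powSum_two_sub hU hV, powSum_two_sub (h.map_unitary _ hU) (h.map_unitary _ hV)] at this
  linarith

lemma re_trace_sub_smul_one_sub_smul {C S : Matrix m m ℂ} (hC : Cᴴ * C = 1) (hS : Sᴴ * S = 1)
    (a b : ℝ) :
    ((C - a • 1 - b • S)ᴴ * (C - a • 1 - b • S)).trace.re =
      (1 + a ^ 2 + b ^ 2) * Fintype.card m - 2 * a * C.trace.re - 2 * b * (Cᴴ * S).trace.re +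
        2 * a * b * S.trace.re := by
  have h1 := re_trace_conjTranspose_mul_comm C S
  have h2 := re_trace_conjTranspose_mul_comm C 1
  have h3 := re_trace_conjTranspose_mul_comm S 1
  simp only [conjTranspose_one, one_mul, mul_one] at h2 h3
  simp only [conjTranspose_sub, conjTranspose_smul, star_trivial, conjTranspose_one, sub_mul,
    mul_sub, smul_mul_assoc, mul_smul_comm, hC, hS, one_mul, mul_one, trace_sub, trace_smul,
    trace_one, Complex.sub_re, Complex.smul_re, Complex.natCast_re, smul_eq_mul, h1, ← h2, ← h3]
  ring

lemma IsUnitalPowSumIsometry.exists_skew_preimage (h : IsUnitalPowSumIsometry 2 ψ)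
    (hsurj : ∀ V, Vᴴ * V = 1 → ∃ U, Uᴴ * U = 1 ∧ ψ U = V) {S' : Matrix m m ℂ}
    (hS' : S'ᴴ * S' = 1) (hskew : S'ᴴ = -S') : ∃ S, Sᴴ * S = 1 ∧ Sᴴ = -S ∧ ψ S = S' := by
  have h1 : (1 : Matrix m m ℂ)ᴴ * 1 = 1 := by simp
  have hunit : ∀ S : Matrix m m ℂ, Sᴴ * S = 1 →
      ((3 / 5 : ℝ) • (1 : Matrix m m ℂ) + (4 / 5 : ℝ) • S)ᴴ * ((3 / 5 : ℝ) • 1 + (4 / 5 : ℝ) • S) =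
        1 + (12 / 25 : ℝ) • (S + Sᴴ) := by
    intro S hS
    simp only [conjTranspose_add, conjTranspose_smul, star_trivial, conjTranspose_one, add_mul,
      mul_add, smul_mul_assoc, mul_smul_comm, hS, one_mul, mul_one]
    module
  obtain ⟨S, hS, rfl⟩ := hsurj S' hS'
  obtain ⟨C, hC, hCS⟩ := hsurj ((3 / 5 : ℝ) • (1 : Matrix m m ℂ) + (4 / 5 : ℝ) • ψ S) (by
    rw [hunit _ hS', hskew, add_neg_cancel, smul_zero, add_zero])
  refine ⟨S, hS, ?_, rfl⟩
  have hC1 := h.re_trace_map h1 hC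
  have hS1 := h.re_trace_map h1 hS
  have hD := re_trace_sub_smul_one_sub_smul (h.map_unitary _ hC) hS' (3 / 5) (4 / 5)
  have hD0 : ψ C - (3 / 5 : ℝ) • 1 - (4 / 5 : ℝ) • ψ S = 0 := by rw [hCS]; abel
  simp only [h.map_one, conjTranspose_one, one_mul] at hC1 hS1
  rw [hC1, hS1, h.re_trace_map hC hS, ← re_trace_sub_smul_one_sub_smul hC hS, hD0, mul_zero,
    trace_zero, Complex.zero_re] at hD
  have hCeq : C = (3 / 5 : ℝ) • (1 : Matrix m m ℂ) + (4 / 5 : ℝ) • S := by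
    have hps := posSemidef_conjTranspose_mul_self (C - (3 / 5 : ℝ) • 1 - (4 / 5 : ℝ) • S)
    have h0 := trace_conjTranspose_mul_self_eq_zero_iff.1
      (Complex.ext hD.symm (Complex.le_def.1 hps.trace_nonneg).2.symm)
    rwa [sub_sub, sub_eq_zero] at h0
  have h0 := hunit S hS
  rw [← hCeq, hC, left_eq_add, smul_eq_zero_iff_right (by norm_num)] at h0
  exact (neg_eq_of_add_eq_zero_right h0).symm

lemma IsUnitalPowSumIsometry.conjTranspose_map_of_two (h : IsUnitalPowSumIsometry 2 ψ)
    (hsurj : ∀ V, Vᴴ * V = 1 → ∃ U, Uᴴ * U = 1 ∧ ψ U = V) {U : Matrix m m ℂ} (hU : Uᴴ * U = 1)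
    (hUs : Uᴴ = U) : (ψ U)ᴴ = ψ U := by
  have hskew : ∀ R : Matrix m m ℂ, R * R = 1 → Rᴴ = R → ((ψ U)ᴴ * R).trace.im = 0 := by
    intro R hR hRs
    obtain ⟨S, hS, hSs, hψS⟩ := h.exists_skew_preimage hsurj (S' := Complex.I • R)
      (by simp [hRs, hR, smul_smul]) (by simp [hRs])
    have h1 := h.re_trace_map hU hS
    have h2 := re_trace_conjTranspose_mul_comm U S
    rw [hSs, neg_mul, trace_neg, trace_mul_comm, hUs, Complex.neg_re] at h2
    rw [hψS, mul_smul_comm, trace_smul, hUs] at h1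
    simp at h1
    linarith
  have hQ : ∀ x, ((ψ U)ᴴ * vecMulVec x (star x)).trace.im = 0 := by
    intro x
    rcases eq_or_ne x 0 with rfl | hx
    · simp
    have h1 := hskew 1 (by simp) (by simp)
    have h2 := hskew _ (reflection_mul_self (lineProj_mul_self hx))
      (conjTranspose_reflection (conjTranspose_lineProj x))
    have h3 := (Complex.le_def.1 (dotProduct_star_self_nonneg x)).2
    rw [mul_sub, trace_sub, Complex.sub_im, h1, mul_smul_comm, trace_smul] at h2
    rw [← smul_lineProj hx, mul_smul_comm, trace_smul]
    simp at h2 h3 ⊢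
    simp [h2, ← h3]
  refine sub_eq_zero.1 (eq_zero_of_trace_mul_vecMulVec fun x => ?_)
  have hconj : ψ U * vecMulVec x (star x) = (vecMulVec x (star x) * (ψ U)ᴴ)ᴴ := by
    simp [conjTranspose_vecMulVec]
  rw [sub_mul, trace_sub, hconj, trace_conjTranspose, trace_mul_comm (vecMulVec x (star x)),
    sub_eq_zero, Complex.star_def, eq_comm, Complex.conj_eq_iff_im]
  exact hQ x

end Isometry

section ReflectionImage

variable {m : Type*} [Fintype m] [DecidableEq m] {p : ℝ} {ψ : Matrix m m ℂ → Matrix m m ℂ}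

lemma IsUnitalPowSumIsometry.trace_map (h : IsUnitalPowSumIsometry p ψ) (hp : 0 < p)
    (hself : ∀ U, Uᴴ * U = 1 → Uᴴ = U → (ψ U)ᴴ = ψ U) {U : Matrix m m ℂ} (hU : Uᴴ * U = 1)
    (hUs : Uᴴ = U) : (ψ U).trace = U.trace := by
  have hreal : ∀ A : Matrix m m ℂ, Aᴴ = A → A.trace.im = 0 := fun A hA => by
    rw [← Complex.conj_eq_iff_im, ← Complex.star_def, ← trace_conjTranspose, hA]
  have hψs := hself U hU hUs
  have h1 := h.powSum_map U 1 hU (by simp)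
  have hU2 := hU
  have hψU := h.map_unitary U hU
  rw [hUs] at hU2
  rw [hψs] at hψU
  rw [h.map_one, powSum_sub_one_of_conjTranspose_eq hp hU2 hUs,
    powSum_sub_one_of_conjTranspose_eq hp hψU hψs] at h1
  have h2 := mul_left_cancel₀ (by positivity) h1
  exact Complex.ext (by linarith) (by rw [hreal _ hψs, hreal _ hUs])

lemma IsUnitalPowSumIsometry.exists_map_reflection (h : IsUnitalPowSumIsometry p ψ) (hp : 0 < p)
    (hself : ∀ U, Uᴴ * U = 1 → Uᴴ = U → (ψ U)ᴴ = ψ U) {x : m → ℂ} (hx : x ≠ 0) :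
    ∃ y, star y ⬝ᵥ y = star x ⬝ᵥ x ∧
      ψ (1 - (2 : ℂ) • lineProj x) = 1 - (2 : ℂ) • lineProj y := by
  set R : Matrix m m ℂ := 1 - (2 : ℂ) • lineProj x with hR
  have hRs : Rᴴ = R := conjTranspose_reflection (conjTranspose_lineProj x)
  have hRR : Rᴴ * R = 1 := by rw [hRs]; exact reflection_mul_self (lineProj_mul_self hx)
  have hs := hself R hRR hRs
  have hψ := h.map_unitary R hRR
  have ht := h.trace_map hp hself hRR hRs
  rw [hs] at hψ
  rw [hR, trace_sub, trace_smul, trace_lineProj hx, ← hR] at ht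
  obtain ⟨y, hy, hPy⟩ := exists_eq_lineProj_dotProduct_eq (P := (1 / 2 : ℂ) • (1 - ψ R))
    (by
      simp only [smul_mul_assoc, mul_smul_comm, sub_mul, mul_sub, hψ, one_mul, mul_one]
      module)
    (by simp [hs]) (by simp [ht]) hx
  refine ⟨y, hy, ?_⟩
  rw [← hPy]
  module

lemma IsUnitalPowSumIsometry.trace_map_mul_vecMulVec (h : IsUnitalPowSumIsometry p ψ)
    (hp : 0 < p) (hself : ∀ U, Uᴴ * U = 1 → Uᴴ = U → (ψ U)ᴴ = ψ U) {x y : m → ℂ} (hx : x ≠ 0)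
    (hxy : star y ⬝ᵥ y = star x ⬝ᵥ x)
    (hψ : ψ (1 - (2 : ℂ) • lineProj x) = 1 - (2 : ℂ) • lineProj y) {U : Matrix m m ℂ}
    (hU : Uᴴ * U = 1) (hUs : Uᴴ = U) :
    (ψ U * vecMulVec y (star y)).trace = (U * vecMulVec x (star x)).trace := by
  have hy : y ≠ 0 := by
    rwa [Ne, ← dotProduct_star_self_eq_zero, hxy, dotProduct_star_self_eq_zero]
  have hψs := hself U hU hUs
  have hUU : U * U = 1 := by rwa [hUs] at hU
  have hψU : ψ U * ψ U = 1 := by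
    have := h.map_unitary U hU
    rwa [hψs] at this
  obtain ⟨hu0, hu⟩ := powSum_sub_reflection hp hUU hUs (lineProj_mul_self hx)
    (conjTranspose_lineProj x) (trace_lineProj hx) (u := (U * lineProj x).trace.re)
    (by rw [ofReal_re_trace_mul_lineProj hUs, lineProj_mul_mul_lineProj])
  obtain ⟨hv0, hv⟩ := powSum_sub_reflection hp hψU hψs (lineProj_mul_self hy)
    (conjTranspose_lineProj y) (trace_lineProj hy) (u := (ψ U * lineProj y).trace.re)
    (by rw [ofReal_re_trace_mul_lineProj hψs, lineProj_mul_mul_lineProj])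
  have hd := h.powSum_map U (1 - (2 : ℂ) • lineProj x) hU (by
    rw [conjTranspose_reflection (conjTranspose_lineProj x),
      reflection_mul_self (lineProj_mul_self hx)])
  rw [hψ, hu, hv, h.trace_map hp hself hU hUs] at hd
  have heq := Real.rpow_left_injOn (x := p / 2) (by positivity) hv0 hu0
    (mul_left_cancel₀ two_ne_zero (add_left_cancel hd))
  have hre : (ψ U * lineProj y).trace.re = (U * lineProj x).trace.re := by
    linarith
  rw [← smul_lineProj hx, ← smul_lineProj hy, mul_smul_comm, mul_smul_comm, trace_smul, trace_smul,
    hxy, ← ofReal_re_trace_mul_lineProj hψs, ← ofReal_re_trace_mul_lineProj hUs, hre]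

lemma trace_reflection_mul {z : m → ℂ} (hz : z ≠ 0) (x : m → ℂ) :
    (star z ⬝ᵥ z) * ((1 - (2 : ℂ) • lineProj z) * vecMulVec x (star x)).trace =
      (star z ⬝ᵥ z) * (star x ⬝ᵥ x) - 2 * Complex.normSq (star z ⬝ᵥ x) := by
  rw [← trace_vecMulVec_mul_vecMulVec, ← smul_lineProj hz, sub_mul, one_mul, trace_sub,
    trace_vecMulVec, dotProduct_comm x, smul_mul_assoc, smul_mul_assoc, trace_smul, trace_smul,
    smul_eq_mul, smul_eq_mul]
  ring

lemma IsUnitalPowSumIsometry.exists_unitary (h : IsUnitalPowSumIsometry p ψ) (hp : 0 < p)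
    (hself : ∀ U, Uᴴ * U = 1 → Uᴴ = U → (ψ U)ᴴ = ψ U) :
    ∃ V ∈ unitaryGroup m ℂ, (∀ U, Uᴴ * U = 1 → Uᴴ = U → ψ U = V * U * Vᴴ) ∨
      (∀ U, Uᴴ * U = 1 → Uᴴ = U → ψ U = V * Uᵀ * Vᴴ) := by
  have hex : ∀ x : m → ℂ, ∃ y, star y ⬝ᵥ y = star x ⬝ᵥ x ∧
      (x ≠ 0 → ψ (1 - (2 : ℂ) • lineProj x) = 1 - (2 : ℂ) • lineProj y) := by
    intro x
    rcases eq_or_ne x 0 with rfl | hx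
    · exact ⟨0, rfl, fun h0 => absurd rfl h0⟩
    · obtain ⟨y, hy, hψ⟩ := h.exists_map_reflection hp hself hx
      exact ⟨y, hy, fun _ => hψ⟩
  choose T hT hψT using hex
  have hT0 : T 0 = 0 := by
    rw [← dotProduct_star_self_eq_zero, hT, dotProduct_zero]
  have htr : ∀ U : Matrix m m ℂ, Uᴴ * U = 1 → Uᴴ = U → ∀ x,
      (ψ U * vecMulVec (T x) (star (T x))).trace = (U * vecMulVec x (star x)).trace := by
    intro U hU hUs x
    rcases eq_or_ne x 0 with rfl | hx
    · simp [hT0]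
    · exact h.trace_map_mul_vecMulVec hp hself hx (hT x) (hψT x hx) hU hUs
  obtain ⟨V, hV, hTV⟩ := exists_unitary_of_normSq_dotProduct_eq (T := T) (by
    intro z x
    rcases eq_or_ne z 0 with rfl | hz
    · simp [hT0]
    have hTz : T z ≠ 0 := by
      rwa [Ne, ← dotProduct_star_self_eq_zero, hT, dotProduct_star_self_eq_zero]
    have h1 := htr (1 - (2 : ℂ) • lineProj z)
      (by rw [conjTranspose_reflection (conjTranspose_lineProj z),
        reflection_mul_self (lineProj_mul_self hz)])
      (conjTranspose_reflection (conjTranspose_lineProj z)) x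
    rw [hψT z hz] at h1
    have h2 := trace_reflection_mul hz x
    rw [← h1, ← hT z, trace_reflection_mul hTz, hT x, sub_right_inj] at h2
    exact_mod_cast mul_left_cancel₀ two_ne_zero h2)
  have hVV : V * Vᴴ = 1 := mem_unitaryGroup_iff.1 hV
  have hconj : ∀ U A : Matrix m m ℂ, Vᴴ * ψ U * V = A → ψ U = V * A * Vᴴ := by
    rintro U A rfl
    rw [← mul_assoc, ← mul_assoc, hVV, one_mul, mul_assoc, hVV, mul_one]
  have hcyc : ∀ A B : Matrix m m ℂ, (Vᴴ * A * V * B).trace = (A * (V * B * Vᴴ)).trace := by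
    intro A B
    rw [mul_assoc, mul_assoc, trace_mul_comm]
    simp only [mul_assoc]
  refine ⟨V, hV, hTV.imp (fun hx U hU hUs => hconj U _ (sub_eq_zero.1 ?_))
    (fun hx U hU hUs => hconj U _ (sub_eq_zero.1 ?_))⟩
  · refine eq_zero_of_trace_mul_vecMulVec fun x => ?_
    rw [sub_mul, trace_sub, hcyc, ← hx, htr U hU hUs, sub_self]
  · refine eq_zero_of_trace_mul_vecMulVec fun x => ?_
    have hxx := hx (star x)
    rw [star_star] at hxx
    have ht : (Uᵀ * vecMulVec x (star x)).trace = (U * vecMulVec (star x) x).trace := by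
      rw [← trace_transpose, transpose_mul, transpose_transpose, transpose_vecMulVec,
        trace_mul_comm]
    have h1 := htr U hU hUs (star x)
    rw [star_star] at h1
    rw [sub_mul, trace_sub, hcyc, ← hxx, h1, ht, sub_self]

end ReflectionImage

/-- A surjective `L^p`-isometry of the unitary group fixing `I` acts on self-adjoint
unitaries either as `U ↦ VUVᴴ` or as `U ↦ VUᵀVᴴ` for some fixed unitary `V`. -/
theorem stmt7 (n : ℕ) (hn : 1 ≤ n) (p : ℝ) (hp : 0 < p)
    (ψ : Matrix (Fin n) (Fin n) ℂ → Matrix (Fin n) (Fin n) ℂ)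
    (hmem : ∀ U ∈ Matrix.unitaryGroup (Fin n) ℂ, ψ U ∈ Matrix.unitaryGroup (Fin n) ℂ)
    (hsurj : ∀ V ∈ Matrix.unitaryGroup (Fin n) ℂ,
      ∃ U ∈ Matrix.unitaryGroup (Fin n) ℂ, ψ U = V)
    (hiso : ∀ U ∈ Matrix.unitaryGroup (Fin n) ℂ, ∀ V ∈ Matrix.unitaryGroup (Fin n) ℂ,
      lpnorm p (ψ U - ψ V) = lpnorm p (U - V))
    (hone : ψ 1 = 1) :
    ∃ V ∈ Matrix.unitaryGroup (Fin n) ℂ,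
      (∀ U ∈ Matrix.unitaryGroup (Fin n) ℂ, Uᴴ = U → ψ U = V * U * Vᴴ) ∨
      (∀ U ∈ Matrix.unitaryGroup (Fin n) ℂ, Uᴴ = U → ψ U = V * Uᵀ * Vᴴ) := by
  have : Nonempty (Fin n) := ⟨⟨0, hn⟩⟩
  have hmem_iff : ∀ U : Matrix (Fin n) (Fin n) ℂ,
      U ∈ Matrix.unitaryGroup (Fin n) ℂ ↔ Uᴴ * U = 1 := fun U => mem_unitaryGroup_iff'
  simp only [hmem_iff] at hmem hsurj hiso
  have h : IsUnitalPowSumIsometry p ψ :=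
    ⟨hone, hmem, fun U V hU hV => powSum_eq_of_lpnorm_eq hp (hiso U hU V hV)⟩
  obtain ⟨V, hV, hψ⟩ := h.exists_unitary hp fun U hU hUs => by
    rcases eq_or_ne p 2 with rfl | hp2
    · exact h.conjTranspose_map_of_two hsurj hU hUs
    · exact h.conjTranspose_map_of_ne_two hp hp2 hU hUs
  refine ⟨V, hV, ?_⟩
  simpa only [hmem_iff] using hψ
end
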